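/- arXiv:math/0403300 — 10 statements merged into one kernel-verified Lean document; each statement's English description precedes it below -/
import Mathlib

section
/- For generic (q0, q1) ∈ ℂ² — i.e., for all (q0, q1) in some nonempty Zariski-open subset of ℂ² — the quotient ring ℂ[E,H] / (EH² + 8·E·H·q0 − 10·H²·q0 + 28·E·q0² + 6·H·q0² − 8·H·q0·q1 − 16·q0²·q1, E² − (5/2)·E·H + 2·H² + 2·E·q0 − 3·H·q0 − E·q1 − 2·q0·q1) is a semisimple commutative ℂ-algebra of ℂ-dimension 6, i.e., it is isomorphic as a ℂ-algebra to ℂ⁶. (This ring is the specialization at (q0,q1) of the small quantum cohomology ring of the Fano threefold M²₂₁, the blow-up of the quadric Q³ along a rational quartic curve.) -/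
/-!
Write the two relations as `A(H) E + B(H)` and `E² + b(H) E + c(H)`. The ideal contains the
eliminant `R = B² - A B b + A² c`, a polynomial in `H` alone, of degree `6` with leading
coefficient `2` for every `(q0, q1)`. If `A` is prime to `R`, then `A` is invertible modulo `R`, so
`E` is a polynomial `e(H)` in the quotient ring, which is therefore `ℂ[H]/(R)`; if moreover `R` is
separable, this is `ℂ⁶`, via evaluation at the six points `(e(h), h)` with `R(h) = 0`
(`nonempty_algEquiv_of_isCoprime`).

Both conditions say that `R` is prime to `A R'`, so `g` can be taken to be the resultant of `R` and
`A R'`, computed with `q0, q1` as indeterminates. The resultant commutes with specialization, so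
`g ≠ 0` follows from coprimality at the single point `(q0, q1) = (1, 0)`, where explicit Bézout
identities are available (`isCoprime_special`).
-/

namespace QHM221

/-! ### The eliminant and its separability at one point -/

section Family

variable {S T : Type*} [CommRing S] [CommRing T]

open Polynomial in
/-- The coefficient of `E` in the first relation. -/
noncomputable def pA (q0 : S) : Polynomial S := X ^ 2 + C (8 * q0) * X + C (28 * q0 ^ 2)

open Polynomial in
/-- The part of the first relation that is free of `E`. -/
noncomputable def pB (q0 q1 : S) : Polynomial S :=
  -C (10 * q0) * X ^ 2 + C (6 * q0 ^ 2 - 8 * q0 * q1) * X - C (16 * q0 ^ 2 * q1)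

open Polynomial in
/-- The coefficient of `E` in the second relation. The parameter `r` stands for the scalar `5/2`,
so that the definition makes sense over every commutative ring. -/
noncomputable def pb (q0 q1 r : S) : Polynomial S := -C r * X + C (2 * q0 - q1)

open Polynomial in
/-- The part of the second relation that is free of `E`. -/
noncomputable def pc (q0 q1 : S) : Polynomial S := 2 * X ^ 2 - C (3 * q0) * X - C (2 * q0 * q1)

/-- The eliminant of `E` from the two relations. -/
noncomputable def pR (q0 q1 r : S) : Polynomial S :=
  pB q0 q1 ^ 2 - pA q0 * pB q0 q1 * pb q0 q1 r + pA q0 ^ 2 * pc q0 q1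

/-- The product `A R'`: the eliminant `R` is prime to it exactly when `R` is separable and prime
to `A`. -/
noncomputable def pD (q0 q1 r : S) : Polynomial S :=
  pA q0 * Polynomial.derivative (pR q0 q1 r)

lemma pR_map (f : S →+* T) (q0 q1 r : S) :
    (pR q0 q1 r).map f = pR (f q0) (f q1) (f r) := by
  simp [pR, pA, pB, pb, pc, map_ofNat]

lemma pD_map (f : S →+* T) (q0 q1 r : S) :
    (pD q0 q1 r).map f = pD (f q0) (f q1) (f r) := by
  simp only [pD, Polynomial.map_mul, ← Polynomial.derivative_map, pR_map]
  simp [pA, map_ofNat]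

end Family

lemma natDegree_pA (q0 : ℂ) : (pA q0).natDegree = 2 := by
  unfold pA; compute_degree!

lemma natDegree_pR (q0 q1 r : ℂ) : (pR q0 q1 r).natDegree = 6 := by
  have hB : (pB q0 q1).natDegree ≤ 2 := by unfold pB; compute_degree
  have hb : (pb q0 q1 r).natDegree ≤ 1 := by unfold pb; compute_degree
  have hc : (pc q0 q1).natDegree = 2 := by unfold pc; compute_degree!
  have hA := natDegree_pA q0
  have hA0 : pA q0 ≠ 0 := by rintro h; simp [h] at hA
  have hc0 : pc q0 q1 ≠ 0 := by rintro h; simp [h] at hc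
  have h1 : (pB q0 q1 ^ 2 - pA q0 * pB q0 q1 * pb q0 q1 r).natDegree ≤ 5 := by
    refine (Polynomial.natDegree_sub_le _ _).trans (max_le ?_ ?_)
    · exact Polynomial.natDegree_pow_le.trans (by omega)
    · refine Polynomial.natDegree_mul_le.trans ?_
      have := Polynomial.natDegree_mul_le (p := pA q0) (q := pB q0 q1)
      omega
  have h2 : (pA q0 ^ 2 * pc q0 q1).natDegree = 6 := by
    rw [Polynomial.natDegree_mul (pow_ne_zero _ hA0) hc0, Polynomial.natDegree_pow, hA, hc]
  rw [pR, Polynomial.natDegree_add_eq_right_of_natDegree_lt (by omega), h2]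

lemma natDegree_pD (q0 q1 r : ℂ) : (pD q0 q1 r).natDegree = 7 := by
  have hA := natDegree_pA q0
  have hA0 : pA q0 ≠ 0 := by rintro h; simp [h] at hA
  have hd : (Polynomial.derivative (pR q0 q1 r)).natDegree = 5 := by
    rw [Polynomial.natDegree_derivative, natDegree_pR]
  have hd0 : Polynomial.derivative (pR q0 q1 r) ≠ 0 := by rintro h; simp [h] at hd
  rw [pD, Polynomial.natDegree_mul hA0 hd0, hA, hd]

lemma isCoprime_of_eq_C {P Q U V : Polynomial ℂ} {N : ℂ} (hN : N ≠ 0)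
    (h : U * P + V * Q = Polynomial.C N) : IsCoprime P Q := by
  refine ⟨Polynomial.C N⁻¹ * U, Polynomial.C N⁻¹ * V, ?_⟩
  rw [mul_assoc, mul_assoc, ← mul_add, h, ← Polynomial.C_mul, inv_mul_cancel₀ hN,
    Polynomial.C_1]

open Polynomial in
/-- At `(q0, q1) = (1, 0)` the eliminant is separable and prime to `A`; the Bézout coefficients
come from the extended Euclidean algorithm over `ℚ`, with denominators cleared. -/
lemma isCoprime_special : IsCoprime (pR 1 0 (5 / 2)) (pD 1 0 (5 / 2) : Polynomial ℂ) := by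
  have hA : pA (1 : ℂ) = X ^ 2 + 8 * X + 28 := by simp [pA, map_ofNat]
  have hR : pR (1 : ℂ) 0 (5 / 2) = (2 * X ^ 6 + 4 * X ^ 5 + 127 * X ^ 4 - 16 * X ^ 3 + 1144 * X ^ 2
      - 2688 * X : Polynomial ℂ) := by
    have h52 : (C (5 / 2) : Polynomial ℂ) * 2 = 5 := by
      rw [← C_ofNat 2, ← C_mul, div_mul_cancel₀ _ two_ne_zero, C_ofNat]
    rw [pR, hA]
    simp only [pB, pb, pc, mul_one, mul_zero, one_pow, sub_zero, C_0, C_ofNat]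
    linear_combination (X ^ 2 + 8 * X + 28) * (-5 * X ^ 2 + 3 * X) * X * h52
  have hR' : derivative (pR (1 : ℂ) 0 (5 / 2)) = (12 * X ^ 5 + 20 * X ^ 4 + 508 * X ^ 3 - 48 * X ^ 2
      + 2288 * X - 2688 : Polynomial ℂ) := by
    rw [hR]
    simp only [derivative_add, derivative_sub, derivative_mul, derivative_X_pow, derivative_X,
      derivative_ofNat, Nat.cast_ofNat, C_ofNat]
    ring
  rw [pD]
  refine IsCoprime.mul_right ?_ ?_
  · refine isCoprime_of_eq_C (N := 538796944) (by norm_num) (U := 688 * X - 2539) (V := -1376 * X ^ 5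
      + 13334 * X ^ 4 - 145364 * X ^ 3 + 1123021 * X ^ 2 - 5741672 * X + 19242748) ?_
    rw [hR, hA, C_ofNat]
    ring
  · refine isCoprime_of_eq_C (N := 1678338053422680416256) (by norm_num) (U := -3973774760834748 *
      X ^ 4 - 6848515206431620 * X ^ 3 - 174096231321608396 * X ^ 2 - 34261320610825776 * X -
      966015182779343152) (V := 662295793472458 * X ^ 5 + 1362184465562756 * X ^ 4 +
      43047163808307707 * X ^ 3 + 4162151247182392 * X ^ 2 + 434547412354697240 * X -
      624381716303080512) ?_
    rw [hR', hR, C_ofNat]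
    ring

end QHM221

open MvPolynomial

set_option maxHeartbeats 1000000

namespace QHM221

/-! ### The quotient ring via elimination -/

/-- A univariate polynomial, regarded as a polynomial in the second variable `H = X 1`. -/
noncomputable def inH : Polynomial ℂ →ₐ[ℂ] MvPolynomial (Fin 2) ℂ :=
  Polynomial.aeval (X 1)

lemma aeval_inH {S : Type*} [CommRing S] [Algebra ℂ S] (v : Fin 2 → S) (p : Polynomial ℂ) :
    aeval v (inH p) = Polynomial.aeval (v 1) p := by
  rw [inH, ← Polynomial.aeval_algHom_apply, aeval_X]

/-- If the eliminant `R = B² - A B b + A² c` is prime to its derivative and to `A`, then the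
relations `A(H) E + B(H)` and `E² + b(H) E + c(H)` cut out `deg R` reduced points. -/
theorem nonempty_algEquiv_of_isCoprime (A B b c R : Polynomial ℂ) (n : ℕ)
    (hR : R = B ^ 2 - A * B * b + A ^ 2 * c) (hn : R.natDegree = n)
    (hsep : R.Separable) (hA : IsCoprime A R) :
    Nonempty ((MvPolynomial (Fin 2) ℂ ⧸ Ideal.span
      {X 0 * inH A + inH B, X 0 ^ 2 + X 0 * inH b + inH c}) ≃ₐ[ℂ] (Fin n → ℂ)) := by
  classical
  set I : Ideal (MvPolynomial (Fin 2) ℂ) := Ideal.span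
    {X 0 * inH A + inH B, X 0 ^ 2 + X 0 * inH b + inH c} with hI
  obtain ⟨s, u, hsu⟩ := hA
  have hcard : R.roots.toFinset.card = n := by
    rw [Multiset.toFinset_card_of_nodup (Polynomial.nodup_roots hsep),
      ← hn, (IsAlgClosed.splits R).natDegree_eq_card_roots]
  let σ : Fin n ≃ R.roots.toFinset := (Finset.equivFinOfCardEq hcard).symm
  let h : Fin n → ℂ := fun i => (σ i : ℂ)
  have hinj : Function.Injective h := Subtype.val_injective.comp σ.injective
  have hroot : ∀ i, R.eval (h i) = 0 := fun i => by
    have := (σ i).2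
    rw [Multiset.mem_toFinset] at this
    exact (Polynomial.mem_roots'.1 this).2
  -- Modulo `R` the inverse of `A` is `s`, so the relation `A E + B` solves to `E = - s B`.
  let e : Polynomial ℂ := -(s * B)
  let φ : MvPolynomial (Fin 2) ℂ →ₐ[ℂ] (Fin n → ℂ) :=
    AlgHom.pi fun i => aeval ![e.eval (h i), h i]
  have hφ (p) (i) : φ p i = aeval ![e.eval (h i), h i] p := rfl
  have hφH (p : Polynomial ℂ) (i) : φ (inH p) i = p.eval (h i) := by
    rw [hφ, aeval_inH]; simp [Polynomial.aeval_def, Polynomial.eval₂_eq_eval_map]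
  have hφE (i) : φ (X 0) i = e.eval (h i) := by simp [hφ]
  have hIle : I ≤ RingHom.ker φ := by
    rw [hI, Ideal.span_le]
    have key (i) : (s.eval (h i)) * (A.eval (h i)) = 1 := by
      have := congrArg (Polynomial.eval (h i)) hsu
      simpa [hroot i] using this
    have hR' (i) : (B.eval (h i)) ^ 2 - (A.eval (h i)) * (B.eval (h i)) * (b.eval (h i))
        + (A.eval (h i)) ^ 2 * (c.eval (h i)) = 0 := by
      have := hroot i
      rw [hR] at this
      simpa using this
    rintro x (rfl | rfl)
    · ext i
      simp only [map_add, map_mul, Pi.add_apply, Pi.mul_apply, hφH, hφE, e, Polynomial.eval_neg,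
        Polynomial.eval_mul, Pi.zero_apply]
      linear_combination (-(B.eval (h i))) * key i
    · ext i
      simp only [map_add, map_mul, map_pow, Pi.add_apply, Pi.mul_apply, Pi.pow_apply, hφH, hφE, e,
        Polynomial.eval_neg, Polynomial.eval_mul, Pi.zero_apply]
      -- `s² R = 0`, rewritten using `s A = 1`.
      linear_combination (s.eval (h i)) ^ 2 * hR' i
        + (s.eval (h i) * B.eval (h i) * b.eval (h i)
          - c.eval (h i) * (s.eval (h i) * A.eval (h i) + 1)) * key i
  -- `R = (B - A E - A b) (A E + B) + A² (E² + b E + c)`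
  have hRI : inH R ∈ I := by
    have h1 : X 0 * inH A + inH B ∈ I := Ideal.subset_span (by simp)
    have h2 : X 0 ^ 2 + X 0 * inH b + inH c ∈ I := Ideal.subset_span (by simp)
    have : inH R = (inH B - inH A * X 0 - inH A * inH b) * (X 0 * inH A + inH B)
        + inH A ^ 2 * (X 0 ^ 2 + X 0 * inH b + inH c) := by
      rw [hR]; simp only [map_add, map_sub, map_mul, map_pow]; ring
    rw [this]
    exact I.add_mem (I.mul_mem_left _ h1) (I.mul_mem_left _ h2)
  have hEI : X 0 - inH e ∈ I := by
    have h1 : X 0 * inH A + inH B ∈ I := Ideal.subset_span (by simp)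
    have hsu' := congrArg inH hsu
    simp only [map_add, map_mul, map_one] at hsu'
    have : X 0 - inH e = inH s * (X 0 * inH A + inH B) + X 0 * inH u * inH R := by
      simp only [e, map_neg, map_mul]
      linear_combination (-(X 0)) * hsu'
    rw [this]
    exact I.add_mem (I.mul_mem_left _ h1) (I.mul_mem_left _ hRI)
  -- Substituting `e(H)` for `E` does not change classes modulo `I`.
  have hred (p : MvPolynomial (Fin 2) ℂ) :
      p - inH (aeval ![e, Polynomial.X] p) ∈ I := by
    rw [← Ideal.Quotient.mk_eq_mk_iff_sub_mem]
    have : (Ideal.Quotient.mkₐ ℂ I) =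
        ((Ideal.Quotient.mkₐ ℂ I).comp inH).comp (aeval ![e, Polynomial.X]) := by
      apply MvPolynomial.algHom_ext
      intro i
      fin_cases i
      · simpa [Ideal.Quotient.mk_eq_mk_iff_sub_mem] using hEI
      · simp [inH]
    exact DFunLike.congr_fun this p
  have hker : RingHom.ker φ = I := by
    refine le_antisymm (fun p hp => ?_) hIle
    set P := aeval ![e, Polynomial.X] p with hP
    have hP0 : φ (inH P) = 0 := by
      have := hIle (hred p)
      rw [RingHom.mem_ker, map_sub, (RingHom.mem_ker).1 hp, zero_sub, neg_eq_zero] at this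
      exact this
    have hdvd : R ∣ P := by
      rcases eq_or_ne P 0 with h0 | h0
      · simp [h0]
      refine (IsAlgClosed.splits R).dvd_of_roots_le_roots hsep.ne_zero ?_
      refine (Multiset.le_iff_subset (Polynomial.nodup_roots hsep)).2 fun x hx => ?_
      obtain ⟨i, hi⟩ := σ.surjective ⟨x, Multiset.mem_toFinset.2 hx⟩
      have hxi : h i = x := congrArg Subtype.val hi
      rw [Polynomial.mem_roots h0, Polynomial.IsRoot.def, ← hxi, ← hφH, hP0]
      rfl
    obtain ⟨Q, hQ⟩ := hdvd
    have h3 : inH P ∈ I := by rw [hQ, map_mul]; exact I.mul_mem_right _ hRI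
    have h4 := I.add_mem (hred p) h3
    rwa [← hP, sub_add_cancel] at h4
  have hsurj : Function.Surjective φ := fun y => by
    refine ⟨inH (Lagrange.interpolate Finset.univ h y), ?_⟩
    ext i
    rw [hφH]
    exact Lagrange.eval_interpolate_at_node y hinj.injOn (Finset.mem_univ i)
  exact ⟨(Ideal.quotientEquivAlgOfEq ℂ hker.symm).trans
    (Ideal.quotientKerAlgEquivOfSurjective hsurj)⟩

/-! ### The discriminant locus -/

/-- The resultant of `R` and `A R'`, as a polynomial in the indeterminates `q0, q1`. The
formal degrees `6` and `7` are the true degrees at every specialization. -/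
noncomputable def gen : MvPolynomial (Fin 2) ℂ :=
  Polynomial.resultant (pR (X 0) (X 1) (C (5 / 2))) (pD (X 0) (X 1) (C (5 / 2))) 6 7

lemma eval_gen (q0 q1 : ℂ) : eval ![q0, q1] gen =
    Polynomial.resultant (pR q0 q1 (5 / 2)) (pD q0 q1 (5 / 2)) 6 7 := by
  rw [gen, ← Polynomial.resultant_map_map, pR_map, pD_map, eval_X, eval_X, eval_C]
  rfl

lemma gen_ne_zero : gen ≠ 0 := by
  intro h
  have h1 := eval_gen 1 0
  have h2 := Polynomial.resultant_ne_zero _ _ isCoprime_special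
  rw [natDegree_pR, natDegree_pD] at h2
  rw [h, map_zero] at h1
  exact h2 h1.symm

lemma isCoprime_of_eval_gen_ne_zero {q0 q1 : ℂ} (h : eval ![q0, q1] gen ≠ 0) :
    IsCoprime (pR q0 q1 (5 / 2)) (pD q0 q1 (5 / 2)) := by
  rw [eval_gen] at h
  obtain ⟨p, q, -, -, hpq⟩ := Polynomial.exists_mul_add_mul_eq_C_resultant
    (pR q0 q1 (5 / 2)) (pD q0 q1 (5 / 2)) (natDegree_pR _ _ _).le (natDegree_pD _ _ _).le
    (by norm_num)
  exact isCoprime_of_eq_C h (U := p) (V := q) (by rw [← hpq]; ring)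

end QHM221

/-- Small quantum cohomology of the Fano threefold `M221` (the blow-up of the quadric `Q³` along a rational quartic curve),
specialized at `(q0, q1)`: for generic `(q0, q1) ∈ ℂ²` (i.e. on the nonempty
Zariski-open set where a nonzero polynomial `g` does not vanish) the quotient ring is
isomorphic as a `ℂ`-algebra to `ℂ⁶`, hence a semisimple commutative `ℂ`-algebra of
`ℂ`-dimension 6.  Here `E = X 0` and `H = X 1`. -/
theorem qh_M2_21_generically_semisimple :
    ∃ g : MvPolynomial (Fin 2) ℂ, g ≠ 0 ∧
      ∀ q0 q1 : ℂ, eval ![q0, q1] g ≠ 0 →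
        Nonempty
          ((MvPolynomial (Fin 2) ℂ ⧸ Ideal.span
            { X 0 * X 1 ^ 2 + C (8 * q0) * (X 0 * X 1) - C (10 * q0) * X 1 ^ 2 + C (28 * q0 ^ 2) * X 0 + C (6 * q0 ^ 2) * X 1 - C (8 * q0 * q1) * X 1 - C (16 * q0 ^ 2 * q1),
              X 0 ^ 2 - C (5 / 2) * (X 0 * X 1) + C 2 * X 1 ^ 2 + C (2 * q0) * X 0 - C (3 * q0) * X 1 - C q1 * X 0 - C (2 * q0 * q1) })
          ≃ₐ[ℂ] (Fin 6 → ℂ)) := by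
  refine ⟨QHM221.gen, QHM221.gen_ne_zero, fun q0 q1 h => ?_⟩
  have hcop := QHM221.isCoprime_of_eval_gen_ne_zero h
  have key := QHM221.nonempty_algEquiv_of_isCoprime (QHM221.pA q0) (QHM221.pB q0 q1)
    (QHM221.pb q0 q1 (5 / 2)) (QHM221.pc q0 q1) (QHM221.pR q0 q1 (5 / 2)) 6 rfl
    (QHM221.natDegree_pR _ _ _) (IsCoprime.of_mul_right_right hcop)
    (IsCoprime.of_mul_right_left hcop).symm
  have h1 : X 0 * X 1 ^ 2 + C (8 * q0) * (X 0 * X 1) - C (10 * q0) * X 1 ^ 2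
      + C (28 * q0 ^ 2) * X 0 + C (6 * q0 ^ 2) * X 1 - C (8 * q0 * q1) * X 1
      - C (16 * q0 ^ 2 * q1) = X 0 * QHM221.inH (QHM221.pA q0) + QHM221.inH (QHM221.pB q0 q1) := by
    simp only [QHM221.inH, QHM221.pA, QHM221.pB, map_add, map_sub, map_neg, map_mul, map_pow,
      Polynomial.aeval_X, Polynomial.aeval_C, algebraMap_eq, map_ofNat]
    ring
  have h2 : X 0 ^ 2 - C (5 / 2) * (X 0 * X 1) + C 2 * X 1 ^ 2 + C (2 * q0) * X 0
      - C (3 * q0) * X 1 - C q1 * X 0 - C (2 * q0 * q1) =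
      X 0 ^ 2 + X 0 * QHM221.inH (QHM221.pb q0 q1 (5 / 2)) + QHM221.inH (QHM221.pc q0 q1) := by
    simp only [QHM221.inH, QHM221.pb, QHM221.pc, map_add, map_sub, map_neg, map_mul, map_pow,
      Polynomial.aeval_X, Polynomial.aeval_C, algebraMap_eq, map_ofNat]
    ring
  rw [h1, h2]
  exact key
end

section
/- For generic (q0, q1) ∈ ℂ² — i.e., for all (q0, q1) in some nonempty Zariski-open subset of ℂ² — the quotient ring ℂ[E,H] / (EH² + 6·E·H·q0 − 10·H²·q0 + 15·E·q0² + 6·H·q0² + 4·E·q0·q1 − 18·H·q0·q1 − 4·q0·q1², E² − (7/2)·E·H + 4·H² + (5/2)·E·q0 − 5·H·q0 − E·q1 − 3·q0·q1) is a semisimple commutative ℂ-algebra of ℂ-dimension 6, i.e., it is isomorphic as a ℂ-algebra to ℂ⁶. (This ring is the specialization at (q0,q1) of the small quantum cohomology ring of the Fano threefold M²₂₂, the blow-up of ℙ³ along a rational quartic curve.) -/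
open MvPolynomial

set_option maxHeartbeats 1000000

/-!
The first relation is linear in `E`: it reads `D(H) E = N(H)` with `D`, `N` quadratic in `H`.
Multiplying the second relation by `2 D(H)²` and substituting `D(H) E = N(H)` gives a sextic
`S(H) = 0` with leading coefficient `8`. If `D` and `N` are coprime, then so are `D` and `S`
(because `S ≡ 2 N²` modulo `D`), so `D(H)` is invertible in the quotient ring, `E` is a polynomial
in `H`, and the quotient is `ℂ[H] / (S)`. If moreover `S` is separable, evaluation at its six roots
identifies the quotient with `ℂ⁶` (`nonempty_algEquiv`).

Both conditions hold where the polynomial `Res(S, S') · Res(D, N)` in `(q0, q1)` does not vanish.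
This polynomial is nonzero since at `(1, 0)` explicit Bézout identities show that the two pairs are
coprime (`isCoprime_sextic_one_zero`, `isCoprime_den_num_one_zero`).
-/

namespace M222

section Family

variable {A : Type*} [CommRing A]

/-- The coefficient `D(H)` of `E` in the first relation, at parameters `(s, t)`. -/
noncomputable def den (s t : A) : Polynomial A :=
  .X ^ 2 + .C (6 * s) * .X + .C (15 * s ^ 2 + 4 * s * t)

/-- Minus the part of the first relation free of `E`, so that the relation reads
`D(H) E = N(H)`. -/
noncomputable def num (s t : A) : Polynomial A :=
  .C (10 * s) * .X ^ 2 + .C (18 * s * t - 6 * s ^ 2) * .X + .C (4 * s * t ^ 2)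

/-- The cofactor `M` of `D` in the sextic `S = 2 N² + D M`. -/
noncomputable def cofactor (s t : A) : Polynomial A :=
  (.C (5 * s - 2 * t) - 7 * .X) * num s t
    + (8 * .X ^ 2 - .C (10 * s) * .X - .C (6 * s * t)) * den s t

/-- The sextic `S(H)` obtained by eliminating `E`: it is `2 D²` times the second relation
with `D E` replaced by `N`. -/
noncomputable def sextic (s t : A) : Polynomial A :=
  2 * num s t ^ 2 + den s t * cofactor s t

lemma map_den {B : Type*} [CommRing B] (φ : A →+* B) (s t : A) :
    (den s t).map φ = den (φ s) (φ t) := by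
  simp [den, map_ofNat]

lemma map_num {B : Type*} [CommRing B] (φ : A →+* B) (s t : A) :
    (num s t).map φ = num (φ s) (φ t) := by
  simp [num, map_ofNat]

lemma map_sextic {B : Type*} [CommRing B] (φ : A →+* B) (s t : A) :
    (sextic s t).map φ = sextic (φ s) (φ t) := by
  simp [sextic, cofactor, map_den, map_num, map_ofNat]

lemma natDegree_den_le (s t : A) : (den s t).natDegree ≤ 2 := by
  unfold den; compute_degree

lemma natDegree_num_le (s t : A) : (num s t).natDegree ≤ 2 := by
  unfold num; compute_degree

end Family

lemma natDegree_sextic (s t : ℂ) : (sextic s t).natDegree = 6 := by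
  unfold sextic cofactor den num
  compute_degree!

lemma sextic_one_zero : sextic (1 : ℂ) 0 =
    8 * .X ^ 6 + 16 * .X ^ 5 + 280 * .X ^ 4 + 12 * .X ^ 3 + 1272 * .X ^ 2 - 2700 * .X := by
  simp [sextic, cofactor, den, num, map_ofNat]
  ring

lemma isCoprime_of_eq_C {f g u v : Polynomial ℂ} {c : ℂ} (hc : c ≠ 0)
    (h : u * f + v * g = .C c) : IsCoprime f g :=
  ⟨.C c⁻¹ * u, .C c⁻¹ * v, by
    rw [mul_assoc, mul_assoc, ← mul_add, h, ← map_mul, inv_mul_cancel₀ hc, map_one]⟩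

lemma isCoprime_sextic_one_zero :
    IsCoprime (sextic (1 : ℂ) 0) (Polynomial.derivative (sextic (1 : ℂ) 0)) := by
  -- The cofactors come from the Euclidean algorithm over `ℚ`, with denominators cleared.
  refine isCoprime_of_eq_C
    (u := -5015116914464787 - 355040030134953 * .X - 1754783892360760 * .X ^ 2
      - 119128354528040 * .X ^ 3 - 73382941694604 * .X ^ 4)
    (v := -2944006675017300 + 2241208402892931 * .X + 64825667712651 * .X ^ 2
      + 434976560449840 * .X ^ 3 + 23931555848818 * .X ^ 4 + 12230490282434 * .X ^ 5)
    (c := 7948818022546710000) (by norm_num) ?_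
  rw [sextic_one_zero]
  simp only [Polynomial.derivative_add, Polynomial.derivative_sub, Polynomial.derivative_mul,
    Polynomial.derivative_X_pow, Polynomial.derivative_X, Polynomial.derivative_ofNat, map_ofNat,
    Nat.cast_ofNat]
  ring

lemma isCoprime_den_num_one_zero : IsCoprime (den (1 : ℂ) 0) (num (1 : ℂ) 0) := by
  refine isCoprime_of_eq_C (u := 316 - 110 * .X) (v := 41 + 11 * .X) (c := 4740) (by norm_num) ?_
  simp [den, num, map_ofNat]
  ring

/-- Specializing the resultant of `f` and `g`, taken with respect to degree bounds `m` and `n`: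
if it does not vanish, the specialized polynomials are coprime. -/
lemma isCoprime_of_resultant_ne_zero {A : Type*} [CommRing A] (φ : A →+* ℂ) {f g : Polynomial A}
    {m n : ℕ} (hf : (f.map φ).natDegree ≤ m) (hg : (g.map φ).natDegree ≤ n) (hm : m ≠ 0)
    (h : φ (f.resultant g m n) ≠ 0) : IsCoprime (f.map φ) (g.map φ) := by
  obtain ⟨p, q, -, -, e⟩ := Polynomial.exists_mul_add_mul_eq_C_resultant
    (f.map φ) (g.map φ) hf hg (.inl hm)
  rw [Polynomial.resultant_map_map] at e
  exact isCoprime_of_eq_C (u := p) (v := q) h (by rw [← e]; ring)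

/-- `Res(S, S') · Res(D, N)` as a polynomial in the parameters `q0 = X 0` and `q1 = X 1`. -/
noncomputable def genericityPoly : MvPolynomial (Fin 2) ℂ :=
  (sextic (X 0) (X 1)).resultant (sextic (X 0) (X 1)).derivative 6 5 *
    (den (X 0) (X 1)).resultant (num (X 0) (X 1)) 2 2

lemma natDegree_derivative_sextic (s t : ℂ) : (sextic s t).derivative.natDegree = 5 := by
  rw [Polynomial.natDegree_derivative, natDegree_sextic]

lemma genericityPoly_ne_zero : genericityPoly ≠ 0 := by
  intro h
  have h0 : eval ![(1 : ℂ), 0] genericityPoly = 0 := by rw [h, map_zero]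
  rw [genericityPoly, map_mul, ← Polynomial.resultant_map_map, ← Polynomial.resultant_map_map,
    ← Polynomial.derivative_map, map_sextic, map_den, map_num] at h0
  -- `rw` rather than `simp`, as the degree arguments of `resultant` block `simp` congruence.
  rw [show eval ![(1 : ℂ), 0] (X 0) = 1 by simp, show eval ![(1 : ℂ), 0] (X 1) = 0 by simp] at h0
  have h1 := Polynomial.resultant_ne_zero _ _ isCoprime_sextic_one_zero
  have h2 := Polynomial.resultant_ne_zero _ _ isCoprime_den_num_one_zero
  have hD : (den (1 : ℂ) 0).natDegree = 2 := by unfold den; compute_degree!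
  have hN : (num (1 : ℂ) 0).natDegree = 2 := by unfold num; compute_degree!
  rw [natDegree_sextic, natDegree_derivative_sextic] at h1
  rw [hD, hN] at h2
  exact mul_ne_zero h1 h2 h0

lemma isCoprime_of_genericityPoly {q0 q1 : ℂ} (h : eval ![q0, q1] genericityPoly ≠ 0) :
    (sextic q0 q1).Separable ∧ IsCoprime (den q0 q1) (num q0 q1) := by
  rw [genericityPoly, map_mul] at h
  have hS := map_sextic (eval ![q0, q1]) (X 0) (X 1)
  have hD := map_den (eval ![q0, q1]) (X 0) (X 1)
  have hN := map_num (eval ![q0, q1]) (X 0) (X 1)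
  simp only [eval_X, Matrix.cons_val_zero, Matrix.cons_val_one] at hS hD hN
  constructor
  · have := isCoprime_of_resultant_ne_zero (eval ![q0, q1])
      (by rw [hS, natDegree_sextic])
      (by rw [← Polynomial.derivative_map, hS, natDegree_derivative_sextic]) (by norm_num)
      (left_ne_zero_of_mul h)
    rwa [← Polynomial.derivative_map, hS] at this
  · have := isCoprime_of_resultant_ne_zero (eval ![q0, q1])
      (by rw [hD]; exact natDegree_den_le _ _) (by rw [hN]; exact natDegree_num_le _ _)
      (by norm_num) (right_ne_zero_of_mul h)
    rwa [hD, hN] at this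

lemma isCoprime_den_sextic {q0 q1 : ℂ} (h : IsCoprime (den q0 q1) (num q0 q1)) :
    IsCoprime (den q0 q1) (sextic q0 q1) := by
  have h2 : IsUnit (2 : Polynomial ℂ) := by
    rw [← map_ofNat (Polynomial.C (R := ℂ)) 2, Polynomial.isUnit_C]
    simp
  have := (isCoprime_mul_unit_left_right h2 _ _).2 (h.pow_right (n := 2))
  exact this.add_mul_left_right _

/-- The first relation, evaluated at elements `e`, `x` of a `ℂ`-algebra. -/
lemma first_relation {B : Type*} [CommRing B] [Algebra ℂ B] (q0 q1 : ℂ) (e x : B) :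
    aeval ![e, x] (X 0 * X 1 ^ 2 + C (6 * q0) * (X 0 * X 1) - C (10 * q0) * X 1 ^ 2 + C (15 * q0 ^ 2) * X 0 + C (6 * q0 ^ 2) * X 1 + C (4 * q0 * q1) * X 0 - C (18 * q0 * q1) * X 1 - C (4 * q0 * q1 ^ 2) : MvPolynomial (Fin 2) ℂ)
      = (den q0 q1).aeval x * e - (num q0 q1).aeval x := by
  simp [den, num]
  ring

/-- The second relation times `2 D²`, modulo the first one. -/
lemma second_relation {B : Type*} [CommRing B] [Algebra ℂ B] (q0 q1 : ℂ) (e x : B)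
    (h : (den q0 q1).aeval x * e = (num q0 q1).aeval x) :
    2 * (den q0 q1).aeval x ^ 2 * aeval ![e, x] (X 0 ^ 2 - C (7 / 2) * (X 0 * X 1) + C 4 * X 1 ^ 2 + C (5 / 2 * q0) * X 0 - C (5 * q0) * X 1 - C q1 * X 0 - C (3 * q0 * q1) : MvPolynomial (Fin 2) ℂ)
      = (sextic q0 q1).aeval x := by
  have h7 : 2 * algebraMap ℂ B (7 / 2) = 7 := by
    rw [← map_ofNat (algebraMap ℂ B) 2, ← map_mul]; norm_num [map_ofNat]
  have h5 : 2 * algebraMap ℂ B (5 / 2) = 5 := by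
    rw [← map_ofNat (algebraMap ℂ B) 2, ← map_mul]; norm_num [map_ofNat]
  simp only [sextic, cofactor, map_add, map_sub, map_mul, map_pow, ← h, map_ofNat, aeval_X,
    Polynomial.aeval_X, Polynomial.aeval_C, algHom_C, Matrix.cons_val_zero, Matrix.cons_val_one]
  generalize (den q0 q1).aeval x = d
  linear_combination (-d ^ 2 * e * x) * h7 + (d ^ 2 * e * algebraMap ℂ B q0) * h5

/-- The roots of a separable complex polynomial `S` of degree `n`, enumerated without repetition;
a polynomial vanishing at all of them is a multiple of `S`. -/
lemma exists_roots {S : Polynomial ℂ} (hS : S.Separable) {n : ℕ} (hn : S.natDegree = n) :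
    ∃ r : Fin n → ℂ, Function.Injective r ∧ (∀ i, S.eval (r i) = 0) ∧
      ∀ P : Polynomial ℂ, (∀ i, P.eval (r i) = 0) → S ∣ P := by
  have hcard : S.roots.toFinset.card = n := by
    rw [Multiset.toFinset_card_of_nodup (Polynomial.nodup_roots hS), ← hn]
    exact (IsAlgClosed.splits S).natDegree_eq_card_roots.symm
  let σ := (S.roots.toFinset.equivFinOfCardEq hcard).symm
  refine ⟨fun i => σ i, Subtype.val_injective.comp σ.injective, fun i => ?_, fun P hP => ?_⟩
  · exact (Polynomial.mem_roots'.1 (Multiset.mem_toFinset.1 (σ i).2)).2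
  · by_cases hP0 : P = 0
    · simp [hP0]
    refine (IsAlgClosed.splits S).dvd_of_roots_le_roots hS.ne_zero ?_
    refine (Multiset.le_iff_subset (Polynomial.nodup_roots hS)).2 fun a ha => ?_
    have := hP (σ.symm ⟨a, Multiset.mem_toFinset.2 ha⟩)
    rw [Polynomial.mem_roots hP0]
    simpa using this

/-- The ideal `(f₁, f₂)` is the kernel of evaluation at the six points `(N(h)/D(h), h)` with
`S(h) = 0`, and this evaluation is surjective by Lagrange interpolation. -/
theorem nonempty_algEquiv {q0 q1 : ℂ} (hS : (sextic q0 q1).Separable)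
    (hDN : IsCoprime (den q0 q1) (num q0 q1)) {f₁ f₂ : MvPolynomial (Fin 2) ℂ}
    (hf₁ : f₁ = X 0 * X 1 ^ 2 + C (6 * q0) * (X 0 * X 1) - C (10 * q0) * X 1 ^ 2 + C (15 * q0 ^ 2) * X 0 + C (6 * q0 ^ 2) * X 1 + C (4 * q0 * q1) * X 0 - C (18 * q0 * q1) * X 1 - C (4 * q0 * q1 ^ 2))
    (hf₂ : f₂ = X 0 ^ 2 - C (7 / 2) * (X 0 * X 1) + C 4 * X 1 ^ 2 + C (5 / 2 * q0) * X 0 - C (5 * q0) * X 1 - C q1 * X 0 - C (3 * q0 * q1)) :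
    Nonempty ((MvPolynomial (Fin 2) ℂ ⧸ Ideal.span {f₁, f₂}) ≃ₐ[ℂ] (Fin 6 → ℂ)) := by
  obtain ⟨r, hr, hroot, hdvd⟩ := exists_roots hS (natDegree_sextic q0 q1)
  obtain ⟨a, b, hab⟩ := isCoprime_den_sextic hDN
  -- `a` is an inverse of `D` modulo `S`, so `E = w(H)` in the quotient.
  set w : Polynomial ℂ := a * num q0 q1 with hw
  have hinv (i : Fin 6) : a.eval (r i) * (den q0 q1).eval (r i) = 1 := by
    simpa [hroot] using congrArg (Polynomial.eval (r i)) hab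
  let pt (i : Fin 6) : Fin 2 → ℂ := ![w.eval (r i), r i]
  let φ : MvPolynomial (Fin 2) ℂ →ₐ[ℂ] (Fin 6 → ℂ) := AlgHom.pi fun i => aeval (pt i)
  have hφ (p i) : φ p i = aeval (pt i) p := rfl
  have hpt (i : Fin 6) : (den q0 q1).aeval (r i) * w.eval (r i) = (num q0 q1).aeval (r i) := by
    simp only [Polynomial.coe_aeval_eq_eval, hw, Polynomial.eval_mul]
    linear_combination (num q0 q1).eval (r i) * hinv i
  have hsurj : Function.Surjective φ := fun v => by
    refine ⟨(Lagrange.interpolate Finset.univ r v).aeval (X 1), funext fun i => ?_⟩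
    rw [hφ, ← Polynomial.aeval_algHom_apply, aeval_X]
    simpa [pt, -Lagrange.interpolate_apply] using Lagrange.eval_interpolate_at_node v hr.injOn (Finset.mem_univ i)
  have hker : Ideal.span {f₁, f₂} = RingHom.ker φ := by
    refine le_antisymm ?_ fun p hp => ?_
    · rw [Ideal.span_le, Set.insert_subset_iff, Set.singleton_subset_iff]
      refine ⟨funext fun i => ?_, funext fun i => ?_⟩
      · change aeval (pt i) f₁ = 0
        rw [hf₁, first_relation, hpt, sub_self]
      · change aeval (pt i) f₂ = 0
        have h := second_relation q0 q1 _ _ (hpt i)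
        rw [← hf₂] at h
        simp only [Polynomial.coe_aeval_eq_eval, hroot] at h
        refine (mul_eq_zero.1 h).resolve_left (mul_ne_zero two_ne_zero (pow_ne_zero 2 ?_))
        exact right_ne_zero_of_mul_eq_one (hinv i)
    · rw [← Ideal.Quotient.eq_zero_iff_mem]
      set I := Ideal.span {f₁, f₂}
      let π := Ideal.Quotient.mkₐ ℂ I
      have hπ : aeval ![π (X 0), π (X 1)] = π := by
        ext i; fin_cases i <;> simp
      have hπ₁ : π f₁ = 0 := Ideal.Quotient.eq_zero_iff_mem.2 (Ideal.subset_span (by simp))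
      have hπ₂ : π f₂ = 0 := Ideal.Quotient.eq_zero_iff_mem.2 (Ideal.subset_span (by simp))
      have h₁ : (den q0 q1).aeval (π (X 1)) * π (X 0) = (num q0 q1).aeval (π (X 1)) := by
        rw [← sub_eq_zero, ← first_relation, hπ, ← hf₁, hπ₁]
      have h₂ : (sextic q0 q1).aeval (π (X 1)) = 0 := by
        rw [← second_relation q0 q1 _ _ h₁, hπ, ← hf₂, hπ₂, mul_zero]
      have hE : π (X 0) = w.aeval (π (X 1)) := by
        have := congrArg (Polynomial.aeval (π (X 1))) hab
        simp only [map_add, map_mul, h₂, mul_zero, add_zero, map_one] at this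
        rw [hw, map_mul, ← h₁, ← mul_assoc, this, one_mul]
      -- Modulo `I`, `p` equals the univariate polynomial `P = p(w, H)`, which `S` divides.
      set P : Polynomial ℂ := aeval ![w, Polynomial.X] p with hP
      have hPπ : P.aeval (π (X 1)) = π p := by
        rw [hP, ← AlgHom.comp_apply]
        congr 1
        ext i; fin_cases i <;> simp [hE]
      have hPr (i : Fin 6) : P.eval (r i) = 0 := by
        have h0 : aeval (pt i) p = 0 := congrFun hp i
        rw [← h0, ← Polynomial.coe_aeval_eq_eval, hP, ← AlgHom.comp_apply]
        congr 1
        ext i; fin_cases i <;> simp [pt]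
      obtain ⟨Q, hQ⟩ := hdvd P hPr
      change π p = 0
      rw [← hPπ, hQ, map_mul, h₂, zero_mul]
  exact ⟨(Ideal.quotientEquivAlgOfEq ℂ hker).trans
    (Ideal.quotientKerAlgEquivOfSurjective hsurj)⟩

end M222

/-- Small quantum cohomology of the Fano threefold `M222` (the blow-up of `ℙ³` along a rational quartic curve),
specialized at `(q0, q1)`: for generic `(q0, q1) ∈ ℂ²` (i.e. on the nonempty
Zariski-open set where a nonzero polynomial `g` does not vanish) the quotient ring is
isomorphic as a `ℂ`-algebra to `ℂ⁶`, hence a semisimple commutative `ℂ`-algebra of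
`ℂ`-dimension 6.  Here `E = X 0` and `H = X 1`. -/
theorem qh_M2_22_generically_semisimple :
    ∃ g : MvPolynomial (Fin 2) ℂ, g ≠ 0 ∧
      ∀ q0 q1 : ℂ, eval ![q0, q1] g ≠ 0 →
        Nonempty
          ((MvPolynomial (Fin 2) ℂ ⧸ Ideal.span
            { X 0 * X 1 ^ 2 + C (6 * q0) * (X 0 * X 1) - C (10 * q0) * X 1 ^ 2 + C (15 * q0 ^ 2) * X 0 + C (6 * q0 ^ 2) * X 1 + C (4 * q0 * q1) * X 0 - C (18 * q0 * q1) * X 1 - C (4 * q0 * q1 ^ 2),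
              X 0 ^ 2 - C (7 / 2) * (X 0 * X 1) + C 4 * X 1 ^ 2 + C (5 / 2 * q0) * X 0 - C (5 * q0) * X 1 - C q1 * X 0 - C (3 * q0 * q1) })
          ≃ₐ[ℂ] (Fin 6 → ℂ)) := by
  exact ⟨M222.genericityPoly, M222.genericityPoly_ne_zero, fun q0 q1 h =>
    have ⟨hS, hDN⟩ := M222.isCoprime_of_genericityPoly h
    M222.nonempty_algEquiv hS hDN rfl rfl⟩
end

section
/- For generic (q0, q1) ∈ ℂ² — i.e., for all (q0, q1) in some nonempty Zariski-open subset of ℂ² — the quotient ring ℂ[E,H] / (EH² + 4·E·H·q0 − (7/2)·H²·q0 + 6·E·q0² + 2·H·q0² − 6·H·q0·q1, E² − (7/3)·E·H + (3/2)·H² + (5/6)·E·q0 − (5/6)·H·q0 − E·q1 − (1/2)·q0·q1) is a semisimple commutative ℂ-algebra of ℂ-dimension 6, i.e., it is isomorphic as a ℂ-algebra to ℂ⁶. (This ring is the specialization at (q0,q1) of the small quantum cohomology ring of the Fano threefold M²₂₆, the blow-up of the quadric Q³ along a twisted cubic.) -/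
/-! The first relation is linear in `E`: it reads `2 * D(H) * E = N(H)` with `D = H² + 4 q₀ H + 6 q₀²`
and `N` quadratic.  Multiplying the second relation by `12 * D(H)²` and substituting gives an
eliminant `Q(H)` of degree `6`.  When `Q` is coprime to `Q' * D`, it has six distinct roots, at none
of which `D` vanishes, and `D(H)` is invertible modulo `Q(H)`.  Hence `E` is a polynomial in `H`
modulo the ideal, and the quotient is `ℂ[H] / (Q) ≃ ℂ⁶`, realized by evaluation at the six points
`(N(h) / (2 * D(h)), h)` with `Q(h) = 0` (`nonempty_algEquiv_of_isCoprime`).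

The coprimality is the nonvanishing of the resultant of `Q` and `Q' * D`, a polynomial in
`(q₀, q₁)`.  It is not the zero polynomial because it is nonzero at `(1, 0)`, where explicit Bézout
identities are available (`isCoprime_elim_one_zero`).
-/

open MvPolynomial

set_option maxHeartbeats 1000000

namespace QHM226

/-! ### The eliminant -/

section CommRing

variable {R S : Type*} [CommRing R] [CommRing S]

/-- The coefficient `D(H) = H² + 4 q₀ H + 6 q₀²` of `E` in the first relation. -/
noncomputable def den (a : R) : Polynomial R :=
  Polynomial.X ^ 2 + Polynomial.C (4 * a) * Polynomial.X + Polynomial.C (6 * a ^ 2)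

/-- The polynomial `N(H)` for which twice the first relation is `2 * D(H) * E - N(H)`. -/
noncomputable def num (a b : R) : Polynomial R :=
  Polynomial.C (7 * a) * Polynomial.X ^ 2 + Polynomial.C (12 * a * b - 4 * a ^ 2) * Polynomial.X

/-- The polynomial `Q(H)` left after eliminating `E`: it equals `12 * D²` times the second relation at `E = N / (2 * D)`. -/
noncomputable def elim (a b : R) : Polynomial R :=
  3 * num a b ^ 2 - 14 * Polynomial.X * num a b * den a + 18 * Polynomial.X ^ 2 * den a ^ 2
    + Polynomial.C (5 * a) * num a b * den a - Polynomial.C (10 * a) * Polynomial.X * den a ^ 2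
    - Polynomial.C (6 * b) * num a b * den a - Polynomial.C (6 * a * b) * den a ^ 2

lemma map_den (φ : R →+* S) (a : R) : (den a).map φ = den (φ a) := by
  simp only [den, Polynomial.map_add, Polynomial.map_mul, Polynomial.map_pow, Polynomial.map_X,
    Polynomial.map_C, Polynomial.map_ofNat, map_mul, map_pow, map_ofNat]

lemma map_elim (φ : R →+* S) (a b : R) : (elim a b).map φ = elim (φ a) (φ b) := by
  simp only [elim, num, den, Polynomial.map_add, Polynomial.map_sub, Polynomial.map_mul,
    Polynomial.map_pow, Polynomial.map_X, Polynomial.map_C, Polynomial.map_ofNat, map_mul, map_sub,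
    map_pow, map_ofNat]

/-- The leading term of the eliminant is `18 * H⁶`, independently of `(q₀, q₁)`; this gives its
degree over any ring of characteristic zero. -/
lemma elim_eq (a b : R) : ∃ c₀ c₁ c₂ c₃ c₄ c₅ : R, elim a b =
    Polynomial.C 18 * Polynomial.X ^ 6 + Polynomial.C c₅ * Polynomial.X ^ 5
      + Polynomial.C c₄ * Polynomial.X ^ 4 + Polynomial.C c₃ * Polynomial.X ^ 3
      + Polynomial.C c₂ * Polynomial.X ^ 2 + Polynomial.C c₁ * Polynomial.X
      + Polynomial.C c₀ := by
  refine ⟨-216 * a ^ 5 * b,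
    -432 * a ^ 3 * b ^ 2 + 216 * a ^ 4 * b - 480 * a ^ 5,
    144 * a ^ 2 * b ^ 2 - 1380 * a ^ 3 * b + 682 * a ^ 4,
    -72 * a * b ^ 2 - 300 * a ^ 2 * b + 172 * a ^ 3,
    -216 * a * b + 270 * a ^ 2,
    36 * a,
    ?_⟩
  simp only [elim, num, den, map_add, map_sub, map_mul, map_pow, map_neg, map_ofNat]
  ring

lemma natDegree_den [Nontrivial R] (a : R) : (den a).natDegree = 2 := by
  unfold den
  compute_degree!

lemma natDegree_elim_le (a b : R) : (elim a b).natDegree ≤ 6 := by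
  obtain ⟨c₀, c₁, c₂, c₃, c₄, c₅, h⟩ := elim_eq a b
  rw [h]
  compute_degree

lemma natDegree_elim [CharZero R] (a b : R) : (elim a b).natDegree = 6 := by
  obtain ⟨c₀, c₁, c₂, c₃, c₄, c₅, h⟩ := elim_eq a b
  rw [h]
  compute_degree!

end CommRing

/-- The product `Q' * D` is the polynomial to which the eliminant `Q` has to be coprime. -/
noncomputable def test {R : Type*} [CommRing R] (a b : R) : Polynomial R :=
  Polynomial.derivative (elim a b) * den a

lemma map_test {R S : Type*} [CommRing R] [CommRing S] (φ : R →+* S) (a b : R) :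
    (test a b).map φ = test (φ a) (φ b) := by
  simp [test, ← Polynomial.derivative_map, map_elim, map_den]

lemma natDegree_test {R : Type*} [CommRing R] [IsDomain R] [CharZero R] (a b : R) :
    (test a b).natDegree = 7 := by
  have h1 : (Polynomial.derivative (elim a b)).natDegree = 5 := by
    rw [Polynomial.natDegree_derivative, natDegree_elim]
  rw [test, Polynomial.natDegree_mul, h1, natDegree_den]
  · intro h
    simp [h] at h1
  · intro h
    have := natDegree_den a
    simp [h] at this

/-! ### The resultant and its nonvanishing -/

/-- At `(q₀, q₁) = (1, 0)` the eliminant is separable and coprime to `D`. -/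
lemma isCoprime_elim_one_zero : IsCoprime (elim (1 : ℂ) 0) (test (1 : ℂ) 0) := by
  have hQ : elim (1 : ℂ) 0 = 18 * Polynomial.X ^ 6 + 36 * Polynomial.X ^ 5
      + 270 * Polynomial.X ^ 4 + 172 * Polynomial.X ^ 3 + 682 * Polynomial.X ^ 2
      - 480 * Polynomial.X := by
    simp only [elim, num, den, map_sub, map_mul, map_pow, map_ofNat, map_zero, map_one]
    ring
  have hQ' : Polynomial.derivative (elim (1 : ℂ) 0) = 108 * Polynomial.X ^ 5
      + 180 * Polynomial.X ^ 4 + 1080 * Polynomial.X ^ 3 + 516 * Polynomial.X ^ 2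
      + 1364 * Polynomial.X - 480 := by
    rw [hQ]
    simp only [Polynomial.derivative_add, Polynomial.derivative_sub, Polynomial.derivative_mul,
      Polynomial.derivative_X_pow, Polynomial.derivative_X, Polynomial.derivative_ofNat,
      Nat.cast_ofNat, map_ofNat]
    ring
  have hD : den (1 : ℂ) = Polynomial.X ^ 2 + 4 * Polynomial.X + 6 := by
    simp only [den, one_pow, mul_one, map_ofNat]
  -- It suffices to write a nonzero integer as a combination of the two polynomials.
  have key : ∀ (n : ℂ) (p q u v : Polynomial ℂ), n ≠ 0 → u * p + v * q = Polynomial.C n →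
      IsCoprime p q := by
    intro n p q u v hn h
    refine ⟨Polynomial.C n⁻¹ * u, Polynomial.C n⁻¹ * v, ?_⟩
    have : Polynomial.C n⁻¹ * Polynomial.C n = 1 := by
      rw [← Polynomial.C_mul, inv_mul_cancel₀ hn, Polynomial.C_1]
    linear_combination Polynomial.C n⁻¹ * h + this
  refine IsCoprime.mul_right ?_ ?_
  · rw [hQ', hQ]
    refine key 945546543302400 _ _
      (-10513547646838 - 4400460034062 * Polynomial.X - 7218368401140 * Polynomial.X ^ 2
        - 1176755997510 * Polynomial.X ^ 3 - 696560132826 * Polynomial.X ^ 4)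
      (-1969888631880 + 4915780784579 * Polynomial.X + 1313841202754 * Polynomial.X ^ 2
        + 1784407202145 * Polynomial.X ^ 3 + 234823784742 * Polynomial.X ^ 4
        + 116093355471 * Polynomial.X ^ 5) (by norm_num) ?_
    rw [map_ofNat]
    ring
  · rw [hQ, hD]
    refine key 4808268 _ _ (313 + 352 * Polynomial.X)
      (801378 - 509212 * Polynomial.X + 198494 * Polynomial.X ^ 2 - 96444 * Polynomial.X ^ 3
        + 7038 * Polynomial.X ^ 4 - 6336 * Polynomial.X ^ 5) (by norm_num) ?_
    rw [map_ofNat]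
    ring

/-- The discriminant-like polynomial in `(q₀, q₁)` whose nonvanishing makes the quotient split:
the resultant of the generic `Q` and `Q' * D`, with `q₀ = X 0` and `q₁ = X 1`. -/
noncomputable def disc : MvPolynomial (Fin 2) ℂ :=
  (elim (X 0 : MvPolynomial (Fin 2) ℂ) (X 1)).resultant (test (X 0) (X 1)) 6 7

/-- The resultant commutes with specialization, and its value at `(1, 0)` is nonzero. -/
lemma disc_ne_zero : disc ≠ 0 := by
  intro h
  have h1 := Polynomial.resultant_map_map (elim (X 0 : MvPolynomial (Fin 2) ℂ) (X 1))
    (test (X 0) (X 1)) 6 7 (eval ![(1 : ℂ), 0])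
  have h2 := Polynomial.resultant_ne_zero _ _ isCoprime_elim_one_zero
  rw [natDegree_elim, natDegree_test] at h2
  rw [disc] at h
  rw [map_elim, map_test, h, map_zero] at h1
  have e0 : eval ![(1 : ℂ), 0] (X 0) = 1 := by simp
  have e1 : eval ![(1 : ℂ), 0] (X 1) = 0 := by simp
  rw [e0, e1] at h1
  exact h2 h1

/-- The resultant is a combination of `Q` and `Q' * D`, so it gives a Bézout identity wherever it
does not vanish. -/
lemma isCoprime_of_disc {a b : ℂ} (h : eval ![a, b] disc ≠ 0) :
    IsCoprime (elim a b) (test a b) := by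
  obtain ⟨p, q, -, -, hpq⟩ := Polynomial.exists_mul_add_mul_eq_C_resultant
    (m := 6) (n := 7) (elim (X 0 : MvPolynomial (Fin 2) ℂ) (X 1)) (test (X 0) (X 1))
    (natDegree_elim_le _ _) (natDegree_test _ _).le (by simp)
  have h1 := congrArg (Polynomial.map (eval ![a, b])) hpq
  rw [Polynomial.map_add, Polynomial.map_mul, Polynomial.map_mul, map_elim, map_test,
    Polynomial.map_C, ← disc] at h1
  simp only [eval_X, Matrix.cons_val_zero, Matrix.cons_val_one] at h1
  have h2 : Polynomial.C (eval ![a, b] disc)⁻¹ * Polynomial.C (eval ![a, b] disc) = 1 := by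
    rw [← Polynomial.C_mul, inv_mul_cancel₀ h, Polynomial.C_1]
  exact ⟨Polynomial.C (eval ![a, b] disc)⁻¹ * p.map (eval ![a, b]),
    Polynomial.C (eval ![a, b] disc)⁻¹ * q.map (eval ![a, b]),
    by linear_combination Polynomial.C (eval ![a, b] disc)⁻¹ * h1 + h2⟩

/-! ### The quotient ring -/

/-- The first relation. -/
noncomputable def rel₁ (q0 q1 : ℂ) : MvPolynomial (Fin 2) ℂ :=
  X 0 * X 1 ^ 2 + C (4 * q0) * (X 0 * X 1) - C (7 / 2 * q0) * X 1 ^ 2 + C (6 * q0 ^ 2) * X 0 + C (2 * q0 ^ 2) * X 1 - C (6 * q0 * q1) * X 1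

/-- The second relation. -/
noncomputable def rel₂ (q0 q1 : ℂ) : MvPolynomial (Fin 2) ℂ :=
  X 0 ^ 2 - C (7 / 3) * (X 0 * X 1) + C (3 / 2) * X 1 ^ 2 + C (5 / 6 * q0) * X 0 - C (5 / 6 * q0) * X 1 - C q1 * X 0 - C (1 / 2 * q0 * q1)

/-- The first relation is linear in `E`. -/
lemma two_mul_rel₁ (a b : ℂ) : 2 * rel₁ a b =
    2 * X 0 * Polynomial.aeval (X 1) (den a) - Polynomial.aeval (X 1) (num a b) := by
  have h : (2 : MvPolynomial (Fin 2) ℂ) * C (7 / 2) = 7 := by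
    rw [← map_ofNat C 2, ← map_ofNat C 7, ← C_mul]
    norm_num
  simp only [rel₁, den, num, map_add, map_sub, map_mul, map_pow, map_ofNat, Polynomial.aeval_X,
    Polynomial.aeval_C, algebraMap_eq]
  linear_combination (-C a * X 1 ^ 2) * h

/-- The eliminant, as a polynomial in `H`, lies in the ideal of the two relations. -/
lemma elim_sub_rel₂ (a b : ℂ) : ∃ m : MvPolynomial (Fin 2) ℂ,
    Polynomial.aeval (X 1) (elim a b) =
      12 * Polynomial.aeval (X 1) (den a) ^ 2 * rel₂ a b + m * rel₁ a b := by
  have h3 : (12 : MvPolynomial (Fin 2) ℂ) * C (7 / 3) = 28 := by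
    rw [← map_ofNat C 12, ← map_ofNat C 28, ← C_mul]
    norm_num
  have h2 : (12 : MvPolynomial (Fin 2) ℂ) * C (3 / 2) = 18 := by
    rw [← map_ofNat C 12, ← map_ofNat C 18, ← C_mul]
    norm_num
  have h6 : (12 : MvPolynomial (Fin 2) ℂ) * C (5 / 6) = 10 := by
    rw [← map_ofNat C 12, ← map_ofNat C 10, ← C_mul]
    norm_num
  have h1 : (12 : MvPolynomial (Fin 2) ℂ) * C (1 / 2) = 6 := by
    rw [← map_ofNat C 12, ← map_ofNat C 6, ← C_mul]
    norm_num
  have hr := two_mul_rel₁ a b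
  set d := Polynomial.aeval (X 1 : MvPolynomial (Fin 2) ℂ) (den a) with hd
  set n := Polynomial.aeval (X 1 : MvPolynomial (Fin 2) ℂ) (num a b) with hn
  -- View `Q` as a quadratic polynomial in `N`.  The multiplier is `-2` times its divided difference
  -- between `N` and `2 * E * D`, two values that differ by twice the first relation.
  refine ⟨-2 * (3 * (n + 2 * X 0 * d) - 14 * X 1 * d + 5 * C a * d - 6 * C b * d), ?_⟩
  simp only [elim, rel₂, map_add, map_sub, map_mul, map_pow, map_ofNat, Polynomial.aeval_X,
    Polynomial.aeval_C, algebraMap_eq, ← hd, ← hn]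
  linear_combination
    (3 * (n + 2 * X 0 * d) - 14 * X 1 * d + 5 * C a * d - 6 * C b * d) * hr
    + d ^ 2 * (X 0 * X 1 * h3 - X 1 ^ 2 * h2 - C a * (X 0 - X 1) * h6 + C a * C b * h1)

/-- If the eliminant is coprime to `Q' * D`, evaluation at the six common zeros of the two
relations identifies the quotient with `ℂ⁶`. -/
lemma nonempty_algEquiv_of_isCoprime {a b : ℂ} (h : IsCoprime (elim a b) (test a b)) :
    Nonempty ((MvPolynomial (Fin 2) ℂ ⧸ Ideal.span {rel₁ a b, rel₂ a b}) ≃ₐ[ℂ] (Fin 6 → ℂ)) := by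
  have hsep : (elim a b).Separable := h.of_isCoprime_of_dvd_right (Dvd.intro _ rfl)
  have hden : IsCoprime (elim a b) (den a) := h.of_isCoprime_of_dvd_right (Dvd.intro_left _ rfl)
  have hsplit : (elim a b).Splits := IsAlgClosed.splits _
  have hne : elim a b ≠ 0 := hsep.ne_zero
  have hcard : Fintype.card ((elim a b).rootSet ℂ) = 6 := by
    rw [Polynomial.card_rootSet_eq_natDegree hsep (IsAlgClosed.splits _), natDegree_elim]
  let ε := Fintype.equivFinOfCardEq hcard
  let r : Fin 6 → ℂ := fun i => (ε.symm i : ℂ)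
  have hr_inj : Function.Injective r := Subtype.val_injective.comp ε.symm.injective
  have hr_root : ∀ i, (elim a b).eval (r i) = 0 := fun i => by
    have := (Polynomial.mem_rootSet.1 (ε.symm i).2).2
    simpa using this
  have hr_surj : ∀ z, (elim a b).eval z = 0 → ∃ i, r i = z := fun z hz => by
    refine ⟨ε ⟨z, Polynomial.mem_rootSet.2 ⟨hne, by simpa using hz⟩⟩, ?_⟩
    simp [r]
  obtain ⟨v, u, huv⟩ := hden
  have hu : ∀ i, u.eval (r i) * (den a).eval (r i) = 1 := fun i => by
    have := congrArg (Polynomial.eval (r i)) huv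
    simpa [hr_root] using this
  -- Modulo the ideal, `E` is the value at `H` of the polynomial `G = N * D⁻¹ / 2`.
  let G : Polynomial ℂ := Polynomial.C (1 / 2) * (num a b * u)
  let pt : Fin 6 → Fin 2 → ℂ := fun i => ![G.eval (r i), r i]
  have hpt₁ : ∀ i, eval (pt i) (rel₁ a b) = 0 := fun i => by
    have h1 := congrArg (eval (pt i)) (two_mul_rel₁ a b)
    have hev : ∀ p : Polynomial ℂ, eval (pt i) (Polynomial.aeval (X 1) p) = p.eval (r i) :=
      fun p => by
        rw [← MvPolynomial.coe_aeval_eq_eval, RingHom.coe_coe, ← Polynomial.aeval_algHom_apply]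
        simp [pt]
    simp only [map_mul, map_sub, map_ofNat, hev, eval_X] at h1
    have h0 : pt i 0 = 1 / 2 * ((num a b).eval (r i) * u.eval (r i)) := by simp [pt, G]
    rw [h0] at h1
    linear_combination (1 / 2) * h1 + (1 / 2) * (num a b).eval (r i) * hu i
  have hpt₂ : ∀ i, eval (pt i) (rel₂ a b) = 0 := fun i => by
    obtain ⟨m, hm⟩ := elim_sub_rel₂ a b
    have h1 := congrArg (eval (pt i)) hm
    have hev : ∀ p : Polynomial ℂ, eval (pt i) (Polynomial.aeval (X 1) p) = p.eval (r i) :=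
      fun p => by
        rw [← MvPolynomial.coe_aeval_eq_eval, RingHom.coe_coe, ← Polynomial.aeval_algHom_apply]
        simp [pt]
    simp only [map_mul, map_add, map_pow, map_ofNat, hev, hr_root, hpt₁] at h1
    have hd : (den a).eval (r i) ≠ 0 := right_ne_zero_of_mul_eq_one (hu i)
    simpa [hd] using h1.symm
  let φ : MvPolynomial (Fin 2) ℂ →ₐ[ℂ] (Fin 6 → ℂ) :=
    AlgHom.pi (fun i => MvPolynomial.aeval (pt i))
  have hφ : ∀ f i, φ f i = eval (pt i) f := fun f i => by
    rw [← MvPolynomial.coe_aeval_eq_eval]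
    rfl
  have hφ_surj : Function.Surjective φ := fun w => by
    refine ⟨Polynomial.aeval (X 1) (Lagrange.interpolate Finset.univ r w), ?_⟩
    ext i
    rw [hφ, ← MvPolynomial.coe_aeval_eq_eval, RingHom.coe_coe, ← Polynomial.aeval_algHom_apply]
    have h1 : MvPolynomial.aeval (pt i) (X 1 : MvPolynomial (Fin 2) ℂ) = r i := by simp [pt]
    rw [h1, Polynomial.coe_aeval_eq_eval]
    exact Lagrange.eval_interpolate_at_node w hr_inj.injOn (Finset.mem_univ i)
  obtain ⟨I, hI⟩ : ∃ I : Ideal (MvPolynomial (Fin 2) ℂ), I = Ideal.span {rel₁ a b, rel₂ a b} :=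
    ⟨_, rfl⟩
  rw [← hI]
  have hle : ∀ f ∈ ({rel₁ a b, rel₂ a b} : Set (MvPolynomial (Fin 2) ℂ)), f ∈ I := fun f hf =>
    hI ▸ Ideal.subset_span hf
  have hmk₁ : Ideal.Quotient.mkₐ ℂ I (rel₁ a b) = 0 :=
    Ideal.Quotient.eq_zero_iff_mem.2 (hle _ (by simp))
  have hmk₂ : Ideal.Quotient.mkₐ ℂ I (rel₂ a b) = 0 :=
    Ideal.Quotient.eq_zero_iff_mem.2 (hle _ (by simp))
  have hmkQ : Ideal.Quotient.mkₐ ℂ I (Polynomial.aeval (X 1) (elim a b)) = 0 := by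
    obtain ⟨m, hm⟩ := elim_sub_rel₂ a b
    rw [hm, map_add, map_mul _ _ (rel₂ a b), map_mul _ _ (rel₁ a b), hmk₁, hmk₂, mul_zero,
      mul_zero, add_zero]
  have hmkG : Ideal.Quotient.mkₐ ℂ I (Polynomial.aeval (X 1) G)
      = Ideal.Quotient.mkₐ ℂ I (X 0) := by
    have h1 := congrArg (Ideal.Quotient.mkₐ ℂ I) (two_mul_rel₁ a b)
    have h2 := congrArg (fun p => Ideal.Quotient.mkₐ ℂ I (Polynomial.aeval (X 1) p)) huv
    have hhalf : (2 : MvPolynomial (Fin 2) ℂ ⧸ I) * algebraMap ℂ _ (1 / 2) = 1 := by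
      have h := map_mul (algebraMap ℂ (MvPolynomial (Fin 2) ℂ ⧸ I)) 2 (1 / 2)
      rw [map_ofNat] at h
      rw [← h, mul_one_div_cancel two_ne_zero, map_one]
    simp only [map_mul, map_sub, map_ofNat, hmk₁] at h1
    simp only [map_mul, map_add, map_one, hmkQ] at h2
    simp only [G, map_mul, Polynomial.aeval_C, AlgHom.commutes]
    linear_combination
      (algebraMap ℂ (MvPolynomial (Fin 2) ℂ ⧸ I) (1 / 2)
        * Ideal.Quotient.mkₐ ℂ I (Polynomial.aeval (X 1) u)) * h1
      + Ideal.Quotient.mkₐ ℂ I (X 0) * h2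
      + (Ideal.Quotient.mkₐ ℂ I (X 0) * Ideal.Quotient.mkₐ ℂ I (Polynomial.aeval (X 1) u)
        * Ideal.Quotient.mkₐ ℂ I (Polynomial.aeval (X 1) (den a))) * hhalf
  have hker : RingHom.ker φ = I := by
    apply le_antisymm
    · intro f hf
      let p : Polynomial ℂ := MvPolynomial.aeval ![G, Polynomial.X] f
      have hcomp : ((Ideal.Quotient.mkₐ ℂ I).comp (Polynomial.aeval (X 1))).comp
          (MvPolynomial.aeval ![G, Polynomial.X]) = Ideal.Quotient.mkₐ ℂ I := by
        refine MvPolynomial.algHom_ext fun i => ?_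
        fin_cases i
        · simpa using hmkG
        · simp
      have hp : ∀ i, p.eval (r i) = 0 := fun i => by
        have h1 : ((Polynomial.aeval (r i)).comp (MvPolynomial.aeval ![G, Polynomial.X]) :
            MvPolynomial (Fin 2) ℂ →ₐ[ℂ] ℂ) = MvPolynomial.aeval (pt i) := by
          refine MvPolynomial.algHom_ext fun j => ?_
          fin_cases j <;> simp [pt]
        have h2 := congrFun (RingHom.mem_ker.1 hf) i
        rw [hφ, ← MvPolynomial.coe_aeval_eq_eval, RingHom.coe_coe, ← h1] at h2
        simpa [p] using h2
      have hdvd : elim a b ∣ p := by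
        by_cases hp0 : p = 0
        · simp [hp0]
        rw [hsplit.dvd_iff_roots_le_roots hne hp0,
          Multiset.le_iff_subset (Polynomial.nodup_roots hsep)]
        intro z hz
        obtain ⟨i, rfl⟩ := hr_surj z (Polynomial.isRoot_of_mem_roots hz)
        exact (Polynomial.mem_roots hp0).2 (hp i)
      obtain ⟨k, hk⟩ := hdvd
      have h3 : Ideal.Quotient.mkₐ ℂ I f = 0 := by
        rw [← hcomp, AlgHom.comp_apply, AlgHom.comp_apply]
        change Ideal.Quotient.mkₐ ℂ I (Polynomial.aeval (X 1) p) = 0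
        rw [hk, map_mul, map_mul, hmkQ, zero_mul]
      exact Ideal.Quotient.eq_zero_iff_mem.1 h3
    · have hφ₁ : φ (rel₁ a b) = 0 := funext fun i => by rw [hφ, hpt₁, Pi.zero_apply]
      have hφ₂ : φ (rel₂ a b) = 0 := funext fun i => by rw [hφ, hpt₂, Pi.zero_apply]
      rw [hI, Ideal.span_le, Set.insert_subset_iff, Set.singleton_subset_iff]
      exact ⟨RingHom.mem_ker.2 hφ₁, RingHom.mem_ker.2 hφ₂⟩
  exact ⟨(Ideal.quotientEquivAlgOfEq ℂ hker.symm).trans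
    (Ideal.quotientKerAlgEquivOfSurjective hφ_surj)⟩

end QHM226

/-- Small quantum cohomology of the Fano threefold `M226` (the blow-up of the quadric `Q³` along a twisted cubic),
specialized at `(q0, q1)`: for generic `(q0, q1) ∈ ℂ²` (i.e. on the nonempty
Zariski-open set where a nonzero polynomial `g` does not vanish) the quotient ring is
isomorphic as a `ℂ`-algebra to `ℂ⁶`, hence a semisimple commutative `ℂ`-algebra of
`ℂ`-dimension 6.  Here `E = X 0` and `H = X 1`. -/
theorem qh_M2_26_generically_semisimple :
    ∃ g : MvPolynomial (Fin 2) ℂ, g ≠ 0 ∧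
      ∀ q0 q1 : ℂ, eval ![q0, q1] g ≠ 0 →
        Nonempty
          ((MvPolynomial (Fin 2) ℂ ⧸ Ideal.span
            { X 0 * X 1 ^ 2 + C (4 * q0) * (X 0 * X 1) - C (7 / 2 * q0) * X 1 ^ 2 + C (6 * q0 ^ 2) * X 0 + C (2 * q0 ^ 2) * X 1 - C (6 * q0 * q1) * X 1,
              X 0 ^ 2 - C (7 / 3) * (X 0 * X 1) + C (3 / 2) * X 1 ^ 2 + C (5 / 6 * q0) * X 0 - C (5 / 6 * q0) * X 1 - C q1 * X 0 - C (1 / 2 * q0 * q1) })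
          ≃ₐ[ℂ] (Fin 6 → ℂ)) := by
  exact ⟨QHM226.disc, QHM226.disc_ne_zero, fun _ _ h =>
    QHM226.nonempty_algEquiv_of_isCoprime (QHM226.isCoprime_of_disc h)⟩
end

section
/- For generic (q0, q1) ∈ ℂ² — i.e., for all (q0, q1) in some nonempty Zariski-open subset of ℂ² — the quotient ring ℂ[E,H] / (EH² + 3·E·q0 − 8·H·q0 − 3·q0·q1, E² − (10/3)·E·H + 3·H² − E·q1 − (1/3)·q0) is a semisimple commutative ℂ-algebra of ℂ-dimension 6, i.e., it is isomorphic as a ℂ-algebra to ℂ⁶. (This ring is the specialization at (q0,q1) of the small quantum cohomology ring of the Fano threefold M²₂₇, the blow-up of ℙ³ along a twisted cubic.) -/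
/-! Write `f₁ = (H² + 3q₀)E - q₀(8H + 3q₁)`, linear in `E`, and `f₂` for the second relation. Clearing
the denominator in `f₂` after solving `f₁ = 0` for `E` gives the eliminant
`P(H) = (H² - q₀)³ - q₀q₁(6H³ + q₁H² + 2q₀H)`, a monic sextic, with `3P` in the ideal `(f₁, f₂)`.
If `q₀(3q₁² + 64q₀) ≠ 0`, then `H² + 3q₀` is coprime to `P`, hence a unit in the quotient ring, so `E`
is a polynomial in `H` there (`exists_aeval_H`). If moreover `P` is separable, evaluation at the six
points `(q₀(8h + 3q₁)/(h² + 3q₀), h)`, `P(h) = 0`, is an isomorphism from the quotient to `ℂ⁶`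
(`nonempty_algEquiv`): surjective by Lagrange interpolation in `H`, and injective because a polynomial
in `H` vanishing at the six roots is a multiple of `P`.

Separability is the nonvanishing of the resultant of `P` and its derivative, a polynomial in `(q₀, q₁)`. It is not
identically zero because `P` is separable at `(q₀, q₁) = (-1, 4)`. The choice of point matters: at
`q₁ = 0` the eliminant is the cube `(H² - q₀)³`. -/

open MvPolynomial

set_option maxHeartbeats 1000000

namespace M227

/-- The eliminant of `E` from the two relations, as a polynomial in `H`. It is defined over any
commutative ring so that it can be taken with `q`, `s` the indeterminates and then specialized. -/
noncomputable def elim {R : Type*} [CommRing R] (q s : R) : Polynomial R :=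
  (Polynomial.X ^ 2 - Polynomial.C q) ^ 3 - Polynomial.C (q * s) *
    (6 * Polynomial.X ^ 3 + Polynomial.C s * Polynomial.X ^ 2 + Polynomial.C (2 * q) * Polynomial.X)

lemma elim_map {R S : Type*} [CommRing R] [CommRing S] (φ : R →+* S) (q s : R) :
    (elim q s).map φ = elim (φ q) (φ s) := by
  simp only [elim, Polynomial.map_sub, Polynomial.map_mul, Polynomial.map_add, Polynomial.map_pow,
    Polynomial.map_X, Polynomial.map_C, Polynomial.map_ofNat, map_mul, map_ofNat]

lemma eval_elim {R : Type*} [CommRing R] (q s h : R) :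
    (elim q s).eval h = (h ^ 2 - q) ^ 3 - q * s * (6 * h ^ 3 + s * h ^ 2 + 2 * q * h) := by
  simp [elim]

lemma aeval_elim {A : Type*} [CommRing A] [Algebra ℂ A] (q s : ℂ) (h : A) :
    Polynomial.aeval h (elim q s) = (h ^ 2 - algebraMap ℂ A q) ^ 3 - algebraMap ℂ A q *
      algebraMap ℂ A s * (6 * h ^ 3 + algebraMap ℂ A s * h ^ 2 + 2 * algebraMap ℂ A q * h) := by
  simp only [elim, map_sub, map_mul, map_add, map_pow, Polynomial.aeval_X, Polynomial.aeval_C,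
    map_ofNat]

lemma eval_derivative_elim (q s h : ℂ) :
    (elim q s).derivative.eval h =
      6 * h * (h ^ 2 - q) ^ 2 - q * s * (18 * h ^ 2 + 2 * s * h + 2 * q) := by
  simp [elim, Polynomial.derivative_pow]
  ring

lemma elim_eq_sum {R : Type*} [CommRing R] (q s : R) :
    elim q s = Polynomial.X ^ 6 - Polynomial.C (3 * q) * Polynomial.X ^ 4
      - Polynomial.C (6 * q * s) * Polynomial.X ^ 3
      + Polynomial.C (3 * q ^ 2 - q * s ^ 2) * Polynomial.X ^ 2
      - Polynomial.C (2 * q ^ 2 * s) * Polynomial.X - Polynomial.C (q ^ 3) := by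
  simp only [elim, map_sub, map_mul, map_pow, map_ofNat]
  ring

lemma natDegree_elim (q s : ℂ) : (elim q s).natDegree = 6 := by
  rw [elim_eq_sum]
  compute_degree!

lemma elim_ne_zero (q s : ℂ) : elim q s ≠ 0 :=
  Polynomial.ne_zero_of_natDegree_gt (n := 5) (by rw [natDegree_elim]; norm_num)

lemma natDegree_derivative_elim (q s : ℂ) : (elim q s).derivative.natDegree = 5 := by
  rw [Polynomial.natDegree_derivative, natDegree_elim]

/-- The resultant of the eliminant and its derivative, as a polynomial in `(q, s)`. The degrees `6` and
`5` are fixed explicitly, so that specialization commutes with the resultant. -/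
noncomputable def disc : MvPolynomial (Fin 2) ℂ :=
  (elim (X 0) (X 1) : Polynomial (MvPolynomial (Fin 2) ℂ)).resultant
    (elim (X 0) (X 1) : Polynomial (MvPolynomial (Fin 2) ℂ)).derivative 6 5

lemma eval_disc_ne_zero_iff (q s : ℂ) : eval ![q, s] disc ≠ 0 ↔ (elim q s).Separable := by
  have h : eval ![q, s] disc = (elim q s).resultant (elim q s).derivative := by
    rw [disc, ← Polynomial.resultant_map_map, ← Polynomial.derivative_map, elim_map,
      eval_X, eval_X, natDegree_derivative_elim, natDegree_elim]
    rfl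
  rw [h, Ne, Polynomial.resultant_eq_zero_iff, Polynomial.separable_def]
  simp [elim_ne_zero]

lemma separable_special : (elim (-1 : ℂ) 4).Separable := by
  rw [Polynomial.separable_def,
    Polynomial.isCoprime_iff_aeval_ne_zero_of_isAlgClosed ℂ ℂ]
  intro h
  by_contra! hc
  obtain ⟨h1, h2⟩ := hc
  rw [Polynomial.coe_aeval_eq_eval, eval_elim] at h1
  rw [Polynomial.coe_aeval_eq_eval, eval_derivative_elim] at h2
  -- The coefficients are the Bezout cofactors of the eliminant and its derivative.
  have : (31520 : ℂ) = 0 := by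
    linear_combination
      (80768 + 131760 * h + 34038 * h ^ 2 - 3324 * h ^ 3 + 12696 * h ^ 4) * h1 +
      (6156 - 35057 * h - 46798 * h ^ 2 - 7789 * h ^ 3 + 554 * h ^ 4 - 2116 * h ^ 5) * h2
  norm_num at this

/-- The ideal of relations among `E = X 0` and `H = X 1`. -/
noncomputable abbrev rel (q s : ℂ) : Ideal (MvPolynomial (Fin 2) ℂ) :=
  Ideal.span
    { X 0 * X 1 ^ 2 + C (3 * q) * X 0 - C (8 * q) * X 1 - C (3 * q * s),
      X 0 ^ 2 - C (10 / 3) * (X 0 * X 1) + C 3 * X 1 ^ 2 - C s * X 0 - C (1 / 3 * q) }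

/-- The quotient ring by the ideal of relations. -/
abbrev Quo (q s : ℂ) : Type := MvPolynomial (Fin 2) ℂ ⧸ rel q s

/-- The classes of `E` (`i = 0`) and `H` (`i = 1`) in the quotient ring. -/
noncomputable abbrev gen (q s : ℂ) (i : Fin 2) : Quo q s := Ideal.Quotient.mk (rel q s) (X i)

lemma mk_C (q s c : ℂ) : Ideal.Quotient.mk (rel q s) (C c) = algebraMap ℂ (Quo q s) c := rfl

lemma rel_one (q s : ℂ) :
    gen q s 0 * (gen q s 1 ^ 2 + 3 * algebraMap ℂ _ q) =
      algebraMap ℂ _ q * (8 * gen q s 1 + 3 * algebraMap ℂ _ s) := by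
  have h : Ideal.Quotient.mk (rel q s)
      (X 0 * X 1 ^ 2 + C (3 * q) * X 0 - C (8 * q) * X 1 - C (3 * q * s)) = 0 :=
    Ideal.Quotient.eq_zero_iff_mem.2 (Ideal.subset_span (by simp))
  simp only [map_add, map_sub, map_mul, map_pow, mk_C, map_ofNat] at h
  linear_combination h

lemma rel_two (q s : ℂ) :
    3 * gen q s 0 ^ 2 - 10 * (gen q s 0 * gen q s 1) + 9 * gen q s 1 ^ 2
      - 3 * algebraMap ℂ _ s * gen q s 0 - algebraMap ℂ _ q = 0 := by
  have h : Ideal.Quotient.mk (rel q s)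
      (C 3 * (X 0 ^ 2 - C (10 / 3) * (X 0 * X 1) + C 3 * X 1 ^ 2 - C s * X 0 - C (1 / 3 * q))) = 0 :=
    Ideal.Quotient.eq_zero_iff_mem.2 (Ideal.mul_mem_left _ _ (Ideal.subset_span (by simp)))
  have e : (C 3 * (X 0 ^ 2 - C (10 / 3) * (X 0 * X 1) + C 3 * X 1 ^ 2 - C s * X 0 - C (1 / 3 * q)) :
      MvPolynomial (Fin 2) ℂ) =
      C 3 * X 0 ^ 2 - C 10 * (X 0 * X 1) + C 9 * X 1 ^ 2 - C 3 * C s * X 0 - C q := by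
    have h10 : (C 3 * C (10 / 3) : MvPolynomial (Fin 2) ℂ) = C 10 := by
      rw [← C_mul]; norm_num
    have hq : (C 3 * C (1 / 3 * q) : MvPolynomial (Fin 2) ℂ) = C q := by
      rw [← C_mul]; congr 1; ring
    have h9 : (C 3 * C 3 : MvPolynomial (Fin 2) ℂ) = C 9 := by
      rw [← C_mul]; norm_num
    linear_combination (-(X 0 * X 1)) * h10 - hq + X 1 ^ 2 * h9
  rw [e] at h
  simp only [map_add, map_sub, map_mul, map_pow, mk_C, map_ofNat] at h
  linear_combination h

/-- Elimination of `E`, stated over any commutative ring: it serves both in the quotient ring and for the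
coordinates of a common zero. -/
lemma elimination {A : Type*} [CommRing A] (q s E H : A) :
    9 * ((H ^ 2 - q) ^ 3 - q * s * (6 * H ^ 3 + s * H ^ 2 + 2 * q * H)) =
      (H ^ 2 + 3 * q) ^ 2 * (3 * E ^ 2 - 10 * (E * H) + 9 * H ^ 2 - 3 * s * E - q) -
      (E * (H ^ 2 + 3 * q) - q * (8 * H + 3 * s)) *
        (3 * (H ^ 2 + 3 * q) * E + 3 * q * (8 * H + 3 * s) - 10 * H * (H ^ 2 + 3 * q)
          - 3 * s * (H ^ 2 + 3 * q)) := by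
  ring

lemma aeval_elim_H (q s : ℂ) : Polynomial.aeval (gen q s 1) (elim q s) = 0 := by
  have h9 : (9 : Quo q s) * Polynomial.aeval (gen q s 1) (elim q s) = 0 := by
    rw [aeval_elim, elimination _ _ (gen q s 0), rel_two, rel_one]
    ring
  have hinv : algebraMap ℂ (Quo q s) (1 / 9) * 9 = 1 := by
    rw [← map_ofNat (algebraMap ℂ (Quo q s)) 9, ← map_mul]
    norm_num
  linear_combination (algebraMap ℂ (Quo q s) (1 / 9)) * h9 -
    Polynomial.aeval (gen q s 1) (elim q s) * hinv

/-- The denominator `h² + 3q` of `E` does not vanish at the roots of the eliminant: at a common root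
`q(8h + 3s) = 0`, and `h² = -3q` then gives `9s² = -192q`. -/
lemma denom_ne_zero {q s h : ℂ} (hq : q ≠ 0) (hs : 3 * s ^ 2 + 64 * q ≠ 0)
    (hh : (elim q s).eval h = 0) : h ^ 2 + 3 * q ≠ 0 := by
  intro hd
  rw [eval_elim] at hh
  have h1 : (q * (8 * h + 3 * s)) ^ 2 = 0 := by
    have := elimination q s 0 h
    rw [hh, hd] at this
    linear_combination -this / 3
  have h2 : 8 * h + 3 * s = 0 := by
    simpa [hq] using h1
  exact hs (by linear_combination (s - 8 / 3 * h) * h2 + 64 / 3 * hd)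

/-- The quotient ring is generated by `H`. -/
lemma exists_aeval_H {q s : ℂ} (hq : q ≠ 0) (hs : 3 * s ^ 2 + 64 * q ≠ 0) (x : Quo q s) :
    ∃ p : Polynomial ℂ, Polynomial.aeval (gen q s 1) p = x := by
  have hcop : IsCoprime (elim q s) (Polynomial.X ^ 2 + Polynomial.C (3 * q)) := by
    rw [Polynomial.isCoprime_iff_aeval_ne_zero_of_isAlgClosed ℂ ℂ]
    intro h
    by_cases hh : (elim q s).eval h = 0
    · right
      simpa using denom_ne_zero hq hs hh
    · left
      simpa using hh
  obtain ⟨a, b, hab⟩ := hcop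
  obtain ⟨pE, hE⟩ : ∃ p : Polynomial ℂ, Polynomial.aeval (gen q s 1) p = gen q s 0 := by
    -- `b` inverts `H² + 3q` in the quotient ring, so `E = b · q(8H + 3s)` by the first relation.
    refine ⟨b * (Polynomial.C q * (8 * Polynomial.X + Polynomial.C (3 * s))), ?_⟩
    have h1 := congrArg (Polynomial.aeval (gen q s 1)) hab
    simp only [map_add, map_mul, aeval_elim_H, map_pow, Polynomial.aeval_X, Polynomial.aeval_C,
      map_one, map_ofNat] at h1 ⊢
    linear_combination gen q s 0 * h1 -
      Polynomial.aeval (gen q s 1) b * rel_one q s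
  obtain ⟨m, rfl⟩ := Ideal.Quotient.mk_surjective x
  induction m using MvPolynomial.induction_on with
  | C c => exact ⟨Polynomial.C c, by rw [Polynomial.aeval_C, mk_C]⟩
  | add m n hm hn =>
    obtain ⟨p, hp⟩ := hm
    obtain ⟨r, hr⟩ := hn
    exact ⟨p + r, by rw [map_add, map_add, hp, hr]⟩
  | mul_X m i hm =>
    obtain ⟨p, hp⟩ := hm
    fin_cases i
    · exact ⟨p * pE, by rw [map_mul, hp, hE, map_mul]; rfl⟩
    · exact ⟨p * Polynomial.X, by rw [map_mul, hp, Polynomial.aeval_X, map_mul]; rfl⟩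

/-- A root `h` of the eliminant is the `H`-coordinate of a common zero of the relations. -/
lemma rel_le_ker {q s h : ℂ} (hh : (elim q s).eval h = 0) (hd : h ^ 2 + 3 * q ≠ 0)
    (m : MvPolynomial (Fin 2) ℂ) (hm : m ∈ rel q s) :
    aeval ![q * (8 * h + 3 * s) / (h ^ 2 + 3 * q), h] m = 0 := by
  have hle : rel q s ≤ RingHom.ker
      (aeval ![q * (8 * h + 3 * s) / (h ^ 2 + 3 * q), h] : MvPolynomial (Fin 2) ℂ →ₐ[ℂ] ℂ) := by
    have hE : q * (8 * h + 3 * s) / (h ^ 2 + 3 * q) * (h ^ 2 + 3 * q) = q * (8 * h + 3 * s) :=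
      div_mul_cancel₀ _ hd
    generalize q * (8 * h + 3 * s) / (h ^ 2 + 3 * q) = E at hE ⊢
    rw [eval_elim] at hh
    have h2 : 3 * E ^ 2 - 10 * (E * h) + 9 * h ^ 2 - 3 * s * E - q = 0 := by
      have := elimination q s E h
      rw [hh, hE] at this
      have h3 : (h ^ 2 + 3 * q) ^ 2 *
          (3 * E ^ 2 - 10 * (E * h) + 9 * h ^ 2 - 3 * s * E - q) = 0 := by
        linear_combination -this
      simpa [hd] using h3
    rw [Ideal.span_le]
    rintro x (rfl | rfl)
    · simp only [SetLike.mem_coe, RingHom.mem_ker, map_add, map_sub, map_mul, map_pow, aeval_X,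
        algHom_C, Algebra.algebraMap_self, RingHom.id_apply, Matrix.cons_val_zero,
        Matrix.cons_val_one]
      linear_combination hE
    · simp only [SetLike.mem_coe, RingHom.mem_ker, map_add, map_sub, map_mul, map_pow, aeval_X,
        algHom_C, Algebra.algebraMap_self, RingHom.id_apply, Matrix.cons_val_zero,
        Matrix.cons_val_one]
      linear_combination h2 / 3
  exact hle hm

lemma exists_roots {q s : ℂ} (hsep : (elim q s).Separable) :
    ∃ h : Fin 6 → ℂ, Function.Injective h ∧ ∀ i, (elim q s).eval (h i) = 0 := by
  classical
  have hcard : (elim q s).roots.toFinset.card = 6 := by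
    rw [Multiset.toFinset_card_of_nodup (Polynomial.nodup_roots hsep),
      IsAlgClosed.card_roots_eq_natDegree, natDegree_elim]
  let e := (Finset.equivFinOfCardEq hcard).symm
  refine ⟨fun i => (e i : ℂ), Subtype.val_injective.comp e.injective, fun i => ?_⟩
  have := (e i).2
  rw [Multiset.mem_toFinset] at this
  exact Polynomial.isRoot_of_mem_roots this

/-- A polynomial vanishing at six distinct roots of the eliminant is a multiple of it. -/
lemma elim_dvd {q s : ℂ} {h : Fin 6 → ℂ} (hinj : Function.Injective h)
    (hroot : ∀ i, (elim q s).eval (h i) = 0) {p : Polynomial ℂ} (hp : ∀ i, p.eval (h i) = 0) :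
    elim q s ∣ p := by
  have hmod : p %ₘ elim q s = 0 := by
    have hmonic : (elim q s).Monic := by
      rw [elim_eq_sum]; monicity!
    refine Polynomial.eq_zero_of_natDegree_lt_card_of_eval_eq_zero _ hinj (fun i => ?_) ?_
    · have := congrArg (Polynomial.eval (h i)) (Polynomial.modByMonic_add_div p (elim q s))
      simpa [hroot, hp] using this
    · have := Polynomial.natDegree_modByMonic_lt p hmonic
        (fun h1 => by simpa [h1] using natDegree_elim q s)
      simpa [natDegree_elim] using this
  exact (Polynomial.modByMonic_eq_zero_iff_dvd (by rw [elim_eq_sum]; monicity!)).1 hmod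

lemma nonempty_algEquiv {q s : ℂ} (hq : q ≠ 0) (hs : 3 * s ^ 2 + 64 * q ≠ 0)
    (hsep : (elim q s).Separable) : Nonempty (Quo q s ≃ₐ[ℂ] (Fin 6 → ℂ)) := by
  obtain ⟨h, hinj, hroot⟩ := exists_roots hsep
  let Φ : Quo q s →ₐ[ℂ] (Fin 6 → ℂ) := AlgHom.pi fun i =>
    Ideal.Quotient.liftₐ (rel q s)
      (aeval ![q * (8 * h i + 3 * s) / (h i ^ 2 + 3 * q), h i])
      (rel_le_ker (hroot i) (denom_ne_zero hq hs (hroot i)))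
  have hΦ (p : Polynomial ℂ) (i : Fin 6) :
      Φ (Polynomial.aeval (gen q s 1) p) i = p.eval (h i) := by
    have hH : Φ (gen q s 1) = h := by
      ext j
      change aeval _ (X 1) = _
      simp
    rw [← Polynomial.aeval_algHom_apply, hH, Polynomial.aeval_pi_apply]
    exact congrFun (Polynomial.coe_aeval_eq_eval (h i)) p
  refine ⟨AlgEquiv.ofBijective Φ ⟨?_, fun y => ?_⟩⟩
  · rw [injective_iff_map_eq_zero]
    intro x hx
    obtain ⟨p, rfl⟩ := exists_aeval_H hq hs x
    obtain ⟨r, rfl⟩ := elim_dvd hinj hroot (p := p) fun i => by rw [← hΦ, hx]; rfl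
    rw [map_mul, aeval_elim_H, zero_mul]
  · refine ⟨Polynomial.aeval (gen q s 1) (Lagrange.interpolate Finset.univ h y), ?_⟩
    ext i
    rw [hΦ, Lagrange.eval_interpolate_at_node _ hinj.injOn (Finset.mem_univ i)]

end M227

/-- Small quantum cohomology of the Fano threefold `M227` (the blow-up of `ℙ³` along a twisted cubic),
specialized at `(q0, q1)`: for generic `(q0, q1) ∈ ℂ²` (i.e. on the nonempty
Zariski-open set where a nonzero polynomial `g` does not vanish) the quotient ring is
isomorphic as a `ℂ`-algebra to `ℂ⁶`, hence a semisimple commutative `ℂ`-algebra of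
`ℂ`-dimension 6.  Here `E = X 0` and `H = X 1`. -/
theorem qh_M2_27_generically_semisimple :
    ∃ g : MvPolynomial (Fin 2) ℂ, g ≠ 0 ∧
      ∀ q0 q1 : ℂ, eval ![q0, q1] g ≠ 0 →
        Nonempty
          ((MvPolynomial (Fin 2) ℂ ⧸ Ideal.span
            { X 0 * X 1 ^ 2 + C (3 * q0) * X 0 - C (8 * q0) * X 1 - C (3 * q0 * q1),
              X 0 ^ 2 - C (10 / 3) * (X 0 * X 1) + C 3 * X 1 ^ 2 - C q1 * X 0 - C (1 / 3 * q0) })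
          ≃ₐ[ℂ] (Fin 6 → ℂ)) := by
  -- The factor `X 0 * (3 * X 1 ^ 2 + 64 * X 0)` keeps the denominator `H² + 3q₀` of `E` invertible.
  refine ⟨X 0 * (3 * X 1 ^ 2 + 64 * X 0) * M227.disc, ?_, fun q s hg => ?_⟩
  · intro h0
    have h1 := congrArg (eval ![(-1 : ℂ), 4]) h0
    have h2 := (M227.eval_disc_ne_zero_iff (-1) 4).2 M227.separable_special
    simp [h2] at h1
    norm_num at h1
  · have h0 : (q * (3 * s ^ 2 + 64 * q)) * eval ![q, s] M227.disc ≠ 0 := by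
      simpa using hg
    have h1 := left_ne_zero_of_mul h0
    exact M227.nonempty_algEquiv (left_ne_zero_of_mul h1) (right_ne_zero_of_mul h1)
      ((M227.eval_disc_ne_zero_iff q s).1 (right_ne_zero_of_mul h0))
end

section
/- For generic (q0, q1) ∈ ℂ² — i.e., for all (q0, q1) in some nonempty Zariski-open subset of ℂ² — the quotient ring ℂ[E,H] / (EH² − 4·H·q0, E² − 2·E·H + H² − E·q1) is a semisimple commutative ℂ-algebra of ℂ-dimension 6, i.e., it is isomorphic as a ℂ-algebra to ℂ⁶. (This ring is the specialization at (q0,q1) of the small quantum cohomology ring of the Fano threefold M²₂₉, the blow-up of the quadric Q³ along a conic.) -/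
open MvPolynomial

set_option maxHeartbeats 1000000

/-!
Write `c = 4 q0`, `q = q1` and `t = E - H`. The second relation reads `t² = q E`, so for `q ≠ 0` the
ring is generated by `t`, with `E = t² / q` and `H = t² / q - t`. Then `t (t - q) = q H` and
`t³ (t - q) = q² E H`, so the first relation `H (E H - c) = 0` becomes `p(t) = 0` for the sextic
`p = t (t - q) (t⁴ - q t³ - c q²)`: the ring is `ℂ[t] / (p)`. The quartic factor takes the value
`-c q²` at `0` and at `q`, its derivative is `t² (4 t - 3 q)`, and its value at `3 q / 4` is
`-q² (27 q² + 256 c) / 256`. Hence `p` has six distinct roots as soon as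
`q0 q1 (27 q1² + 1024 q0) ≠ 0`, and evaluation at the six corresponding points `(E, H)` is the
required isomorphism: it is onto by Lagrange interpolation in `t`, and its kernel is the given
ideal by division with remainder by `p`.
-/

namespace M229

/-- The sextic satisfied by `t = E - H`, with `c = 4 q0` and `q = q1`. -/
noncomputable def sextic (c q : ℂ) : Polynomial ℂ :=
  (Polynomial.X * (Polynomial.X - Polynomial.C q)) *
    (Polynomial.X ^ 4 - Polynomial.C q * Polynomial.X ^ 3 - Polynomial.C (c * q ^ 2))

lemma sextic_natDegree (c q : ℂ) : (sextic c q).natDegree = 6 := by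
  unfold sextic; compute_degree!

lemma sextic_monic (c q : ℂ) : (sextic c q).Monic := by
  unfold sextic; monicity!

lemma sextic_separable {c q : ℂ} (hc : c ≠ 0) (hq : q ≠ 0) (hd : 27 * q ^ 2 + 256 * c ≠ 0) :
    (sextic c q).Separable := by
  rw [Polynomial.Separable, Polynomial.isCoprime_iff_aeval_ne_zero_of_isAlgClosed ℂ ℂ]
  intro a
  by_contra! h
  obtain ⟨h0, h1⟩ := h
  simp only [sextic, Polynomial.derivative_mul,
    Polynomial.derivative_X, Polynomial.derivative_C, Polynomial.derivative_X_pow, map_mul,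
    map_sub, map_add, map_pow, Polynomial.aeval_X, Polynomial.aeval_C, Algebra.algebraMap_self,
    RingHom.id_apply, map_zero, map_one, Nat.cast_ofNat, map_ofNat] at h0 h1
  norm_num [Polynomial.derivative_pow] at h1
  have hcq : c * q ^ 2 ≠ 0 := mul_ne_zero hc (pow_ne_zero 2 hq)
  rcases mul_eq_zero.mp h0 with h0 | hf
  · rcases mul_eq_zero.mp h0 with rfl | h0
    · have : q * (c * q ^ 2) = 0 := by linear_combination h1
      exact mul_ne_zero hq hcq this
    · obtain rfl : a = q := sub_eq_zero.mp h0
      have : a * (c * a ^ 2) = 0 := by linear_combination -h1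
      exact mul_ne_zero hq hcq this
  · have h2 : a * (a - q) * (a ^ 2 * (4 * a - 3 * q)) = 0 := by
      linear_combination h1 - (2 * a - q) * hf
    rcases mul_eq_zero.mp h2 with h2 | h2
    · rcases mul_eq_zero.mp h2 with rfl | h2
      · exact hcq (by linear_combination -hf)
      · obtain rfl : a = q := sub_eq_zero.mp h2
        exact hcq (by linear_combination -hf)
    · rcases mul_eq_zero.mp h2 with h2 | h2
      · obtain rfl : a = 0 := pow_eq_zero_iff (two_ne_zero) |>.mp h2
        exact hcq (by linear_combination -hf)
      · obtain rfl : a = 3 / 4 * q := by linear_combination h2 / 4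
        have : q ^ 2 * (27 * q ^ 2 + 256 * c) = 0 := by linear_combination -256 * hf
        exact mul_ne_zero (pow_ne_zero 2 hq) hd this

lemma exists_six_roots {c q : ℂ} (hc : c ≠ 0) (hq : q ≠ 0) (hd : 27 * q ^ 2 + 256 * c ≠ 0) :
    ∃ v : Fin 6 → ℂ, Function.Injective v ∧ ∀ i, (sextic c q).eval (v i) = 0 := by
  have hcard : (sextic c q).roots.toFinset.card = 6 := by
    rw [Multiset.toFinset_card_of_nodup (Polynomial.nodup_roots (sextic_separable hc hq hd)),
      ← sextic_natDegree c q]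
    exact (IsAlgClosed.splits _).natDegree_eq_card_roots.symm
  let e := Finset.equivFinOfCardEq hcard
  refine ⟨fun i => (e.symm i : ℂ), Subtype.val_injective.comp e.symm.injective, fun i => ?_⟩
  exact (Polynomial.mem_roots'.mp (Multiset.mem_toFinset.mp (e.symm i).2)).2

/-- The ideal of relations, with `c = 4 q0` and `q = q1`. -/
noncomputable def relIdeal (c q : ℂ) : Ideal (MvPolynomial (Fin 2) ℂ) :=
  Ideal.span
    { X 0 * X 1 ^ 2 - C c * X 1,
      X 0 ^ 2 - C 2 * (X 0 * X 1) + X 1 ^ 2 - C q * X 0 }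

/-- The substitution `E ↦ t² / q`, `H ↦ t² / q - t`. -/
noncomputable def subst (q : ℂ) : MvPolynomial (Fin 2) ℂ →ₐ[ℂ] Polynomial ℂ :=
  aeval ![Polynomial.C q⁻¹ * Polynomial.X ^ 2, Polynomial.C q⁻¹ * Polynomial.X ^ 2 - Polynomial.X]

/-- The section `t ↦ E - H` of `subst`. -/
noncomputable def diff : Polynomial ℂ →ₐ[ℂ] MvPolynomial (Fin 2) ℂ :=
  Polynomial.aeval (X 0 - X 1)

lemma subst_diff (q : ℂ) (P : Polynomial ℂ) : subst q (diff P) = P := by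
  have : (subst q).comp diff = AlgHom.id ℂ _ := by
    ext; simp [subst, diff]
  exact DFunLike.congr_fun this P

lemma diff_sextic_mem (c q : ℂ) : diff (sextic c q) ∈ relIdeal c q := by
  -- Modulo the second relation, `t (t - q) = q H` and `t³ (t - q) = q² E H`, so `p(t)` becomes
  -- `q³ (E H² - c H)`; the coefficients below record the quotients.
  rw [relIdeal, Ideal.mem_span_pair]
  let E : MvPolynomial (Fin 2) ℂ := X 0
  let H : MvPolynomial (Fin 2) ℂ := X 1
  let Q : MvPolynomial (Fin 2) ℂ := C q
  let K : MvPolynomial (Fin 2) ℂ := C c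
  let t := E - H
  refine ⟨Q ^ 3, (t ^ 4 - Q * t ^ 3 - K * Q ^ 2) +
    Q * H * (t ^ 2 + Q * H), ?_⟩
  simp only [diff, sextic, map_mul, map_sub, map_pow, Polynomial.aeval_X, Polynomial.aeval_C,
    MvPolynomial.algebraMap_eq, E, H, Q, K, t, map_ofNat]
  ring

/-- Modulo the relations, every element is a polynomial in `E - H`, computed by `subst`. -/
lemma sub_diff_subst_mem {c q : ℂ} (hq : q ≠ 0) (f : MvPolynomial (Fin 2) ℂ) :
    f - diff (subst q f) ∈ relIdeal c q := by
  have hC : (C q⁻¹ * C q : MvPolynomial (Fin 2) ℂ) = 1 := by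
    rw [← C_mul, inv_mul_cancel₀ hq, C_1]
  have C2 : (C 2 : MvPolynomial (Fin 2) ℂ) = 2 := map_ofNat C 2
  have h : (Ideal.Quotient.mkₐ ℂ (relIdeal c q)) =
      (Ideal.Quotient.mkₐ ℂ (relIdeal c q)).comp (diff.comp (subst q)) := by
    ext i
    simp only [AlgHom.comp_apply, Ideal.Quotient.mkₐ_eq_mk]
    rw [Ideal.Quotient.eq, relIdeal, Ideal.mem_span_pair]
    refine ⟨0, -C q⁻¹, ?_⟩
    fin_cases i
    all_goals
      simp [subst, diff, MvPolynomial.algebraMap_eq, C2]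
      linear_combination X 0 * hC
  have := DFunLike.congr_fun h f
  simpa only [AlgHom.comp_apply, Ideal.Quotient.mkₐ_eq_mk, Ideal.Quotient.eq] using this

lemma subst_mem {c q : ℂ} (hq : q ≠ 0) {f : MvPolynomial (Fin 2) ℂ} (hf : f ∈ relIdeal c q) :
    sextic c q ∣ subst q f := by
  rw [relIdeal, Ideal.mem_span_pair] at hf
  obtain ⟨a, b, rfl⟩ := hf
  have hC : (Polynomial.C q⁻¹ * Polynomial.C q : Polynomial ℂ) = 1 := by
    rw [← Polynomial.C_mul, inv_mul_cancel₀ hq, Polynomial.C_1]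
  have h1 : subst q (X 0 * X 1 ^ 2 - C c * X 1) = sextic c q * Polynomial.C q⁻¹ ^ 3 := by
    simp only [subst, sextic, map_sub, map_mul, map_pow, aeval_X, aeval_C,
      Polynomial.algebraMap_eq, Matrix.cons_val_zero, Matrix.cons_val_one]
    generalize Polynomial.C q⁻¹ = u at *
    generalize Polynomial.C q = w at *
    generalize (Polynomial.X : Polynomial ℂ) = t at *
    linear_combination (u * t ^ 4 * (2 * u * t - 1 - u * w) + Polynomial.C c * t *
      ((u * w + 1) * u * t - ((u * w) ^ 2 + u * w + 1))) * hC
  have h2 : subst q (X 0 ^ 2 - C 2 * (X 0 * X 1) + X 1 ^ 2 - C q * X 0) = 0 := by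
    simp only [subst, map_sub, map_add, map_mul, map_pow, aeval_X, aeval_C,
      Polynomial.algebraMap_eq, Matrix.cons_val_zero, Matrix.cons_val_one, map_ofNat]
    linear_combination -Polynomial.X ^ 2 * hC
  rw [map_add, map_mul, map_mul, h1, h2, mul_zero, add_zero]
  exact Dvd.intro_left _ (by ring : subst q a * Polynomial.C q⁻¹ ^ 3 * sextic c q = _)

/-- Evaluation at the points of the curve `(t² / q, t² / q - t)` with parameters `t = v i`. -/
noncomputable def evalPts (q : ℂ) (v : Fin 6 → ℂ) : MvPolynomial (Fin 2) ℂ →ₐ[ℂ] (Fin 6 → ℂ) :=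
  (AlgHom.pi fun i => Polynomial.aeval (v i)).comp (subst q)

lemma evalPts_apply (q : ℂ) (v : Fin 6 → ℂ) (f : MvPolynomial (Fin 2) ℂ) (i : Fin 6) :
    evalPts q v f i = (subst q f).eval (v i) := by
  simp [evalPts, Polynomial.coe_aeval_eq_eval]

lemma evalPts_surjective (q : ℂ) {v : Fin 6 → ℂ} (hv : Function.Injective v) :
    Function.Surjective (evalPts q v) := by
  intro y
  refine ⟨diff (Lagrange.interpolate Finset.univ v y), funext fun i => ?_⟩
  rw [evalPts_apply, subst_diff]
  exact Lagrange.eval_interpolate_at_node y hv.injOn (Finset.mem_univ i)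

lemma ker_evalPts {c q : ℂ} (hq : q ≠ 0) {v : Fin 6 → ℂ} (hv : Function.Injective v)
    (hroot : ∀ i, (sextic c q).eval (v i) = 0) :
    relIdeal c q = RingHom.ker (evalPts q v) := by
  ext f
  rw [RingHom.mem_ker]
  refine ⟨fun hf => funext fun i => ?_, fun hf => ?_⟩
  · obtain ⟨P, hP⟩ := subst_mem hq hf
    rw [evalPts_apply, hP, Polynomial.eval_mul, hroot, zero_mul, Pi.zero_apply]
  · have hdvd : sextic c q ∣ subst q f := by
      rw [← Polynomial.modByMonic_eq_zero_iff_dvd (sextic_monic c q)]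
      -- The remainder has degree less than six and vanishes at six points.
      refine Polynomial.eq_zero_of_degree_lt_of_eval_index_eq_zero
        Finset.univ hv.injOn ?_ fun i _ => ?_
      · refine (Polynomial.degree_modByMonic_lt _ (sextic_monic c q)).trans_eq ?_
        rw [Polynomial.degree_eq_natDegree (sextic_monic c q).ne_zero, sextic_natDegree]
        simp
      · have h := congrArg (Polynomial.eval (v i))
          (Polynomial.modByMonic_add_div (subst q f) (sextic c q))
        rw [Polynomial.eval_add, Polynomial.eval_mul, hroot, zero_mul, add_zero,
          ← evalPts_apply, hf] at h
        simpa using h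
    obtain ⟨P, hP⟩ := hdvd
    have h1 : diff (subst q f) ∈ relIdeal c q := by
      rw [hP, map_mul]
      exact Ideal.mul_mem_right _ _ (diff_sextic_mem c q)
    simpa using add_mem (sub_diff_subst_mem (c := c) hq f) h1

end M229

/-- Small quantum cohomology of the Fano threefold `M229` (the blow-up of the quadric `Q³` along a conic),
specialized at `(q0, q1)`: for generic `(q0, q1) ∈ ℂ²` (i.e. on the nonempty
Zariski-open set where a nonzero polynomial `g` does not vanish) the quotient ring is
isomorphic as a `ℂ`-algebra to `ℂ⁶`, hence a semisimple commutative `ℂ`-algebra of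
`ℂ`-dimension 6.  Here `E = X 0` and `H = X 1`. -/
theorem qh_M2_29_generically_semisimple :
    ∃ g : MvPolynomial (Fin 2) ℂ, g ≠ 0 ∧
      ∀ q0 q1 : ℂ, eval ![q0, q1] g ≠ 0 →
        Nonempty
          ((MvPolynomial (Fin 2) ℂ ⧸ Ideal.span
            { X 0 * X 1 ^ 2 - C (4 * q0) * X 1,
              X 0 ^ 2 - C 2 * (X 0 * X 1) + X 1 ^ 2 - C q1 * X 0 })
          ≃ₐ[ℂ] (Fin 6 → ℂ)) := by
  refine ⟨X 0 * X 1 * (C 27 * X 1 ^ 2 + C 1024 * X 0), fun h => ?_, fun q0 q1 h => ?_⟩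
  · have := congrArg (eval ![1, 1]) h
    norm_num at this
  · simp only [map_mul, map_add, map_pow, eval_X, eval_C, Matrix.cons_val_zero,
      Matrix.cons_val_one, ne_eq, mul_eq_zero, not_or] at h
    obtain ⟨⟨h0, hq⟩, hd⟩ := h
    have hd' : 27 * q1 ^ 2 + 256 * (4 * q0) ≠ 0 := by
      intro h
      exact hd (by linear_combination h)
    obtain ⟨v, hv, hroot⟩ := M229.exists_six_roots (mul_ne_zero (by norm_num) h0) hq hd'
    exact ⟨(Ideal.quotientEquivAlgOfEq ℂ (M229.ker_evalPts hq hv hroot)).trans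
      (Ideal.quotientKerAlgEquivOfSurjective (M229.evalPts_surjective q1 hv))⟩
end

section
/- For generic (q0, q1) ∈ ℂ² — i.e., for all (q0, q1) in some nonempty Zariski-open subset of ℂ² — the quotient ring ℂ[E,H] / (EH² + 2·E·q0 − 2·H·q0 − 2·q0·q1, E² − 3·E·H + 2·H² − E·q1) is a semisimple commutative ℂ-algebra of ℂ-dimension 6, i.e., it is isomorphic as a ℂ-algebra to ℂ⁶. (This ring is the specialization at (q0,q1) of the small quantum cohomology ring of the Fano threefold M²₃₀, the blow-up of ℙ³ along a conic.) -/
open MvPolynomial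

set_option maxHeartbeats 1000000

/-!
The second relation is `(E - H)(E - 2H) = q1 E`, and the first one reads `D(H) E = N(H)` with
`D = H² + 2 q0` and `N = 2 q0 (H + q1)`. Multiplying the second relation by `D²` and eliminating
`E` gives `2 Q(H)`, with `Q` the monic sextic `elimPoly q0 q1`, so `Q(H)` lies in the ideal
once the unit `2` is divided out. If `q0 ≠ 0` and `q1² + 2 q0 ≠ 0`, then `Q` and `D` have no
common root, so `D(H)` is invertible modulo the ideal and `E` is a polynomial in `H` there: the
quotient is generated by `H`, which is a root of `Q`. If moreover `Q` is separable, its six roots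
give six points of the common zero locus; evaluation at these points is surjective onto `ℂ⁶` by
interpolation in `H`, and its kernel is exactly the ideal, because a polynomial in `H` vanishing
at the six roots is a multiple of `Q` (`quotient_equiv_of_separable`).

The polynomial `g` is `q0 (q1² + 2 q0) Res(Q, Q')`, the resultant being computed over `ℂ[q0, q1]`;
it is nonzero because it does not vanish at `(-1, -1)`, where `Q` is separable by an explicit
Bézout identity.
-/

/-- The monic sextic in `H` obtained by eliminating `E` from the two relations, with
`a` and `b` in the roles of `q0` and `q1`. The coefficient ring is arbitrary so that the
parameters may be taken to be indeterminates. -/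
noncomputable def elimPoly {R : Type*} [CommRing R] (a b : R) : Polynomial R :=
  Polynomial.X ^ 6 + Polynomial.C a * Polynomial.X ^ 4
    - Polynomial.C (4 * a * b) * Polynomial.X ^ 3
    - Polynomial.C (a * b ^ 2) * Polynomial.X ^ 2
    - Polynomial.C (4 * a ^ 2 * b) * Polynomial.X

lemma elimPoly_map {R S : Type*} [CommRing R] [CommRing S] (φ : R →+* S) (a b : R) :
    (elimPoly a b).map φ = elimPoly (φ a) (φ b) := by
  have h4 : φ 4 = 4 := map_ofNat φ 4
  simp [elimPoly, h4]

lemma elimPoly_natDegree {R : Type*} [CommRing R] [Nontrivial R] (a b : R) :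
    (elimPoly a b).natDegree = 6 := by
  unfold elimPoly
  compute_degree!

lemma elimPoly_monic {R : Type*} [CommRing R] [Nontrivial R] (a b : R) :
    (elimPoly a b).Monic := by
  unfold elimPoly
  monicity!

lemma elimPoly_eval {R : Type*} [CommRing R] (a b x : R) :
    (elimPoly a b).eval x
      = x ^ 6 + a * x ^ 4 - 4 * a * b * x ^ 3 - a * b ^ 2 * x ^ 2 - 4 * a ^ 2 * b * x := by
  simp [elimPoly]

lemma elimPoly_aeval {A : Type*} [CommRing A] [Algebra ℂ A] (a b : ℂ) (x : A) :
    Polynomial.aeval x (elimPoly a b)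
      = x ^ 6 + algebraMap ℂ A a * x ^ 4 - algebraMap ℂ A (4 * a * b) * x ^ 3
        - algebraMap ℂ A (a * b ^ 2) * x ^ 2 - algebraMap ℂ A (4 * a ^ 2 * b) * x := by
  simp [elimPoly]

lemma elimPoly_derivative_natDegree (a b : ℂ) :
    (Polynomial.derivative (elimPoly a b)).natDegree = 5 := by
  rw [Polynomial.natDegree_derivative, elimPoly_natDegree]

/-- `Res(Q, Q')` for indeterminate parameters `X 0`, `X 1`. -/
noncomputable def elimRes : MvPolynomial (Fin 2) ℂ :=
  Polynomial.resultant (elimPoly (X 0) (X 1)) (Polynomial.derivative (elimPoly (X 0) (X 1))) 6 5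

/-- The degrees do not drop under specialization, since `Q` is monic, so `elimRes`
specializes to the resultant of the specialized polynomials. -/
lemma eval_elimRes_ne_zero_iff (a b : ℂ) :
    eval ![a, b] elimRes ≠ 0 ↔ (elimPoly a b).Separable := by
  have h : eval ![a, b] elimRes
      = Polynomial.resultant (elimPoly a b) (Polynomial.derivative (elimPoly a b)) := by
    rw [elimPoly_natDegree, elimPoly_derivative_natDegree, elimRes,
      ← Polynomial.resultant_map_map, ← Polynomial.derivative_map, elimPoly_map, eval_X, eval_X]
    rfl
  rw [h, Ne, Polynomial.resultant_eq_zero_iff, Polynomial.Separable]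
  simp [(elimPoly_monic a b).ne_zero]

lemma elimPoly_separable_neg_one : (elimPoly (-1 : ℂ) (-1)).Separable := by
  -- The cofactors come from the extended Euclidean algorithm.
  refine ⟨Polynomial.C (1 / 8552) * (-11306 - 2364 * Polynomial.X + 21724 * Polynomial.X ^ 2
      + 24588 * Polynomial.X ^ 3 + 14178 * Polynomial.X ^ 4),
    Polynomial.C (1 / 8552) * (2138 + 10237 * Polynomial.X + 6486 * Polynomial.X ^ 2
      - 2833 * Polynomial.X ^ 3 - 4098 * Polynomial.X ^ 4 - 2363 * Polynomial.X ^ 5), ?_⟩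
  apply Polynomial.funext
  intro x
  simp [elimPoly]
  ring

/-- The point with `H = x` and `E = N(x) / D(x)` over a root `x` of `Q`; it lies on both curves. -/
lemma relations_of_root {a b x : ℂ} (hD : x ^ 2 + 2 * a ≠ 0)
    (hx : (elimPoly a b).eval x = 0) :
    let e := 2 * a * (x + b) / (x ^ 2 + 2 * a)
    e * x ^ 2 + 2 * a * e - 2 * a * x - 2 * a * b = 0 ∧
      e ^ 2 - 3 * (e * x) + 2 * x ^ 2 - b * e = 0 := by
  intro e
  have he : e * (x ^ 2 + 2 * a) = 2 * a * (x + b) := div_mul_cancel₀ _ hD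
  rw [elimPoly_eval] at hx
  refine ⟨by linear_combination he, ?_⟩
  have h : (x ^ 2 + 2 * a) ^ 2 * (e ^ 2 - 3 * (e * x) + 2 * x ^ 2 - b * e) = 0 := by
    linear_combination 2 * hx + (e * (x ^ 2 + 2 * a) + 2 * a * (x + b)
      - (3 * x + b) * (x ^ 2 + 2 * a)) * he
  exact (mul_eq_zero.mp h).resolve_left (pow_ne_zero 2 hD)

/-- At a common root of `D` and `Q`, the numerator `N` vanishes as well, which forces
`x = -b` and `b² + 2 a = 0`. -/
lemma denom_ne_zero {a b x : ℂ} (ha : a ≠ 0) (hab : b ^ 2 + 2 * a ≠ 0)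
    (hx : (elimPoly a b).eval x = 0) : x ^ 2 + 2 * a ≠ 0 := by
  intro hD
  rw [elimPoly_eval] at hx
  have h : (2 * a * (x + b)) ^ 2 = 0 := by
    linear_combination 2 * hx - (2 * x ^ 2 * (x ^ 2 + 2 * a) - (3 * x + b) * (2 * a * (x + b))) * hD
  have hxb : x + b = 0 := by simpa [ha] using h
  exact hab (by linear_combination hD - (x - b) * hxb)

/-- The ideal of relations at the parameters `(a, b)`. -/
noncomputable abbrev relIdeal (a b : ℂ) : Ideal (MvPolynomial (Fin 2) ℂ) :=
  Ideal.span
    { X 0 * X 1 ^ 2 + C (2 * a) * X 0 - C (2 * a) * X 1 - C (2 * a * b),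
      X 0 ^ 2 - C 3 * (X 0 * X 1) + C 2 * X 1 ^ 2 - C b * X 0 }

/-- Modulo the ideal of relations, `H` is a root of `Q`. -/
lemma aeval_H_elimPoly (a b : ℂ) :
    Polynomial.aeval (Ideal.Quotient.mk (relIdeal a b) (X 1)) (elimPoly a b) = 0 := by
  have key : Polynomial.aeval (X 1 : MvPolynomial (Fin 2) ℂ) (elimPoly a b) ∈ relIdeal a b := by
    rw [Ideal.mem_span_pair]
    -- With `D`, `N` as above, `D² f₂ = 2 Q + (D E + N - (3 H + b) D) f₁`.
    refine ⟨-C (1 / 2) * (X 0 * (X 1 ^ 2 + C (2 * a)) + C (2 * a) * (X 1 + C b)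
      - (3 * X 1 + C b) * (X 1 ^ 2 + C (2 * a))), C (1 / 2) * (X 1 ^ 2 + C (2 * a)) ^ 2, ?_⟩
    rw [elimPoly_aeval]
    apply MvPolynomial.funext
    intro x
    simp
    ring
  have := Ideal.Quotient.eq_zero_iff_mem.mpr key
  rw [← this]
  exact (Polynomial.aeval_algHom_apply (Ideal.Quotient.mkₐ ℂ (relIdeal a b)) (X 1) _)

lemma isCoprime_elimPoly_denom {a b : ℂ} (ha : a ≠ 0) (hab : b ^ 2 + 2 * a ≠ 0) :
    IsCoprime (Polynomial.X ^ 2 + Polynomial.C (2 * a)) (elimPoly a b) := by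
  refine (Polynomial.isCoprime_iff_aeval_ne_zero_of_isAlgClosed ℂ ℂ _ _).mpr ?_
  intro x
  by_contra! h
  obtain ⟨h1, h2⟩ := h
  refine denom_ne_zero ha hab (x := x) (by simpa [Polynomial.aeval_def] using h2) ?_
  simpa using h1

/-- Since `D(H)` is invertible modulo the ideal, the quotient is generated by `H`. -/
lemma exists_poly_H {a b : ℂ} (ha : a ≠ 0) (hab : b ^ 2 + 2 * a ≠ 0)
    (f : MvPolynomial (Fin 2) ℂ) :
    ∃ p : Polynomial ℂ, Ideal.Quotient.mk (relIdeal a b) f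
      = Polynomial.aeval (Ideal.Quotient.mk (relIdeal a b) (X 1)) p := by
  obtain ⟨u, v, huv⟩ := isCoprime_elimPoly_denom ha hab
  set π := Ideal.Quotient.mkₐ ℂ (relIdeal a b)
  set η := Ideal.Quotient.mk (relIdeal a b) (X 1) with hη
  set w : Polynomial ℂ := u * (Polynomial.C (2 * a) * (Polynomial.X + Polynomial.C b)) with hw
  have hu : Polynomial.aeval η u * (η ^ 2 + algebraMap ℂ _ (2 * a)) = 1 := by
    have h := congrArg (Polynomial.aeval η) huv
    simpa only [map_add, map_mul, aeval_H_elimPoly, mul_zero, add_zero, map_one, map_pow,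
      Polynomial.aeval_X, Polynomial.aeval_C, hη] using h
  have h1 : π (X 0 * X 1 ^ 2 + C (2 * a) * X 0 - C (2 * a) * X 1 - C (2 * a * b)) = 0 :=
    Ideal.Quotient.eq_zero_iff_mem.mpr (Ideal.subset_span (by simp))
  have hE : π (X 0) = Polynomial.aeval η w := by
    have hX : π (X 1) = η := rfl
    have hC : ∀ c : ℂ, π (C c) = algebraMap ℂ _ c := fun c => rfl
    simp only [map_add, map_sub, map_mul π, map_pow π, hX, hC] at h1
    rw [hw]
    simp only [map_mul, map_add, Polynomial.aeval_X, Polynomial.aeval_C] at h1 hu ⊢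
    linear_combination (-π (X 0)) * hu + Polynomial.aeval η u * h1
  refine ⟨MvPolynomial.aeval ![w, Polynomial.X] f, ?_⟩
  have : π = (Polynomial.aeval η).comp (MvPolynomial.aeval ![w, Polynomial.X]) := by
    apply MvPolynomial.algHom_ext
    intro i
    fin_cases i
    · simpa using hE
    · simp [hη, π]
  exact DFunLike.congr_fun this f

lemma quotient_equiv_of_separable {a b : ℂ} (ha : a ≠ 0) (hab : b ^ 2 + 2 * a ≠ 0)
    (hsep : (elimPoly a b).Separable) :
    Nonempty ((MvPolynomial (Fin 2) ℂ ⧸ relIdeal a b) ≃ₐ[ℂ] (Fin 6 → ℂ)) := by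
  classical
  have hmonic := elimPoly_monic a b
  have hcard : Fintype.card (elimPoly a b).roots.toFinset = 6 := by
    rw [Fintype.card_coe, Multiset.toFinset_card_of_nodup (Polynomial.nodup_roots hsep),
      IsAlgClosed.card_roots_eq_natDegree, elimPoly_natDegree]
  let enum := (Fintype.equivFinOfCardEq hcard).symm
  let h : Fin 6 → ℂ := fun i => (enum i : ℂ)
  have hinj : Function.Injective h := Subtype.val_injective.comp enum.injective
  have hroot : ∀ i, (elimPoly a b).eval (h i) = 0 := fun i =>
    (Polynomial.mem_roots'.mp (Multiset.mem_toFinset.mp (enum i).2)).2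
  let e : Fin 6 → ℂ := fun i => 2 * a * (h i + b) / (h i ^ 2 + 2 * a)
  have hrel := fun i => relations_of_root (denom_ne_zero ha hab (hroot i)) (hroot i)
  let Φ : MvPolynomial (Fin 2) ℂ →ₐ[ℂ] (Fin 6 → ℂ) :=
    AlgHom.pi fun i => MvPolynomial.aeval ![e i, h i]
  have hΦ : ∀ f i, Φ f i = MvPolynomial.aeval ![e i, h i] f := fun f i => rfl
  have hΦH : ∀ (p : Polynomial ℂ) i, Φ (Polynomial.aeval (X 1) p) i = p.eval (h i) := by
    intro p i
    rw [hΦ, ← Polynomial.aeval_algHom_apply]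
    simp [Polynomial.aeval_def, Polynomial.eval₂_eq_eval_map]
  have hsurj : Function.Surjective Φ := by
    intro v
    refine ⟨Polynomial.aeval (X 1) (Lagrange.interpolate Finset.univ h v), ?_⟩
    funext i
    rw [hΦH, Lagrange.eval_interpolate_at_node v hinj.injOn (Finset.mem_univ i)]
  have hle : relIdeal a b ≤ RingHom.ker Φ := by
    rw [Ideal.span_le]
    rintro f (rfl | rfl)
    · rw [SetLike.mem_coe, RingHom.mem_ker]
      funext i
      rw [hΦ]
      simpa using (hrel i).1
    · rw [SetLike.mem_coe, RingHom.mem_ker]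
      funext i
      rw [hΦ]
      simpa using (hrel i).2
  have hge : RingHom.ker Φ ≤ relIdeal a b := by
    intro f hf
    obtain ⟨p, hp⟩ := exists_poly_H ha hab f
    have hp' : Ideal.Quotient.mk (relIdeal a b) f
        = Ideal.Quotient.mk (relIdeal a b) (Polynomial.aeval (X 1) p) := by
      rw [hp]
      exact Polynomial.aeval_algHom_apply (Ideal.Quotient.mkₐ ℂ (relIdeal a b)) (X 1) p
    have hker := hle (Ideal.Quotient.eq.mp hp')
    rw [RingHom.mem_ker, map_sub, RingHom.mem_ker.mp hf, zero_sub, neg_eq_zero] at hker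
    have hdvd : elimPoly a b ∣ p := by
      -- The remainder of `p` has degree less than six and vanishes at the six roots.
      rw [← Polynomial.modByMonic_eq_zero_iff_dvd hmonic]
      refine Polynomial.eq_zero_of_natDegree_lt_card_of_eval_eq_zero _ hinj (fun i => ?_) ?_
      · have h0 := congrArg (Polynomial.eval (h i)) (Polynomial.modByMonic_add_div p (elimPoly a b))
        rw [Polynomial.eval_add, Polynomial.eval_mul, hroot i, zero_mul, add_zero] at h0
        rw [h0, ← hΦH, hker, Pi.zero_apply]
      · have := Polynomial.natDegree_modByMonic_lt p hmonic
          (fun h1 => by simpa [h1] using elimPoly_natDegree a b)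
        simpa [elimPoly_natDegree] using this
    obtain ⟨q, rfl⟩ := hdvd
    rw [← Ideal.Quotient.eq_zero_iff_mem, hp, map_mul, aeval_H_elimPoly, zero_mul]
  exact ⟨(Ideal.quotientEquivAlgOfEq ℂ (le_antisymm hle hge)).trans
    (Ideal.quotientKerAlgEquivOfSurjective hsurj)⟩

/-- Small quantum cohomology of the Fano threefold `M230` (the blow-up of `ℙ³` along a conic),
specialized at `(q0, q1)`: for generic `(q0, q1) ∈ ℂ²` (i.e. on the nonempty
Zariski-open set where a nonzero polynomial `g` does not vanish) the quotient ring is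
isomorphic as a `ℂ`-algebra to `ℂ⁶`, hence a semisimple commutative `ℂ`-algebra of
`ℂ`-dimension 6.  Here `E = X 0` and `H = X 1`. -/
theorem qh_M2_30_generically_semisimple :
    ∃ g : MvPolynomial (Fin 2) ℂ, g ≠ 0 ∧
      ∀ q0 q1 : ℂ, eval ![q0, q1] g ≠ 0 →
        Nonempty
          ((MvPolynomial (Fin 2) ℂ ⧸ Ideal.span
            { X 0 * X 1 ^ 2 + C (2 * q0) * X 0 - C (2 * q0) * X 1 - C (2 * q0 * q1),
              X 0 ^ 2 - C 3 * (X 0 * X 1) + C 2 * X 1 ^ 2 - C q1 * X 0 })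
          ≃ₐ[ℂ] (Fin 6 → ℂ)) := by
  refine ⟨X 0 * (X 1 ^ 2 + 2 * X 0) * elimRes, ?_, fun q0 q1 hg => ?_⟩
  · intro h0
    have h := (eval_elimRes_ne_zero_iff (-1) (-1)).mpr elimPoly_separable_neg_one
    have h1 := congrArg (eval ![(-1 : ℂ), -1]) h0
    simp only [map_mul, map_zero, mul_eq_zero, h, or_false] at h1
    norm_num at h1
  · simp only [map_mul, ne_eq, mul_eq_zero, not_or] at hg
    obtain ⟨⟨ha, hab⟩, hr⟩ := hg
    exact quotient_equiv_of_separable (by simpa using ha) (by simpa using hab)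
      ((eval_elimRes_ne_zero_iff q0 q1).mp hr)
end

section
/- For generic (q0, q1) ∈ ℂ² — i.e., for all (q0, q1) in some nonempty Zariski-open subset of ℂ² — the quotient ring ℂ[E,H] / (EH² − q0, E² − 2·E·H + H² − E·q1) is a semisimple commutative ℂ-algebra of ℂ-dimension 6, i.e., it is isomorphic as a ℂ-algebra to ℂ⁶. (This ring is the specialization at (q0,q1) of the small quantum cohomology ring of the Fano threefold M²₃₃, the blow-up of ℙ³ along a line.) -/
/-!
On the locus `q0 * q1 * (16 * q1 ^ 3 - 729 * q0) ≠ 0` the quotient ring is generated by `H` alone: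
multiplying the second relation by `H ^ 4` and using `E * H ^ 2 = q0` shows that `H` is a root of
the sextic `f = (T ^ 3 - q0) ^ 2 - q0 * q1 * T ^ 2`, and then `E = q1 + 2 * H - H ^ 4 / q0`
(`relations_sextic`, `relations_E`). The sextic is separable: a multiple root `t` would satisfy
`t ^ 3 = -q0 / 2` and `t = -2 * q1 / 9`, which forces `16 * q1 ^ 3 = 729 * q0`
(`exists_roots`). Its six distinct roots `t` give the six points `(q0 / t ^ 2, t)` of the scheme,
and evaluation at these points is the isomorphism: it is surjective by Lagrange interpolation, and
injective because every class is represented by a polynomial in `H` of degree less than `6`.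
-/

open MvPolynomial

set_option maxHeartbeats 1000000

/-- The polynomial `(T ^ 3 - q0) ^ 2 - q0 * q1 * T ^ 2` satisfied by the class of `H`. -/
noncomputable def sextic (q0 q1 : ℂ) : Polynomial ℂ :=
  (Polynomial.X ^ 3 - Polynomial.C q0) ^ 2 - Polynomial.C (q0 * q1) * Polynomial.X ^ 2

lemma sextic_natDegree (q0 q1 : ℂ) : (sextic q0 q1).natDegree = 6 := by
  unfold sextic; compute_degree!

lemma sextic_monic (q0 q1 : ℂ) : (sextic q0 q1).Monic := by
  rw [Polynomial.Monic, Polynomial.leadingCoeff, sextic_natDegree]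
  unfold sextic; compute_degree!

lemma relations_sextic {A : Type*} [CommRing A] {E H a b : A} (h1 : E * H ^ 2 = a)
    (h2 : E ^ 2 - 2 * (E * H) + H ^ 2 - b * E = 0) :
    (H ^ 3 - a) ^ 2 - a * b * H ^ 2 = 0 := by
  subst h1
  linear_combination H ^ 4 * h2

lemma relations_E {A : Type*} [CommRing A] {E H a b c : A} (hc : c * a = 1)
    (h1 : E * H ^ 2 = a) (h2 : E ^ 2 - 2 * (E * H) + H ^ 2 - b * E = 0) :
    E = b + 2 * H - c * H ^ 4 := by
  have hf := relations_sextic h1 h2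
  -- `E * hf` expresses `a ^ 2 * E` as `a` times a polynomial in `H`.
  linear_combination c ^ 2 * E * hf - c ^ 2 * (H ^ 4 - 2 * a * H - a * b) * h1
    - (E * (c * a + 1) - (b + 2 * H) * (c * a + 1) + c * H ^ 4) * hc

/-- Generically the sextic has six distinct roots, all nonzero. -/
lemma exists_roots {q0 q1 : ℂ} (h0 : q0 ≠ 0) (h1 : q1 ≠ 0) (hd : 16 * q1 ^ 3 - 729 * q0 ≠ 0) :
    ∃ t : Fin 6 → ℂ, Function.Injective t ∧
      ∀ i, t i ≠ 0 ∧ (t i ^ 3 - q0) ^ 2 - q0 * q1 * t i ^ 2 = 0 := by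
  have hne : sextic q0 q1 ≠ 0 := (sextic_monic q0 q1).ne_zero
  have hroot : ∀ x, (sextic q0 q1).eval x = (x ^ 3 - q0) ^ 2 - q0 * q1 * x ^ 2 := by
    intro x; simp [sextic]
  have hzero : ∀ x : ℂ, (x ^ 3 - q0) ^ 2 - q0 * q1 * x ^ 2 = 0 → x ≠ 0 := by
    rintro x hx rfl
    exact h0 (by simpa using hx)
  have hnodup : (sextic q0 q1).roots.Nodup := by
    rw [Multiset.nodup_iff_count_le_one]
    intro x
    rw [Polynomial.count_roots]
    by_contra! hlt
    obtain ⟨hx, hx'⟩ := (Polynomial.one_lt_rootMultiplicity_iff_isRoot hne).1 hlt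
    rw [Polynomial.IsRoot, hroot] at hx
    have hx0 := hzero x hx
    have hder : 3 * x * (x ^ 3 - q0) = q0 * q1 := by
      have : 2 * x * (3 * x * (x ^ 3 - q0) - q0 * q1) = 0 := by
        rw [← hx']
        simp [sextic, Polynomial.derivative_pow]
        ring
      have := (mul_eq_zero.1 this).resolve_left (by simpa using hx0)
      linear_combination this
    have hu : x ^ 3 - q0 ≠ 0 := by
      intro hu
      rw [hu, mul_zero] at hder
      exact mul_ne_zero h0 h1 hder.symm
    have hcube : q0 = -2 * x ^ 3 := by
      apply mul_left_cancel₀ hu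
      linear_combination -hx + x ^ 2 * hder
    have hlin : 2 * q1 = -9 * x := by
      apply mul_left_cancel₀ h0
      linear_combination -2 * hder + 3 * x * hcube
    apply hd
    linear_combination 2 * ((2 * q1) ^ 2 - 9 * x * (2 * q1) + 81 * x ^ 2) * hlin - 729 * hcube
  have hcard : Fintype.card {x // x ∈ (sextic q0 q1).roots.toFinset} = Fintype.card (Fin 6) := by
    rw [Fintype.card_coe, Multiset.toFinset_card_of_nodup hnodup, Fintype.card_fin,
      ← sextic_natDegree q0 q1]
    exact ((IsAlgClosed.splits _).natDegree_eq_card_roots).symm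
  let e := (Fintype.equivOfCardEq hcard).symm
  refine ⟨fun i => e i, Subtype.val_injective.comp e.injective, fun i => ?_⟩
  have hi := (e i).2
  rw [Multiset.mem_toFinset, Polynomial.mem_roots hne, Polynomial.IsRoot, hroot] at hi
  exact ⟨hzero _ hi, hi⟩

/-- Small quantum cohomology of the Fano threefold `M233` (the blow-up of `ℙ³` along a line),
specialized at `(q0, q1)`: for generic `(q0, q1) ∈ ℂ²` (i.e. on the nonempty
Zariski-open set where a nonzero polynomial `g` does not vanish) the quotient ring is
isomorphic as a `ℂ`-algebra to `ℂ⁶`, hence a semisimple commutative `ℂ`-algebra of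
`ℂ`-dimension 6.  Here `E = X 0` and `H = X 1`. -/
theorem qh_M2_33_generically_semisimple :
    ∃ g : MvPolynomial (Fin 2) ℂ, g ≠ 0 ∧
      ∀ q0 q1 : ℂ, eval ![q0, q1] g ≠ 0 →
        Nonempty
          ((MvPolynomial (Fin 2) ℂ ⧸ Ideal.span
            { X 0 * X 1 ^ 2 - C q0,
              X 0 ^ 2 - C 2 * (X 0 * X 1) + X 1 ^ 2 - C q1 * X 0 })
          ≃ₐ[ℂ] (Fin 6 → ℂ)) := by
  refine ⟨X 0 * X 1 * (C 16 * X 1 ^ 3 - C 729 * X 0), ?_, ?_⟩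
  · intro h
    have := congrArg (eval ![(1 : ℂ), 1]) h
    norm_num at this
  intro q0 q1 hg
  simp only [map_mul, map_sub, map_pow, eval_X, eval_C, Matrix.cons_val_zero,
    Matrix.cons_val_one, mul_ne_zero_iff] at hg
  obtain ⟨⟨h0, h1⟩, hd⟩ := hg
  obtain ⟨t, ht, htr⟩ := exists_roots h0 h1 hd
  set I : Ideal (MvPolynomial (Fin 2) ℂ) := Ideal.span
    { X 0 * X 1 ^ 2 - C q0, X 0 ^ 2 - C 2 * (X 0 * X 1) + X 1 ^ 2 - C q1 * X 0 } with hI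
  let A := MvPolynomial (Fin 2) ℂ ⧸ I
  let ev : MvPolynomial (Fin 2) ℂ →ₐ[ℂ] (Fin 6 → ℂ) := aeval ![fun i => q0 / t i ^ 2, t]
  have hev : ∀ p ∈ I, ev p = 0 := by
    suffices I ≤ RingHom.ker ev from fun p hp => this hp
    rw [hI, Ideal.span_le]
    rintro p (rfl | rfl)
    · ext i
      have := (htr i).1
      simp [ev]
      field_simp
      ring
    · ext i
      obtain ⟨hi, hr⟩ := htr i
      simp [ev]
      field_simp
      linear_combination hr
  let φ : A →ₐ[ℂ] (Fin 6 → ℂ) := Ideal.Quotient.liftₐ I ev hev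
  let E : A := Ideal.Quotient.mkₐ ℂ I (X 0)
  let H : A := Ideal.Quotient.mkₐ ℂ I (X 1)
  let ψ : Polynomial ℂ →ₐ[ℂ] A := Polynomial.aeval H
  have rel1 : E * H ^ 2 = algebraMap ℂ A q0 := by
    have : Ideal.Quotient.mkₐ ℂ I (X 0 * X 1 ^ 2 - algebraMap ℂ _ q0) = 0 :=
      Ideal.Quotient.eq_zero_iff_mem.2 (Ideal.subset_span (by simp [algebraMap_eq]))
    rw [map_sub, AlgHom.commutes, map_mul, map_pow] at this
    exact sub_eq_zero.1 this
  have rel2 : E ^ 2 - 2 * (E * H) + H ^ 2 - algebraMap ℂ A q1 * E = 0 := by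
    have : Ideal.Quotient.mkₐ ℂ I
        (X 0 ^ 2 - 2 * (X 0 * X 1) + X 1 ^ 2 - algebraMap ℂ _ q1 * X 0) = 0 :=
      Ideal.Quotient.eq_zero_iff_mem.2 (Ideal.subset_span (by
        right; rw [algebraMap_eq, ← map_ofNat C 2]; rfl))
    simpa only [map_sub, map_add, map_mul, map_pow, AlgHom.commutes, map_ofNat] using this
  have hψf : ψ (sextic q0 q1) = 0 := by
    simpa [ψ, sextic] using relations_sextic rel1 rel2
  have hψ : Function.Surjective ψ := by
    have hE : E = ψ (Polynomial.C q1 + Polynomial.C 2 * Polynomial.X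
        - Polynomial.C q0⁻¹ * Polynomial.X ^ 4) := by
      have hc : algebraMap ℂ A q0⁻¹ * algebraMap ℂ A q0 = 1 := by
        rw [← map_mul, inv_mul_cancel₀ h0, map_one]
      have h2 : algebraMap ℂ A 2 = 2 := map_ofNat _ 2
      simpa [ψ, h2] using relations_E hc rel1 rel2
    intro a
    obtain ⟨p, rfl⟩ := Ideal.Quotient.mkₐ_surjective ℂ I a
    induction p using MvPolynomial.induction_on with
    | C c => exact ⟨Polynomial.C c, by
        rw [← algebraMap_eq, AlgHom.commutes, ← Polynomial.algebraMap_eq, AlgHom.commutes]⟩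
    | add p q hp hq =>
      obtain ⟨r, hr⟩ := hp
      obtain ⟨s, hs⟩ := hq
      exact ⟨r + s, by rw [map_add, map_add, hr, hs]⟩
    | mul_X p i hp =>
      obtain ⟨r, hr⟩ := hp
      have : ∃ s, ψ s = Ideal.Quotient.mkₐ ℂ I (X i) := by
        fin_cases i
        · exact ⟨_, hE.symm⟩
        · exact ⟨Polynomial.X, by simp [ψ, H]⟩
      obtain ⟨s, hs⟩ := this
      exact ⟨r * s, by rw [map_mul, map_mul, hr, hs]⟩
  have hφψ : ∀ r i, φ (ψ r) i = r.eval (t i) := by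
    intro r i
    have hH : φ H = t := by
      change ev (X 1) = t
      simp [ev]
    rw [show φ (ψ r) = Polynomial.aeval t r by
      rw [← hH]; exact (Polynomial.aeval_algHom_apply φ H r).symm]
    rw [← Polynomial.coe_aeval_eq_eval]
    exact (Polynomial.aeval_algHom_apply (Pi.evalAlgHom ℂ (fun _ : Fin 6 => ℂ) i) t r).symm
  refine ⟨AlgEquiv.ofBijective φ ⟨?_, ?_⟩⟩
  · rw [injective_iff_map_eq_zero]
    intro a ha
    obtain ⟨r, rfl⟩ := hψ a
    have hm := sextic_monic q0 q1
    -- The remainder of `r` modulo the sextic has the same image under `ψ`, hence vanishes at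
    -- all six roots.
    have hmod : ψ (r %ₘ sextic q0 q1) = ψ r := by
      conv_rhs => rw [← Polynomial.modByMonic_add_div r (sextic q0 q1), map_add, map_mul, hψf,
        zero_mul, add_zero]
    have hz : r %ₘ sextic q0 q1 = 0 := by
      refine Polynomial.eq_zero_of_natDegree_lt_card_of_eval_eq_zero _ ht (fun i => ?_) ?_
      · rw [← hφψ, hmod, ha, Pi.zero_apply]
      · rw [Fintype.card_fin, ← sextic_natDegree q0 q1]
        refine Polynomial.natDegree_modByMonic_lt r hm fun h => ?_
        have := sextic_natDegree q0 q1
        simp [h] at this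
    rw [← hmod, hz, map_zero]
  · intro v
    refine ⟨ψ (Lagrange.interpolate Finset.univ t v), ?_⟩
    ext i
    rw [hφψ]
    exact Lagrange.eval_interpolate_at_node v ht.injOn (Finset.mem_univ i)
end

section
/- For generic (q0, q1, q2) ∈ ℂ³ — i.e., for all (q0, q1, q2) in some nonempty Zariski-open subset of ℂ³ — the quotient ring ℂ[E1,E2,H] / (E1·E2 + 2·E1·q0 + 2·E2·q0 − 4·H·q0 − 4·q0², E1² − 2·E1·H + H² − E1·q1 − 2·q0·q1, E2² − 2·E2·H + H² − E2·q2 − 2·q0·q2) is a semisimple commutative ℂ-algebra of ℂ-dimension 8, i.e., it is isomorphic as a ℂ-algebra to ℂ⁸. (This ring is the specialization at (q0,q1,q2) of the small quantum cohomology ring of the Fano threefold M³₁₀, the blow-up of the quadric Q³ along two disjoint conics.) -/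
open MvPolynomial

set_option maxHeartbeats 1000000

/-!
Put `b = 4 q0`, `x = E1 + 2 q0`, `y = E2 + 2 q0`, `h = H + 2 q0`. The three relations become
`x y = b h`, `(x - h)² = q1 x`, `(y - h)² = q2 y`. For all parameters these force the quotient to be
spanned by the eight elements `1, x, y, h, x h, y h, h², h³` (`finrank_le_eight`).

When `b ≠ 0`, write `x = b u`, `y = b v`, `h = b u v`, `p = q1 / b`, `r = q2 / b`: the zero locus is
given by `u (u (1 - v)² - p) = 0` and `v (v (1 - u)² - r) = 0`. Besides `(0,0)`, `(0,r)`, `(p,0)`, its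
points are `u = p / w²`, `v = 1 - w` for the roots `w` of the quintic `(w - 1)(w² - p)² + r w⁴`.
When `p r ≠ 0`, a double root of that quintic satisfies `w³ + 3 p w - 4 p = 0` and
`16 (1 - w)³ = r (4 - 3 w)²`, so that the resultant of these two cubics, a nonzero polynomial in `p, r`, vanishes. Generically there are
therefore eight distinct points (`exists_eight_solutions`). Evaluation at eight distinct points is
surjective onto `ℂ⁸` because distinct characters are linearly independent, and hence bijective because
the quotient has dimension at most eight (`nonempty_algEquiv_of_injective`).
-/

/-! ### Split algebras and characters -/

/-- A commutative algebra of dimension at most `n` with `n` distinct characters is `ℂⁿ`. -/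
lemma nonempty_algEquiv_of_injective {A : Type*} [CommRing A] [Algebra ℂ A] [Module.Finite ℂ A]
    {n : ℕ} (hA : Module.finrank ℂ A ≤ n) (φ : Fin n → (A →ₐ[ℂ] ℂ))
    (hφ : Function.Injective φ) : Nonempty (A ≃ₐ[ℂ] (Fin n → ℂ)) := by
  have hli : LinearIndependent ℂ (fun i => (φ i).toLinearMap) :=
    (linearIndependent_algHom_toLinearMap ℂ A ℂ).comp _ hφ
  set Φ : A →ₐ[ℂ] (Fin n → ℂ) := AlgHom.pi φ with hΦ
  have hsurj : Function.Surjective Φ.toLinearMap := by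
    rw [← LinearMap.range_eq_top]
    by_contra hne
    -- A functional vanishing on a proper range is a linear relation between the characters.
    obtain ⟨f, hf0, hf⟩ := Submodule.exists_le_ker_of_lt_top _ (lt_top_iff_ne_top.2 hne)
    apply hf0
    have hrel : ∑ i, f (Pi.single i 1) • (φ i).toLinearMap = 0 := by
      ext z
      have hz : f (Φ z) = 0 := hf ⟨z, rfl⟩
      rw [pi_eq_sum_univ' (Φ z), map_sum] at hz
      simp only [map_smul, smul_eq_mul] at hz
      simp only [LinearMap.sum_apply, LinearMap.smul_apply, smul_eq_mul, LinearMap.zero_apply]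
      rw [← hz]
      refine Finset.sum_congr rfl fun i _ => ?_
      rw [mul_comm]
      congr 1
    have h0 := Fintype.linearIndependent_iff.1 hli _ hrel
    refine LinearMap.pi_ext' fun i => ?_
    ext
    simpa using h0 i
  have hfr : Module.finrank ℂ A = Module.finrank ℂ (Fin n → ℂ) := by
    apply le_antisymm
    · simpa using hA
    · exact LinearMap.finrank_le_finrank_of_surjective hsurj
  exact ⟨AlgEquiv.ofBijective Φ
    ⟨(LinearMap.injective_iff_surjective_of_finrank_eq_finrank hfr).2 hsurj, hsurj⟩⟩

/-! ### The dimension bound -/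

/-- The span of `1, x, y, h, x h, y h, h², h³` is stable under multiplication by `x`, `y` and `h`:
the relations express `x h²`, `y h²` and `h⁴` in lower terms. -/
lemma finrank_le_eight {A : Type*} [CommRing A] [Algebra ℂ A] (x y h : A) (b p r : ℂ)
    (hxy : x * y = algebraMap ℂ A b * h)
    (hx : (x - h) ^ 2 = algebraMap ℂ A p * x)
    (hy : (y - h) ^ 2 = algebraMap ℂ A r * y)
    (hgen : Algebra.adjoin ℂ {x, y, h} = ⊤) :
    Module.Finite ℂ A ∧ Module.finrank ℂ A ≤ 8 := by
  set e : Fin 8 → A := ![1, x, y, h, x * h, y * h, h ^ 2, h ^ 3] with he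
  set S := Submodule.span ℂ (Set.range e) with hS
  have mk (z : A) (c : Fin 8 → ℂ) (hz : z = algebraMap ℂ A (c 0) + algebraMap ℂ A (c 1) * x
      + algebraMap ℂ A (c 2) * y + algebraMap ℂ A (c 3) * h + algebraMap ℂ A (c 4) * (x * h)
      + algebraMap ℂ A (c 5) * (y * h) + algebraMap ℂ A (c 6) * h ^ 2
      + algebraMap ℂ A (c 7) * h ^ 3) : z ∈ S := by
    rw [hS, Submodule.mem_span_range_iff_exists_fun]
    refine ⟨c, ?_⟩
    rw [hz, Fin.sum_univ_eight]
    simp [he, Algebra.smul_def]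
  set B := algebraMap ℂ A b with hB
  set P := algebraMap ℂ A p with hP
  set R := algebraMap ℂ A r with hR
  have k2 : algebraMap ℂ A 2 = 2 := map_ofNat _ 2
  have k4 : algebraMap ℂ A 4 = 4 := map_ofNat _ 4
  have k7 : algebraMap ℂ A 7 = 7 := map_ofNat _ 7
  have hyh : y * h ^ 2 = 2 * B * h ^ 2 + P * B * h - B * (x * h) := by
    linear_combination y * hx + (2 * h + P - x) * hxy
  have hxh : x * h ^ 2 = 2 * B * h ^ 2 + R * B * h - B * (y * h) := by
    linear_combination x * hy + (2 * h + R - y) * hxy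
  have hxh3 : x * h ^ 3 = 2 * B * h ^ 3 + R * B * h ^ 2
      - B * (2 * B * h ^ 2 + P * B * h - B * (x * h)) := by
    linear_combination h * hxh - B * hyh
  have hyh3 : y * h ^ 3 = 2 * B * h ^ 3 + P * B * h ^ 2
      - B * (2 * B * h ^ 2 + R * B * h - B * (y * h)) := by
    linear_combination h * hyh - B * hxh
  have hh4 : h ^ 4 = 4 * B * h ^ 3 + (2 * R * B - 7 * B ^ 2 + 2 * P * B) * h ^ 2
      + (P * R * B - 2 * P * B ^ 2 - 2 * R * B ^ 2) * h + (2 * B ^ 2 - R * B) * (x * h)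
      + (2 * B ^ 2 - P * B) * (y * h) := by
    linear_combination h ^ 2 * hx + 2 * hxh3 + (P - x - 2 * B) * hxh + B * h * hxy
  have hSx : ∀ z ∈ S, x * z ∈ S := by
    intro z hz
    induction hz using Submodule.span_induction with
    | zero => simp
    | add u v _ _ hu hv => rw [mul_add]; exact S.add_mem hu hv
    | smul c u _ hu => rw [mul_smul_comm]; exact S.smul_mem c hu
    | mem u hu =>
      obtain ⟨i, rfl⟩ := hu
      fin_cases i
      · refine mk _ ![0, 1, 0, 0, 0, 0, 0, 0] ?_
        simp [he]
      · refine mk _ ![0, p, 0, 0, 2, 0, -1, 0] ?_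
        simp [he, k2, ← hP]
        linear_combination hx
      · refine mk _ ![0, 0, 0, b, 0, 0, 0, 0] ?_
        simp [he, ← hB]
        linear_combination hxy
      · refine mk _ ![0, 0, 0, 0, 1, 0, 0, 0] ?_
        simp [he]
      · refine mk _ ![0, 0, 0, 2 * r * b, p, -2 * b, 4 * b, -1] ?_
        simp [he, k2, k4, ← hB, ← hP, ← hR]
        linear_combination h * hx + 2 * hxh
      · refine mk _ ![0, 0, 0, 0, 0, 0, b, 0] ?_
        simp [he, ← hB]
        linear_combination h * hxy
      · refine mk _ ![0, 0, 0, r * b, 0, -b, 2 * b, 0] ?_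
        simp [he, k2, ← hB, ← hR]
        linear_combination hxh
      · refine mk _ ![0, 0, 0, -p * b ^ 2, b ^ 2, 0, r * b - 2 * b ^ 2, 2 * b] ?_
        simp [he, k2, ← hB, ← hP, ← hR]
        linear_combination hxh3
  have hSy : ∀ z ∈ S, y * z ∈ S := by
    intro z hz
    induction hz using Submodule.span_induction with
    | zero => simp
    | add u v _ _ hu hv => rw [mul_add]; exact S.add_mem hu hv
    | smul c u _ hu => rw [mul_smul_comm]; exact S.smul_mem c hu
    | mem u hu =>
      obtain ⟨i, rfl⟩ := hu
      fin_cases i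
      · refine mk _ ![0, 0, 1, 0, 0, 0, 0, 0] ?_
        simp [he]
      · refine mk _ ![0, 0, 0, b, 0, 0, 0, 0] ?_
        simp [he, ← hB]
        linear_combination hxy
      · refine mk _ ![0, 0, r, 0, 0, 2, -1, 0] ?_
        simp [he, k2, ← hR]
        linear_combination hy
      · refine mk _ ![0, 0, 0, 0, 0, 1, 0, 0] ?_
        simp [he]
      · refine mk _ ![0, 0, 0, 0, 0, 0, b, 0] ?_
        simp [he, ← hB]
        linear_combination h * hxy
      · refine mk _ ![0, 0, 0, 2 * p * b, -2 * b, r, 4 * b, -1] ?_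
        simp [he, k2, k4, ← hB, ← hP, ← hR]
        linear_combination h * hy + 2 * hyh
      · refine mk _ ![0, 0, 0, p * b, -b, 0, 2 * b, 0] ?_
        simp [he, k2, ← hB, ← hP]
        linear_combination hyh
      · refine mk _ ![0, 0, 0, -r * b ^ 2, 0, b ^ 2, p * b - 2 * b ^ 2, 2 * b] ?_
        simp [he, k2, ← hB, ← hP, ← hR]
        linear_combination hyh3
  have hSh : ∀ z ∈ S, h * z ∈ S := by
    intro z hz
    induction hz using Submodule.span_induction with
    | zero => simp
    | add u v _ _ hu hv => rw [mul_add]; exact S.add_mem hu hv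
    | smul c u _ hu => rw [mul_smul_comm]; exact S.smul_mem c hu
    | mem u hu =>
      obtain ⟨i, rfl⟩ := hu
      fin_cases i
      · refine mk _ ![0, 0, 0, 1, 0, 0, 0, 0] ?_
        simp [he]
      · refine mk _ ![0, 0, 0, 0, 1, 0, 0, 0] ?_
        simp [he, mul_comm]
      · refine mk _ ![0, 0, 0, 0, 0, 1, 0, 0] ?_
        simp [he, mul_comm]
      · refine mk _ ![0, 0, 0, 0, 0, 0, 1, 0] ?_
        simp [he, sq]
      · refine mk _ ![0, 0, 0, r * b, 0, -b, 2 * b, 0] ?_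
        simp [he, k2, ← hB, ← hR]
        linear_combination hxh
      · refine mk _ ![0, 0, 0, p * b, -b, 0, 2 * b, 0] ?_
        simp [he, k2, ← hB, ← hP]
        linear_combination hyh
      · refine mk _ ![0, 0, 0, 0, 0, 0, 0, 1] ?_
        simp [he]
        ring
      · refine mk _ ![0, 0, 0, p * r * b - 2 * p * b ^ 2 - 2 * r * b ^ 2, 2 * b ^ 2 - r * b,
          2 * b ^ 2 - p * b, 2 * r * b - 7 * b ^ 2 + 2 * p * b, 4 * b] ?_
        simp [he, k2, k4, k7, ← hB, ← hP, ← hR]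
        linear_combination hh4
  have h1 : (1 : A) ∈ S := Submodule.subset_span ⟨0, rfl⟩
  have hall : ∀ a : A, ∀ z ∈ S, a * z ∈ S := by
    intro a
    have ha : a ∈ Algebra.adjoin ℂ {x, y, h} := hgen ▸ Algebra.mem_top
    induction ha using Algebra.adjoin_induction with
    | mem u hu =>
      rcases hu with rfl | rfl | rfl
      exacts [hSx, hSy, hSh]
    | algebraMap c => intro z hz; rw [← Algebra.smul_def]; exact S.smul_mem c hz
    | add u v _ _ hu hv =>
      intro z hz; rw [add_mul]; exact S.add_mem (hu z hz) (hv z hz)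
    | mul u v _ _ hu hv => intro z hz; rw [mul_assoc]; exact hu _ (hv z hz)
  have htop : Submodule.span ℂ (Set.range e) = ⊤ :=
    eq_top_iff.2 fun a _ => by simpa using hall a 1 h1
  refine ⟨⟨htop ▸ Submodule.fg_span (Set.finite_range e)⟩, ?_⟩
  have hcard := finrank_range_le_card (R := ℂ) e
  rwa [Set.finrank, htop, finrank_top, Fintype.card_fin] at hcard

/-! ### The eight points -/

/-- The left side of `hD` is, up to a nonzero constant, the resultant of `w³ + 3 p w - 4 p` and
`16 (1 - w)³ - r (4 - 3 w)²`; `hD` makes the five roots of the quintic distinct. -/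
lemma exists_eight_solutions (p r : ℂ) (hp : p ≠ 0) (hr : r ≠ 0)
    (hD : 256 - 768 * (p + r) + 768 * (p ^ 2 + r ^ 2) - 256 * (p ^ 3 + r ^ 3) - 2784 * (p * r)
      + 96 * (p * r * (p + r)) - 27 * (p ^ 2 * r ^ 2) ≠ 0) :
    ∃ s : Fin 8 → ℂ × ℂ, Function.Injective s ∧ ∀ i,
      (s i).1 * ((s i).1 * (1 - (s i).2) ^ 2 - p) = 0 ∧
      (s i).2 * ((s i).2 * (1 - (s i).1) ^ 2 - r) = 0 := by
  classical
  set Q : Polynomial ℂ := (Polynomial.X - 1) * (Polynomial.X ^ 2 - Polynomial.C p) ^ 2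
    + Polynomial.C r * Polynomial.X ^ 4 with hQ
  have hQ' : Q = Polynomial.X ^ 5 + Polynomial.C (r - 1) * Polynomial.X ^ 4
      + Polynomial.C (-2 * p) * Polynomial.X ^ 3 + Polynomial.C (2 * p) * Polynomial.X ^ 2
      + Polynomial.C (p ^ 2) * Polynomial.X + Polynomial.C (-p ^ 2) := by
    rw [hQ]
    simp only [map_sub, map_mul, map_neg, map_one, map_ofNat, map_pow]
    ring
  have hdeg : Q.natDegree = 5 := by
    rw [hQ']
    compute_degree!
  have hQ0 : Q ≠ 0 := by
    intro h0
    rw [h0] at hdeg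
    simp at hdeg
  have hroot (w : ℂ) (hw : Q.IsRoot w) : (w - 1) * (w ^ 2 - p) ^ 2 + r * w ^ 4 = 0 := by
    simpa [hQ, Polynomial.IsRoot] using hw
  have hw0 (w : ℂ) (hw : Q.IsRoot w) : w ≠ 0 := by
    rintro rfl
    have := hroot 0 hw
    simp [hp] at this
  have hw1 (w : ℂ) (hw : Q.IsRoot w) : 1 - w ≠ 0 := by
    intro h1
    have := hroot w hw
    obtain rfl : w = 1 := by linear_combination -h1
    simp [hr] at this
  have hnodup : Q.roots.Nodup := by
    rw [Multiset.nodup_iff_count_le_one]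
    intro w
    rw [Polynomial.count_roots]
    by_contra! hlt
    obtain ⟨h1, h2⟩ := (Polynomial.one_lt_rootMultiplicity_iff_isRoot hQ0).1 hlt
    have hwne := hw0 w h1
    replace h1 := hroot w h1
    replace h2 : (w ^ 2 - p) ^ 2 + 4 * w * (w - 1) * (w ^ 2 - p) + 4 * r * w ^ 3 = 0 := by
      have h3 : Polynomial.eval w Q.derivative = 0 := h2
      simp [hQ', Polynomial.derivative_pow] at h3
      linear_combination h3
    have hne : w ^ 2 - p ≠ 0 := by
      intro h3
      rw [h3] at h1
      simp [hr, hwne] at h1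
    -- `w Q' - 4 Q` factors as `(w² - p) (w³ + 3 p w - 4 p)`.
    have hA : w ^ 3 + 3 * p * w - 4 * p = 0 := by
      apply (mul_eq_zero.1 _).resolve_left hne
      linear_combination w * h2 - 4 * h1
    have hB : 16 * (1 - w) ^ 3 - r * (4 - 3 * w) ^ 2 = 0 := by
      apply (mul_eq_zero.1 _).resolve_left (pow_ne_zero 2 hp)
      have e1 : w * (w ^ 2 - p) = 4 * p * (1 - w) := by linear_combination hA
      have e2 : w ^ 3 = p * (4 - 3 * w) := by linear_combination hA
      linear_combination (-w ^ 2) * h1 - (1 - w) * (w * (w ^ 2 - p) + 4 * p * (1 - w)) * e1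
        + r * (w ^ 3 + p * (4 - 3 * w)) * e2
    -- `hC` reduces the second cubic modulo the first; the coefficients of the last
    -- step are the cofactors of the last column of the Sylvester matrix of the pair.
    have hC : (48 - 9 * r) * w ^ 2 + (-48 + 24 * r + 48 * p) * w + (16 - 16 * r - 64 * p) = 0 := by
      linear_combination hB + 16 * hA
    apply hD
    linear_combination (1 / 16 : ℂ) * (
      (-73728 + 80640 * r - 33264 * r ^ 2 + 3888 * r ^ 3 - 258048 * p + 89856 * p * r - 19440 * p
        * r ^ 2 + 2187 * p * r ^ 3 - 110592 * p ^ 2 + 20736 * p ^ 2 * r) * w * hA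
      + (36864 - 41472 * r + 25344 * r ^ 2 - 6912 * r ^ 3 - 73728 * p - 14256 * p * r ^ 2 - 2916 *
        p * r ^ 3 - 294912 * p ^ 2 + 13824 * p ^ 2 * r - 11664 * p ^ 2 * r ^ 2 - 110592 * p ^ 3) *
        hA
      + (1536 - 1392 * r + 432 * r ^ 2 + 5376 * p - 864 * p * r + 243 * p * r ^ 2 + 2304 * p ^ 2)
        * w ^ 2 * hC
      + (768 - 1152 * r + 384 * r ^ 2 + 5376 * p - 1152 * p * r + 324 * p * r ^ 2 + 3072 * p ^ 2)
        * w * hC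
      + (256 - 512 * r + 256 * r ^ 2 + 9472 * p - 5728 * p * r + 1728 * p * r ^ 2 + 20224 * p ^ 2
        - 2592 * p ^ 2 * r + 729 * p ^ 2 * r ^ 2 + 6912 * p ^ 3) * hC)
  set f : ℂ → ℂ × ℂ := fun w => (p / w ^ 2, 1 - w) with hf
  have hfinj : Function.Injective f := by
    intro w w' hww
    have := (Prod.mk.inj hww).2
    linear_combination -this
  set T := Q.roots.toFinset.image f with hT
  have hTcard : T.card = 5 := by
    rw [hT, Finset.card_image_of_injective _ hfinj, Multiset.toFinset_card_of_nodup hnodup,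
      IsAlgClosed.card_roots_eq_natDegree, hdeg]
  have hTmem : ∀ z ∈ T, z.1 ≠ 0 ∧ z.2 ≠ 0 ∧ z.1 * (1 - z.2) ^ 2 - p = 0 ∧
      z.2 * (1 - z.1) ^ 2 - r = 0 := by
    intro z hz
    obtain ⟨w, hw, rfl⟩ := Finset.mem_image.1 hz
    have hw : Q.IsRoot w := by
      rw [Multiset.mem_toFinset] at hw
      exact Polynomial.isRoot_of_mem_roots hw
    have hwne := hw0 w hw
    have hw2 := hroot w hw
    refine ⟨div_ne_zero hp (pow_ne_zero 2 hwne), hw1 w hw, ?_, ?_⟩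
    · simp only [hf]
      field_simp
      ring
    · simp only [hf]
      field_simp
      linear_combination -hw2
  set U : Finset (ℂ × ℂ) := insert (0, 0) (insert (0, r) (insert (p, 0) T)) with hU
  have hUcard : U.card = 8 := by
    have n1 : ((p, 0) : ℂ × ℂ) ∉ T := fun hm => (hTmem _ hm).2.1 rfl
    have n2 : ((0, r) : ℂ × ℂ) ∉ insert (p, 0) T := by
      rw [Finset.mem_insert]
      rintro (hm | hm)
      · exact hr (Prod.mk.inj hm).2
      · exact (hTmem _ hm).1 rfl
    have n3 : ((0, 0) : ℂ × ℂ) ∉ insert (0, r) (insert (p, 0) T) := by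
      rw [Finset.mem_insert, Finset.mem_insert]
      rintro (hm | hm | hm)
      · exact hr (Prod.mk.inj hm).2.symm
      · exact hp (Prod.mk.inj hm).1.symm
      · exact (hTmem _ hm).1 rfl
    rw [hU, Finset.card_insert_of_notMem n3, Finset.card_insert_of_notMem n2,
      Finset.card_insert_of_notMem n1, hTcard]
  have hsol : ∀ z ∈ U, z.1 * (z.1 * (1 - z.2) ^ 2 - p) = 0 ∧
      z.2 * (z.2 * (1 - z.1) ^ 2 - r) = 0 := by
    intro z hz
    rw [hU, Finset.mem_insert, Finset.mem_insert, Finset.mem_insert] at hz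
    rcases hz with rfl | rfl | rfl | hz
    · simp
    · simp
    · simp
    · obtain ⟨-, -, h1, h2⟩ := hTmem z hz
      rw [h1, h2]
      simp
  exact ⟨fun i => ((U.equivFinOfCardEq hUcard).symm i : ℂ × ℂ),
    Subtype.val_injective.comp (Equiv.injective _), fun i => hsol _ (Subtype.prop _)⟩

/-! ### Generic semisimplicity -/

/-- Small quantum cohomology of the Fano threefold `M310` (the blow-up of the quadric `Q³` along two disjoint conics),
specialized at `(q0, q1, q2)`: for generic `(q0, q1, q2) ∈ ℂ³` (i.e. on the nonempty
Zariski-open set where a nonzero polynomial `g` does not vanish) the quotient ring is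
isomorphic as a `ℂ`-algebra to `ℂ⁸`, hence a semisimple commutative `ℂ`-algebra of
`ℂ`-dimension 8.  Here `E1 = X 0`, `E2 = X 1` and `H = X 2`. -/
theorem qh_M3_10_generically_semisimple :
    ∃ g : MvPolynomial (Fin 3) ℂ, g ≠ 0 ∧
      ∀ q0 q1 q2 : ℂ, eval ![q0, q1, q2] g ≠ 0 →
        Nonempty
          ((MvPolynomial (Fin 3) ℂ ⧸ Ideal.span
            { X 0 * X 1 + C (2 * q0) * X 0 + C (2 * q0) * X 1 - C (4 * q0) * X 2 - C (4 * q0 ^ 2),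
              X 0 ^ 2 - C 2 * (X 0 * X 2) + X 2 ^ 2 - C q1 * X 0 - C (2 * q0 * q1),
              X 1 ^ 2 - C 2 * (X 1 * X 2) + X 2 ^ 2 - C q2 * X 1 - C (2 * q0 * q2) })
          ≃ₐ[ℂ] (Fin 8 → ℂ)) := by
  classical
  -- The factor after `X 0 * X 1 * X 2` is the polynomial in the last hypothesis of
  -- `exists_eight_solutions` at
  -- `p = q1 / (4 q0)`, `r = q2 / (4 q0)`, multiplied by `(4 q0)⁴`.
  refine ⟨X 0 * X 1 * X 2 * (C 256 * (C 4 * X 0) ^ 4 - C 768 * ((C 4 * X 0) ^ 3 * (X 1 + X 2))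
    + C 768 * ((C 4 * X 0) ^ 2 * (X 1 ^ 2 + X 2 ^ 2)) - C 256 * ((C 4 * X 0) * (X 1 ^ 3 + X 2 ^ 3))
    - C 2784 * ((C 4 * X 0) ^ 2 * (X 1 * X 2)) + C 96 * ((C 4 * X 0) * (X 1 * X 2 * (X 1 + X 2)))
    - C 27 * (X 1 ^ 2 * X 2 ^ 2)), ?_, ?_⟩
  · intro h0
    have h1 := congrArg (eval ![1 / 4, 1, 1]) h0
    simp at h1
    norm_num at h1
  intro q0 q1 q2 hg
  simp only [map_mul, map_sub, map_add, map_pow, eval_X, eval_C, Matrix.cons_val_zero,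
    Matrix.cons_val_one, Matrix.cons_val] at hg
  rw [mul_ne_zero_iff, mul_ne_zero_iff, mul_ne_zero_iff] at hg
  obtain ⟨⟨⟨hq0, hq1⟩, hq2⟩, hD⟩ := hg
  have hb : (4 * q0) ≠ 0 := mul_ne_zero (by norm_num) hq0
  obtain ⟨s, hsinj, hs⟩ := exists_eight_solutions (q1 / (4 * q0)) (q2 / (4 * q0))
    (div_ne_zero hq1 hb) (div_ne_zero hq2 hb) (by
      intro h0
      apply hD
      field_simp at h0
      linear_combination h0)
  set I : Ideal (MvPolynomial (Fin 3) ℂ) := Ideal.span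
    { X 0 * X 1 + C (2 * q0) * X 0 + C (2 * q0) * X 1 - C (4 * q0) * X 2 - C (4 * q0 ^ 2),
      X 0 ^ 2 - C 2 * (X 0 * X 2) + X 2 ^ 2 - C q1 * X 0 - C (2 * q0 * q1),
      X 1 ^ 2 - C 2 * (X 1 * X 2) + X 2 ^ 2 - C q2 * X 1 - C (2 * q0 * q2) } with hI
  have hfin : Module.Finite ℂ (MvPolynomial (Fin 3) ℂ ⧸ I) ∧
      Module.finrank ℂ (MvPolynomial (Fin 3) ℂ ⧸ I) ≤ 8 := by
    refine finrank_le_eight (Ideal.Quotient.mkₐ ℂ I (X 0 + C (2 * q0)))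
      (Ideal.Quotient.mkₐ ℂ I (X 1 + C (2 * q0))) (Ideal.Quotient.mkₐ ℂ I (X 2 + C (2 * q0)))
      (4 * q0) q1 q2 ?_ ?_ ?_ ?_
    · rw [← AlgHom.commutes (Ideal.Quotient.mkₐ ℂ I), ← map_mul, ← map_mul]
      refine Ideal.Quotient.eq.2 (Ideal.subset_span (Or.inl ?_))
      simp only [algebraMap_eq, map_mul, map_pow, map_ofNat]
      ring
    · rw [← AlgHom.commutes (Ideal.Quotient.mkₐ ℂ I), ← map_mul, ← map_sub, ← map_pow]
      refine Ideal.Quotient.eq.2 (Ideal.subset_span (Or.inr (Or.inl ?_)))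
      simp only [algebraMap_eq, map_mul, map_ofNat]
      ring
    · rw [← AlgHom.commutes (Ideal.Quotient.mkₐ ℂ I), ← map_mul, ← map_sub, ← map_pow]
      refine Ideal.Quotient.eq.2 (Ideal.subset_span (Or.inr (Or.inr ?_)))
      rw [Set.mem_singleton_iff]
      simp only [algebraMap_eq, map_mul, map_ofNat]
      ring
    · rw [eq_top_iff]
      rintro z -
      obtain ⟨f, rfl⟩ := Ideal.Quotient.mkₐ_surjective ℂ I z
      set W := Algebra.adjoin ℂ {Ideal.Quotient.mkₐ ℂ I (X 0 + C (2 * q0)),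
        Ideal.Quotient.mkₐ ℂ I (X 1 + C (2 * q0)), Ideal.Quotient.mkₐ ℂ I (X 2 + C (2 * q0))}
      have hC (c : ℂ) : Ideal.Quotient.mkₐ ℂ I (C c) ∈ W := by
        rw [← algebraMap_eq, AlgHom.commutes]
        exact W.algebraMap_mem c
      have hX (i : Fin 3) (hi : Ideal.Quotient.mkₐ ℂ I (X i + C (2 * q0)) ∈ W) :
          Ideal.Quotient.mkₐ ℂ I (X i) ∈ W := by
        have := W.sub_mem hi (hC (2 * q0))
        rwa [← map_sub, add_sub_cancel_right] at this
      induction f using MvPolynomial.induction_on with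
      | C c => exact hC c
      | add f g hf hg => rw [map_add]; exact W.add_mem hf hg
      | mul_X f i hf =>
        rw [map_mul]
        refine W.mul_mem hf (hX i (Algebra.subset_adjoin ?_))
        fin_cases i
        · exact Or.inl rfl
        · exact Or.inr (Or.inl rfl)
        · exact Or.inr (Or.inr rfl)
  set pt : Fin 8 → Fin 3 → ℂ := fun i => ![4 * q0 * (s i).1 - 2 * q0, 4 * q0 * (s i).2 - 2 * q0,
    4 * q0 * ((s i).1 * (s i).2) - 2 * q0] with hpt
  have hker (i : Fin 8) : ∀ a ∈ I, aeval (pt i) a = 0 := by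
    suffices hle : I ≤ RingHom.ker (aeval (R := ℂ) (pt i)) from fun a ha => hle ha
    obtain ⟨h1, h2⟩ := hs i
    rw [hI, Ideal.span_le]
    rintro f (rfl | rfl | rfl)
    · simp [RingHom.mem_ker, hpt]
      ring
    · simp [RingHom.mem_ker, hpt]
      have h3 : 4 * q0 * (q1 / (4 * q0)) = q1 := mul_div_cancel₀ _ hb
      linear_combination 16 * q0 ^ 2 * h1 + 4 * q0 * (s i).1 * h3
    · simp [RingHom.mem_ker, hpt]
      have h3 : 4 * q0 * (q2 / (4 * q0)) = q2 := mul_div_cancel₀ _ hb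
      linear_combination 16 * q0 ^ 2 * h2 + 4 * q0 * (s i).2 * h3
  have := hfin.1
  refine nonempty_algEquiv_of_injective hfin.2
    (fun i => Ideal.Quotient.liftₐ I (aeval (pt i)) (hker i)) fun i j hij => hsinj ?_
  have hcoord (k : Fin 3) : pt i k = pt j k := by
    simpa using DFunLike.congr_fun hij (Ideal.Quotient.mk I (X k))
  apply Prod.ext
  · have := hcoord 0
    simp only [hpt, Matrix.cons_val_zero] at this
    exact mul_left_cancel₀ hb (by linear_combination this)
  · have := hcoord 1
    simp only [hpt, Matrix.cons_val_one, Matrix.cons_val_zero] at this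
    exact mul_left_cancel₀ hb (by linear_combination this)
end

section
/- For generic (q0, q1, q2) ∈ ℂ³ — i.e., for all (q0, q1, q2) in some nonempty Zariski-open subset of ℂ³ — the quotient ring ℂ[E1,E2,H] / (E1·E2 + 2·E1·q0 + 4·E2·q0 − 8·H·q0 − 3·q0·q2, E1² − 2·E1·H + H² − E1·q1 − q0·q1, E2² − (10/3)·E2·H + 3·H² + (1/3)·E1·q0 + (2/3)·E2·q0 − (4/3)·H·q0 − (1/3)·q0·q1 − E2·q2 − 2·q0·q2) is a semisimple commutative ℂ-algebra of ℂ-dimension 8, i.e., it is isomorphic as a ℂ-algebra to ℂ⁸. (This ring is the specialization at (q0,q1,q2) of the small quantum cohomology ring of the Fano threefold M³₁₂, the blow-up of ℙ³ along the disjoint union of a line and a twisted cubic.) -/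
open MvPolynomial

set_option maxHeartbeats 1000000

/-!
For `q1 ≠ 0` the second relation reads `(E1 - H)² = q1 (E1 + q0)`, so it is parametrised by
`s = (E1 - H) / q1`: `E1 = q1 s² - q0` and `H = q1 s² - q1 s - q0`. The first relation then becomes
linear in `E2`, namely `D(s) E2 = N(s)` with `D = q1 s² + 3 q0` and `N` quadratic, and clearing
denominators in the third one leaves a single equation `P(s) = 0` with `P` of degree `8`
(`eliminant`). Since `P ≡ 3 N² mod D`, and since `N` and `D` are coprime for generic parameters
(`isCoprime_den_num`), `D(s)` is invertible in the quotient ring; hence `s` generates that ring, and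
every root of `P` gives a point of its spectrum. If moreover `P` is separable, it has `8` distinct
roots and evaluation at the corresponding points is an isomorphism onto `ℂ⁸`
(`nonempty_algEquiv_of_eliminant`).

Separability is the nonvanishing of the resultant of `P` and `P'`, a polynomial in `(q0, q1, q2)`.
It is not the zero polynomial, because an explicit Bézout identity shows that `P` is separable at
`(q0, q1, q2) = (1, -3, -4)`.
-/

namespace M312

section Curve

variable {R : Type*} [CommRing R] (q0 q1 q2 : R)

/-- `E1` as a polynomial in the parameter `s = (E1 - H) / q1`. -/
noncomputable def polyE : Polynomial R :=
  Polynomial.C q1 * Polynomial.X ^ 2 - Polynomial.C q0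

/-- `H` as a polynomial in the parameter `s = (E1 - H) / q1`. -/
noncomputable def polyH : Polynomial R :=
  Polynomial.C q1 * Polynomial.X ^ 2 - Polynomial.C q1 * Polynomial.X - Polynomial.C q0

/-- The coefficient `(E1 + 4 q0)` of `E2` in the first relation, as a polynomial in `s`. -/
noncomputable def den : Polynomial R :=
  Polynomial.C q1 * Polynomial.X ^ 2 + Polynomial.C (3 * q0)

/-- The first relation is `den * E2 = num`. -/
noncomputable def num : Polynomial R :=
  Polynomial.C (6 * q0 * q1) * Polynomial.X ^ 2 - Polynomial.C (8 * q0 * q1) * Polynomial.X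
    + Polynomial.C (3 * q0 * q2 - 6 * q0 ^ 2)

/-- The third relation after the substitution `E2 = num / den`, multiplied by `3 * den ^ 2`. The
factor `3` makes all numerical coefficients integers, so that the definition makes sense over
every commutative ring. -/
noncomputable def eliminant : Polynomial R :=
  3 * num q0 q1 q2 ^ 2 + den q0 q1 *
    (num q0 q1 q2 * (Polynomial.C (2 * q0 - 3 * q2) - 10 * polyH q0 q1)
      + den q0 q1 * (9 * polyH q0 q1 ^ 2 + Polynomial.C q0 * polyE q0 q1
        - Polynomial.C (4 * q0) * polyH q0 q1 - Polynomial.C (q0 * q1 + 6 * q0 * q2)))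

lemma map_eliminant {S : Type*} [CommRing S] (f : R →+* S) :
    (eliminant q0 q1 q2).map f = eliminant (f q0) (f q1) (f q2) := by
  simp [eliminant, num, den, polyE, polyH, map_ofNat f]

lemma natDegree_eliminant_le : (eliminant q0 q1 q2).natDegree ≤ 8 := by
  unfold eliminant num den polyE polyH
  compute_degree

lemma coeff_eliminant : (eliminant q0 q1 q2).coeff 8 = 9 * q1 ^ 4 := by
  unfold eliminant num den polyE polyH
  compute_degree
  all_goals first | ring1 | norm_num

end Curve

lemma natDegree_eliminant {q0 q1 q2 : ℂ} (h : q1 ≠ 0) : (eliminant q0 q1 q2).natDegree = 8 :=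
  Polynomial.natDegree_eq_of_le_of_coeff_ne_zero (natDegree_eliminant_le _ _ _)
    (by rw [coeff_eliminant]; simpa using h)

lemma isCoprime_den_num {q0 q1 q2 : ℂ} (h0 : q0 ≠ 0)
    (hc : (3 * q2 - 24 * q0) ^ 2 + 192 * q0 * q1 ≠ 0) : IsCoprime (num q0 q1 q2) (den q0 q1) := by
  set c : ℂ := q0 * ((3 * q2 - 24 * q0) ^ 2 + 192 * q0 * q1) with hcdef
  have hc' : Polynomial.C c⁻¹ * Polynomial.C c = 1 := by
    rw [← Polynomial.C_mul, inv_mul_cancel₀ (mul_ne_zero h0 hc), Polynomial.C_1]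
  -- `num - 6 q0 den` is linear; completing the square eliminates `s` between it and `den`.
  refine ⟨Polynomial.C c⁻¹ * (Polynomial.C (3 * q2 - 24 * q0)
      + Polynomial.C (8 * q1) * Polynomial.X),
    Polynomial.C c⁻¹ * (Polynomial.C (64 * q0 * q1) - Polynomial.C (6 * q0) *
      (Polynomial.C (3 * q2 - 24 * q0) + Polynomial.C (8 * q1) * Polynomial.X)), ?_⟩
  rw [← hc', hcdef]
  unfold num den
  simp only [map_add, map_sub, map_mul, map_pow, map_ofNat]
  ring

lemma isCoprime_eliminant_den {q0 q1 q2 : ℂ} (h0 : q0 ≠ 0)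
    (hc : (3 * q2 - 24 * q0) ^ 2 + 192 * q0 * q1 ≠ 0) :
    IsCoprime (eliminant q0 q1 q2) (den q0 q1) := by
  unfold eliminant
  have h3 : IsUnit (3 : Polynomial ℂ) := by
    have : (3 : Polynomial ℂ) = Polynomial.C 3 := (map_ofNat Polynomial.C 3).symm
    rw [this, Polynomial.isUnit_C]
    norm_num
  refine IsCoprime.add_mul_left_left ?_ _
  exact (isCoprime_mul_unit_left_left h3 _ _).2 (isCoprime_den_num h0 hc).pow_left

lemma separable_special : (eliminant (1 : ℂ) (-3) (-4)).Separable := by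
  have hP : eliminant (1 : ℂ) (-3) (-4) = 27 * (1 + 6 * Polynomial.X + 18 * Polynomial.X ^ 2
      - 90 * Polynomial.X ^ 3 + 108 * Polynomial.X ^ 4 - 54 * Polynomial.X ^ 5
      + 54 * Polynomial.X ^ 6 - 54 * Polynomial.X ^ 7 + 27 * Polynomial.X ^ 8) := by
    unfold eliminant num den polyE polyH
    simp only [map_add, map_sub, map_mul, map_pow, map_neg, map_ofNat, map_one]
    ring
  have hc : Polynomial.C (28166400⁻¹ : ℂ) * 28166400 = 1 := by
    rw [← map_ofNat Polynomial.C 28166400, ← Polynomial.C_mul, inv_mul_cancel₀ (by norm_num),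
      Polynomial.C_1]
  -- The cofactors come from the extended Euclidean algorithm.
  refine ⟨Polynomial.C 28166400⁻¹ * (1138462 - 3761760 * Polynomial.X
      + 5588820 * Polynomial.X ^ 2 - 3790656 * Polynomial.X ^ 3 + 4485726 * Polynomial.X ^ 4
      - 4637088 * Polynomial.X ^ 5 + 2577312 * Polynomial.X ^ 6),
    Polynomial.C 28166400⁻¹ * (-15877 - 416240 * Polynomial.X + 1197879 * Polynomial.X ^ 2
      - 1369764 * Polynomial.X ^ 3 + 735813 * Polynomial.X ^ 4 - 725760 * Polynomial.X ^ 5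
      + 660177 * Polynomial.X ^ 6 - 322164 * Polynomial.X ^ 7), ?_⟩
  rw [← hc, hP]
  simp only [Polynomial.derivative_mul, Polynomial.derivative_add, Polynomial.derivative_sub,
    Polynomial.derivative_X_pow, Polynomial.derivative_X, Polynomial.derivative_ofNat,
    Polynomial.derivative_one, Nat.cast_ofNat, map_ofNat]
  ring

/-- The polynomial in `(q0, q1, q2)` off whose zero set the quotient ring is `ℂ⁸`: its factors
express that the parametrisation by `s` exists, that `num` and `den` are coprime, and that the
eliminant is separable. -/
noncomputable def discPoly : MvPolynomial (Fin 3) ℂ :=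
  X 0 * X 1 * ((3 * X 2 - 24 * X 0) ^ 2 + 192 * X 0 * X 1) *
    Polynomial.resultant (eliminant (X 0) (X 1) (X 2)) (eliminant (X 0) (X 1) (X 2)).derivative 8 7

lemma eval_discPoly (q0 q1 q2 : ℂ) : eval ![q0, q1, q2] discPoly =
    q0 * q1 * ((3 * q2 - 24 * q0) ^ 2 + 192 * q0 * q1) *
      Polynomial.resultant (eliminant q0 q1 q2) (eliminant q0 q1 q2).derivative 8 7 := by
  have h : (eliminant (X 0) (X 1) (X 2)).map (eval ![q0, q1, q2]) = eliminant q0 q1 q2 := by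
    rw [map_eliminant]
    congr 1 <;> exact eval_X _
  rw [discPoly, map_mul, ← Polynomial.resultant_map_map, ← Polynomial.derivative_map, h]
  simp

lemma discPoly_ne_zero : discPoly ≠ 0 := by
  intro h
  have h1 := eval_discPoly 1 (-3) (-4)
  have h2 := Polynomial.resultant_ne_zero _ _ separable_special
  rw [natDegree_eliminant (by norm_num), Polynomial.natDegree_derivative,
    natDegree_eliminant (by norm_num)] at h2
  rw [h, map_zero] at h1
  refine mul_ne_zero ?_ h2 h1.symm
  norm_num

/-- The degrees `8` and `7` are fixed in the resultant so that it commutes with specialisation of the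
parameters; no assumption on the actual degrees is needed. -/
lemma separable_of_resultant_ne_zero {q0 q1 q2 : ℂ}
    (h : Polynomial.resultant (eliminant q0 q1 q2) (eliminant q0 q1 q2).derivative 8 7 ≠ 0) :
    (eliminant q0 q1 q2).Separable := by
  obtain ⟨p, q, -, -, hpq⟩ := Polynomial.exists_mul_add_mul_eq_C_resultant
    (m := 8) (n := 7) (eliminant q0 q1 q2) (eliminant q0 q1 q2).derivative
    (natDegree_eliminant_le _ _ _)
    ((Polynomial.natDegree_derivative_le _).trans
      (Nat.sub_le_sub_right (natDegree_eliminant_le _ _ _) 1)) (by simp)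
  set c := Polynomial.resultant (eliminant q0 q1 q2) (eliminant q0 q1 q2).derivative 8 7
  have hc : Polynomial.C c⁻¹ * Polynomial.C c = 1 := by
    rw [← Polynomial.C_mul, inv_mul_cancel₀ h, Polynomial.C_1]
  refine ⟨Polynomial.C c⁻¹ * p, Polynomial.C c⁻¹ * q, ?_⟩
  rw [← hc, ← hpq]
  ring

/-- A quotient of `ℂ[s] / (P)`, with `P` separable of degree `8`, all of whose `8` candidate points
do occur, is `ℂ⁸`. -/
lemma nonempty_algEquiv_of_eliminant {A : Type*} [CommRing A] [Algebra ℂ A] {P : Polynomial ℂ}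
    (hdeg : P.natDegree = 8) (hsep : P.Separable) (φ : Polynomial ℂ →ₐ[ℂ] A)
    (hφ : Function.Surjective φ) (hP : φ P = 0)
    (hpt : ∀ r, P.eval r = 0 → ∃ χ : A →ₐ[ℂ] ℂ, ∀ f, χ (φ f) = f.eval r) :
    Nonempty (A ≃ₐ[ℂ] (Fin 8 → ℂ)) := by
  have hP0 : P ≠ 0 := hsep.ne_zero
  have hspl : P.Splits := IsAlgClosed.splits P
  have hnd : P.roots.Nodup := Polynomial.nodup_roots hsep
  have hcard : P.roots.toFinset.card = 8 := by
    rw [Multiset.toFinset_card_of_nodup hnd, ← hdeg, hspl.natDegree_eq_card_roots]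
  let e : Fin 8 ≃ P.roots.toFinset := (P.roots.toFinset.equivFinOfCardEq hcard).symm
  let r : Fin 8 → ℂ := fun i => e i
  have hr : Function.Injective r := Subtype.val_injective.comp e.injective
  have hroot : ∀ i, P.eval (r i) = 0 := fun i => by
    have := (e i).2
    rw [Multiset.mem_toFinset, Polynomial.mem_roots hP0] at this
    exact this
  choose χ hχ using fun i => hpt (r i) (hroot i)
  let ψ : A →ₐ[ℂ] (Fin 8 → ℂ) := AlgHom.pi χ
  refine ⟨AlgEquiv.ofBijective ψ ⟨(injective_iff_map_eq_zero ψ).2 fun a ha => ?_, fun v => ?_⟩⟩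
  · obtain ⟨f, rfl⟩ := hφ a
    have hf : ∀ i, f.eval (r i) = 0 := fun i => by rw [← hχ i]; exact congrFun ha i
    have hdvd : P ∣ f := by
      by_cases hf0 : f = 0
      · simp [hf0]
      refine hspl.dvd_of_roots_le_roots hP0 ((Multiset.le_iff_subset hnd).2 fun x hx => ?_)
      rw [Polynomial.mem_roots hf0]
      have := hf (e.symm ⟨x, Multiset.mem_toFinset.2 hx⟩)
      simpa [r] using this
    obtain ⟨k, rfl⟩ := hdvd
    rw [map_mul, hP, zero_mul]
  · refine ⟨φ (Lagrange.interpolate Finset.univ r v), funext fun i => ?_⟩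
    change χ i _ = _
    rw [hχ]
    exact Lagrange.eval_interpolate_at_node v hr.injOn (Finset.mem_univ i)

/-- The ideal of relations. -/
noncomputable abbrev rel (q0 q1 q2 : ℂ) : Ideal (MvPolynomial (Fin 3) ℂ) := Ideal.span
  { X 0 * X 1 + C (2 * q0) * X 0 + C (4 * q0) * X 1 - C (8 * q0) * X 2 - C (3 * q0 * q2),
    X 0 ^ 2 - C 2 * (X 0 * X 2) + X 2 ^ 2 - C q1 * X 0 - C (q0 * q1),
    X 1 ^ 2 - C (10 / 3) * (X 1 * X 2) + C 3 * X 2 ^ 2 + C (1 / 3 * q0) * X 0 + C (2 / 3 * q0) * X 1 - C (4 / 3 * q0) * X 2 - C (1 / 3 * q0 * q1) - C q2 * X 1 - C (2 * q0 * q2) }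

/-- The element `s = (E1 - H) / q1` of the quotient ring. -/
noncomputable def param (q0 q1 q2 : ℂ) : MvPolynomial (Fin 3) ℂ ⧸ rel q0 q1 q2 :=
  Ideal.Quotient.mk _ (C q1⁻¹ * (X 0 - X 2))

/-- The root `r` of the eliminant gives the point
`(polyE r, num r / den r, polyH r)` of the spectrum, at which `s` takes the value `r`. -/
lemma exists_point {q0 q1 q2 r : ℂ} (h1 : q1 ≠ 0) (hD : (den q0 q1).eval r ≠ 0)
    (hr : (eliminant q0 q1 q2).eval r = 0) :
    ∃ χ : (MvPolynomial (Fin 3) ℂ ⧸ rel q0 q1 q2) →ₐ[ℂ] ℂ,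
      ∀ f : Polynomial ℂ, χ (Polynomial.aeval (param q0 q1 q2) f) = f.eval r := by
  let v : Fin 3 → ℂ := ![(polyE q0 q1).eval r, (num q0 q1 q2).eval r / (den q0 q1).eval r,
    (polyH q0 q1).eval r]
  have hv : ∀ a ∈ rel q0 q1 q2, aeval v a = 0 := by
    intro a ha
    have hle : rel q0 q1 q2 ≤ RingHom.ker (aeval v : MvPolynomial (Fin 3) ℂ →ₐ[ℂ] ℂ) := by
      obtain ⟨y, hy⟩ : ∃ y, y = (num q0 q1 q2).eval r / (den q0 q1).eval r := ⟨_, rfl⟩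
      have hyD : y * (den q0 q1).eval r = (num q0 q1 q2).eval r := by
        rw [hy, div_mul_cancel₀ _ hD]
      rw [Ideal.span_le]
      rintro x (rfl | rfl | rfl) <;>
        simp only [SetLike.mem_coe, RingHom.mem_ker, map_add, map_sub, map_mul, map_pow, aeval_X,
          aeval_C, Algebra.algebraMap_self, RingHom.id_apply, v, ← hy, Matrix.cons_val]
      · simp [den, num, polyE, polyH] at hyD ⊢
        linear_combination hyD
      · simp [polyE, polyH]
        ring
      · refine (mul_eq_zero.1 (?_ : (3 * (den q0 q1).eval r ^ 2) * _ = 0)).resolve_left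
          (by simpa using hD)
        simp only [eliminant, Polynomial.eval_add, Polynomial.eval_mul, Polynomial.eval_pow,
          Polynomial.eval_sub, Polynomial.eval_C, Polynomial.eval_ofNat, ← hyD] at hr
        linear_combination hr
    exact hle ha
  refine ⟨Ideal.Quotient.liftₐ _ (aeval v) hv, fun f => ?_⟩
  have hs : Ideal.Quotient.liftₐ _ (aeval v) hv (param q0 q1 q2) = r := by
    change aeval v (C q1⁻¹ * (X 0 - X 2)) = r
    simp [v, polyE, polyH, h1]
  rw [← Polynomial.aeval_algHom_apply, hs, Polynomial.coe_aeval_eq_eval]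

/-- In the quotient ring, substituting the element `s` into the parametrisation recovers `E1`, `H` and
the equation `den * E2 = num`, and `s` is a root of the eliminant. -/
lemma aeval_param {q0 q1 q2 : ℂ} (h1 : q1 ≠ 0) :
    Polynomial.aeval (param q0 q1 q2) (polyE q0 q1) = Ideal.Quotient.mk (rel q0 q1 q2) (X 0) ∧
    Polynomial.aeval (param q0 q1 q2) (polyH q0 q1) = Ideal.Quotient.mk (rel q0 q1 q2) (X 2) ∧
    Polynomial.aeval (param q0 q1 q2) (den q0 q1) * Ideal.Quotient.mk (rel q0 q1 q2) (X 1)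
      = Polynomial.aeval (param q0 q1 q2) (num q0 q1 q2) ∧
    Polynomial.aeval (param q0 q1 q2) (eliminant q0 q1 q2) = 0 := by
  set π := Ideal.Quotient.mk (rel q0 q1 q2)
  have hC : ∀ a : ℂ, algebraMap ℂ (MvPolynomial (Fin 3) ℂ ⧸ rel q0 q1 q2) a = π (C a) :=
    fun _ => rfl
  have hu : π (C q1) * π (C q1⁻¹) = 1 := by
    rw [← map_mul, ← C_mul, mul_inv_cancel₀ h1, C_1, map_one]
  have ht : 3 * π (C (1 / 3)) = 1 := by
    rw [← map_ofNat π 3, ← map_mul, ← map_ofNat C 3, ← C_mul]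
    norm_num
  have hdiv : ∀ n : ℂ, C (σ := Fin 3) (n / 3) = C n * C (1 / 3) := fun n => by
    rw [← C_mul]; congr 1; ring
  have e1 := Ideal.Quotient.eq_zero_iff_mem.2 (Ideal.subset_span (Set.mem_insert _ _) :
    X 0 * X 1 + C (2 * q0) * X 0 + C (4 * q0) * X 1 - C (8 * q0) * X 2 - C (3 * q0 * q2)
      ∈ rel q0 q1 q2)
  have e2 := Ideal.Quotient.eq_zero_iff_mem.2
    (Ideal.subset_span (Set.mem_insert_of_mem _ (Set.mem_insert _ _)) :
    X 0 ^ 2 - C 2 * (X 0 * X 2) + X 2 ^ 2 - C q1 * X 0 - C (q0 * q1) ∈ rel q0 q1 q2)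
  have e3 := Ideal.Quotient.eq_zero_iff_mem.2 (Ideal.subset_span
    (Set.mem_insert_of_mem _ (Set.mem_insert_of_mem _ rfl)) :
    X 1 ^ 2 - C (10 / 3) * (X 1 * X 2) + C 3 * X 2 ^ 2 + C (1 / 3 * q0) * X 0 + C (2 / 3 * q0) * X 1 - C (4 / 3 * q0) * X 2 - C (1 / 3 * q0 * q1) - C q2 * X 1 - C (2 * q0 * q2)
      ∈ rel q0 q1 q2)
  simp only [hdiv 10, hdiv 2, hdiv 4, map_add, map_sub, map_mul, map_pow, map_ofNat]
    at e1 e2 e3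
  have hE : Polynomial.aeval (param q0 q1 q2) (polyE q0 q1) = π (X 0) := by
    simp only [polyE, param, map_sub, map_mul, map_pow, Polynomial.aeval_C, Polynomial.aeval_X, hC]
    linear_combination π (C q1⁻¹) * e2 + (π (X 0) + π (C q0)
      + π (C q1⁻¹) * (π (X 0) - π (X 2)) ^ 2) * hu
  have hH : Polynomial.aeval (param q0 q1 q2) (polyH q0 q1) = π (X 2) := by
    have : polyH q0 q1 = polyE q0 q1 - Polynomial.C q1 * Polynomial.X := by
      unfold polyH polyE; ring
    rw [this, map_sub, hE]
    simp only [param, map_sub, map_mul, Polynomial.aeval_C, Polynomial.aeval_X, hC]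
    linear_combination (π (X 2) - π (X 0)) * hu
  have hD : Polynomial.aeval (param q0 q1 q2) (den q0 q1) = π (X 0) + 4 * π (C q0) := by
    have : den q0 q1 = polyE q0 q1 + Polynomial.C (4 * q0) := by
      unfold den polyE; simp only [map_mul, map_ofNat]; ring
    rw [this, map_add, hE, Polynomial.aeval_C, hC, C_mul, map_mul, map_ofNat, map_ofNat]
  have hN : Polynomial.aeval (param q0 q1 q2) (num q0 q1 q2) =
      8 * π (C q0) * π (X 2) + 3 * π (C q0) * π (C q2) - 2 * π (C q0) * π (X 0) := by
    have : num q0 q1 q2 = 8 * Polynomial.C q0 * polyH q0 q1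
        + 3 * Polynomial.C q0 * Polynomial.C q2 - 2 * Polynomial.C q0 * polyE q0 q1 := by
      unfold num polyH polyE; simp only [map_sub, map_mul, map_pow, map_ofNat]; ring
    rw [this]
    simp only [map_sub, map_add, map_mul, map_ofNat, hE, hH, Polynomial.aeval_C, hC]
  have hDN : Polynomial.aeval (param q0 q1 q2) (den q0 q1) * π (X 1)
      = Polynomial.aeval (param q0 q1 q2) (num q0 q1 q2) := by
    rw [hD, hN]
    linear_combination e1
  refine ⟨hE, hH, hDN, ?_⟩
  simp only [eliminant, map_sub, map_add, map_mul, map_pow, map_ofNat, hE, hH, Polynomial.aeval_C,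
    hC, ← hDN]
  set d := Polynomial.aeval (param q0 q1 q2) (den q0 q1)
  linear_combination 3 * d ^ 2 * e3 + d ^ 2 * (10 * π (X 1) * π (X 2)
    - π (C q0) * π (X 0) - 2 * π (C q0) * π (X 1) + 4 * π (C q0) * π (X 2)
    + π (C q0) * π (C q1)) * ht

lemma surjective_aeval_param {q0 q1 q2 : ℂ} (h1 : q1 ≠ 0)
    (hcop : IsCoprime (eliminant q0 q1 q2) (den q0 q1)) :
    Function.Surjective (Polynomial.aeval (R := ℂ) (param q0 q1 q2)) := by
  obtain ⟨hE, hH, hDN, hP⟩ := aeval_param (q0 := q0) (q2 := q2) h1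
  obtain ⟨v, u, huv⟩ := hcop
  have hinv := congrArg (Polynomial.aeval (param q0 q1 q2)) huv
  rw [map_add, map_mul, map_mul, hP, mul_zero, zero_add, map_one] at hinv
  have hgen : ∀ i : Fin 3, Ideal.Quotient.mk (rel q0 q1 q2) (X i) ∈
      (Polynomial.aeval (R := ℂ) (param q0 q1 q2)).range := by
    intro i
    fin_cases i
    · exact ⟨_, hE⟩
    · -- `u` inverts `den`, so `E2 = u * num`.
      refine ⟨u * num q0 q1 q2, ?_⟩
      change Polynomial.aeval (param q0 q1 q2) (u * num q0 q1 q2) = _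
      rw [map_mul, ← hDN, ← mul_assoc, hinv, one_mul]
      rfl
    · exact ⟨_, hH⟩
  intro a
  obtain ⟨f, rfl⟩ := Ideal.Quotient.mk_surjective a
  change Ideal.Quotient.mk (rel q0 q1 q2) f ∈
    (Polynomial.aeval (R := ℂ) (param q0 q1 q2)).range
  induction f using MvPolynomial.induction_on with
  | C a => exact Subalgebra.algebraMap_mem _ a
  | add p q hp hq => rw [map_add]; exact add_mem hp hq
  | mul_X p i hp => rw [map_mul]; exact mul_mem hp (hgen i)

end M312

/-- Small quantum cohomology of the Fano threefold `M312` (the blow-up of `ℙ³` along the disjoint union of a line and a twisted cubic),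
specialized at `(q0, q1, q2)`: for generic `(q0, q1, q2) ∈ ℂ³` (i.e. on the nonempty
Zariski-open set where a nonzero polynomial `g` does not vanish) the quotient ring is
isomorphic as a `ℂ`-algebra to `ℂ⁸`, hence a semisimple commutative `ℂ`-algebra of
`ℂ`-dimension 8.  Here `E1 = X 0`, `E2 = X 1` and `H = X 2`. -/
theorem qh_M3_12_generically_semisimple :
    ∃ g : MvPolynomial (Fin 3) ℂ, g ≠ 0 ∧
      ∀ q0 q1 q2 : ℂ, eval ![q0, q1, q2] g ≠ 0 →
        Nonempty
          ((MvPolynomial (Fin 3) ℂ ⧸ Ideal.span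
            { X 0 * X 1 + C (2 * q0) * X 0 + C (4 * q0) * X 1 - C (8 * q0) * X 2 - C (3 * q0 * q2),
              X 0 ^ 2 - C 2 * (X 0 * X 2) + X 2 ^ 2 - C q1 * X 0 - C (q0 * q1),
              X 1 ^ 2 - C (10 / 3) * (X 1 * X 2) + C 3 * X 2 ^ 2 + C (1 / 3 * q0) * X 0 + C (2 / 3 * q0) * X 1 - C (4 / 3 * q0) * X 2 - C (1 / 3 * q0 * q1) - C q2 * X 1 - C (2 * q0 * q2) })
          ≃ₐ[ℂ] (Fin 8 → ℂ)) := by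
  refine ⟨M312.discPoly, M312.discPoly_ne_zero, fun q0 q1 q2 h => ?_⟩
  rw [M312.eval_discPoly] at h
  simp only [mul_ne_zero_iff] at h
  obtain ⟨⟨⟨h0, h1⟩, hc⟩, hres⟩ := h
  have hcop := M312.isCoprime_eliminant_den h0 hc
  refine M312.nonempty_algEquiv_of_eliminant (M312.natDegree_eliminant h1)
    (M312.separable_of_resultant_ne_zero hres) (Polynomial.aeval (M312.param q0 q1 q2))
    (M312.surjective_aeval_param h1 hcop) (M312.aeval_param h1).2.2.2 fun r hr =>
      M312.exists_point h1 (fun hD => ?_) hr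
  obtain ⟨a, b, hab⟩ := hcop
  simpa [hr, hD] using congrArg (Polynomial.eval r) hab
end

section
/- For generic (q0, q1, q2) ∈ ℂ³ — i.e., for all (q0, q1, q2) in some nonempty Zariski-open subset of ℂ³ — the quotient ring ℂ[E1,E2,H] / (E1·E2 + 2·E1·q0 + E2·q0 − 2·H·q0, E1² − E1·H + (1/2)·H² + E1·q0 + (1/2)·E2·q0 − H·q0 − E1·q1 − q0·q1 − (1/2)·q0·q2, E2² − 2·E2·H + H² − E2·q2 − q0·q2) is a semisimple commutative ℂ-algebra of ℂ-dimension 8, i.e., it is isomorphic as a ℂ-algebra to ℂ⁸. (This ring is the specialization at (q0,q1,q2) of the small quantum cohomology ring of the Fano threefold M³₁₅, the blow-up of the quadric Q³ along the disjoint union of a line and a conic.) -/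
/-!
Write `a, b, c` for `q0, q1, q2`, with `a ≠ 0`, and set `u = E1 + a`, `v = E2 + a`.  The first
relation is linear in `H` and eliminates it.  The other two become two curves in the
`(u, v)`-plane, each quadratic in `u`:

* `(v + a)² u² - 4 a v (v + a) u + 4 a² v (v - c) = 0`,
* `(v - a) u² - (v² - a² - 2 a b) u + a (v - a) (v - c) = 0`.

Eliminating `u²` gives `D(v) u = N(v)` with `D = (v + a) ((v - a)³ - 2 a b (v + a))` and
`N = a (v - a)³ (v - c)`, and the resultant of the two quadratics in `u` is `a² R(v)` with
`R = (v - c) (v ((v - a)³ - 4 a b (v + a))² - c (v - a)⁶)`, monic of degree 8.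

If `R` is coprime to `D`, then `D(v)` is invertible in the quotient ring, so `v` generates it, and
every root `r` of `R` lifts to the point `u = N(r) / D(r)`, `v = r` of the scheme defined by the
ideal.  If moreover `R` has 8 distinct roots, evaluation at these 8 points is an isomorphism onto
`ℂ⁸` (`nonempty_algEquiv_of_generator`).  Both conditions on `R` are the nonvanishing of resultants,
hence of polynomials in `(a, b, c)`; these are not identically zero, because at `(1, 2, 1)` explicit
Bézout identities give coprimality (`coprime_elimD_special`, `coprime_derivative_special`).
-/

open MvPolynomial

set_option maxHeartbeats 1000000

/-! ### The eliminant and its genericity -/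

/-- The degree 8 polynomial satisfied by `v = E2 + a` in the quotient ring; up to the factor `a²`, it
is the resultant with respect to `u = E1 + a` of the two plane curves left after eliminating `H`. -/
noncomputable def elimR {k : Type*} [CommRing k] (a b c : k) : Polynomial k :=
  (Polynomial.X - Polynomial.C c) *
    (Polynomial.X * ((Polynomial.X - Polynomial.C a) ^ 3
        - Polynomial.C (4 * a * b) * (Polynomial.X + Polynomial.C a)) ^ 2
      - Polynomial.C c * (Polynomial.X - Polynomial.C a) ^ 6)

/-- The denominator of `u = E1 + a` as a rational function of `v = E2 + a`. -/
noncomputable def elimD {k : Type*} [CommRing k] (a b : k) : Polynomial k :=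
  (Polynomial.X + Polynomial.C a) * ((Polynomial.X - Polynomial.C a) ^ 3
    - Polynomial.C (2 * a * b) * (Polynomial.X + Polynomial.C a))

lemma elimR_map {k l : Type*} [CommRing k] [CommRing l] (f : k →+* l) (a b c : k) :
    (elimR a b c).map f = elimR (f a) (f b) (f c) := by
  simp [elimR, map_ofNat f]

lemma elimD_map {k l : Type*} [CommRing k] [CommRing l] (f : k →+* l) (a b : k) :
    (elimD a b).map f = elimD (f a) (f b) := by
  simp [elimD, map_ofNat f]

lemma elimR_natDegree (a b c : ℂ) : (elimR a b c).natDegree = 8 := by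
  unfold elimR
  compute_degree!

lemma elimR_monic (a b c : ℂ) : (elimR a b c).Monic := by
  rw [Polynomial.Monic, Polynomial.leadingCoeff, elimR_natDegree]
  unfold elimR
  compute_degree!

lemma elimD_natDegree (a b : ℂ) : (elimD a b).natDegree = 4 := by
  unfold elimD
  compute_degree!

lemma elimR_derivative_natDegree (a b c : ℂ) :
    (Polynomial.derivative (elimR a b c)).natDegree = 7 := by
  rw [Polynomial.natDegree_derivative, elimR_natDegree]

lemma elimR_special : elimR (1 : ℂ) 2 1 =
    Polynomial.X ^ 8 - 8 * Polynomial.X ^ 7 + 12 * Polynomial.X ^ 6 - 8 * Polynomial.X ^ 5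
      + 102 * Polynomial.X ^ 4 - 24 * Polynomial.X ^ 3 + 12 * Polynomial.X ^ 2
      - 88 * Polynomial.X + 1 := by
  unfold elimR
  simp only [map_mul, map_one, map_ofNat]
  ring

/-- An identity `s p + t q = n` with `n ≠ 0` a constant makes `p` and `q` coprime. -/
lemma isCoprime_of_bezout {p q s t : Polynomial ℂ} {n : ℂ} (hn : n ≠ 0)
    (h : s * p + t * q = Polynomial.C n) : IsCoprime p q := by
  refine ⟨Polynomial.C n⁻¹ * s, Polynomial.C n⁻¹ * t, ?_⟩
  have h1 : Polynomial.C n⁻¹ * Polynomial.C n = (1 : Polynomial ℂ) := by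
    rw [← Polynomial.C_mul, inv_mul_cancel₀ hn, Polynomial.C_1]
  linear_combination Polynomial.C n⁻¹ * h + h1

lemma coprime_elimD_special : IsCoprime (elimR (1 : ℂ) 2 1) (elimD 1 2) := by
  have hD : elimD (1 : ℂ) 2 = Polynomial.X ^ 4 - 2 * Polynomial.X ^ 3 - 4 * Polynomial.X ^ 2
      - 6 * Polynomial.X - 5 := by
    unfold elimD
    simp only [map_mul, map_one, map_ofNat]
    ring
  -- The cofactors come from the extended Euclidean algorithm.
  refine isCoprime_of_bezout (n := 2048)
    (s := 3 * Polynomial.X ^ 3 - 7 * Polynomial.X ^ 2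
        - 15 * Polynomial.X + 3)
    (t := -3 * Polynomial.X ^ 7 + 25 * Polynomial.X ^ 6 - 39 * Polynomial.X ^ 5
        - 11 * Polynomial.X ^ 4 - 201 * Polynomial.X ^ 3 + 75 * Polynomial.X ^ 2
        + 435 * Polynomial.X - 409) (by norm_num) ?_
  rw [elimR_special, hD, map_ofNat]
  ring

lemma coprime_derivative_special :
    IsCoprime (elimR (1 : ℂ) 2 1) (Polynomial.derivative (elimR 1 2 1)) := by
  have hd : Polynomial.derivative (elimR (1 : ℂ) 2 1) =
      8 * Polynomial.X ^ 7 - 56 * Polynomial.X ^ 6 + 72 * Polynomial.X ^ 5 - 40 * Polynomial.X ^ 4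
      + 408 * Polynomial.X ^ 3 - 72 * Polynomial.X ^ 2 + 24 * Polynomial.X - 88 := by
    rw [elimR_special]
    simp [map_ofNat Polynomial.C]
    ring
  -- The cofactors come from the extended Euclidean algorithm.
  refine isCoprime_of_bezout (n := 2753183744)
    (s := -3940976 * Polynomial.X ^ 6 + 27824872 * Polynomial.X ^ 5
        - 37303416 * Polynomial.X ^ 4 + 21895952 * Polynomial.X ^ 3 - 195578192 * Polynomial.X ^ 2
        + 36489576 * Polynomial.X - 15515112)
    (t := 492622 * Polynomial.X ^ 7 - 3970731 * Polynomial.X ^ 6 + 6170548 * Polynomial.X ^ 5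
        - 4325169 * Polynomial.X ^ 4 + 49582174 * Polynomial.X ^ 3 - 13081421 * Polynomial.X ^ 2
        + 7349088 * Polynomial.X - 31462487) (by norm_num) ?_
  rw [hd, elimR_special, map_ofNat]
  ring

/-- Genericity: coprimality of `elimR` to its derivative and to `elimD` is a nonempty Zariski-open
condition, defined by resultants computed over `ℂ[q0, q1, q2]`. -/
lemma exists_generic : ∃ g : MvPolynomial (Fin 3) ℂ, g ≠ 0 ∧
    ∀ a b c : ℂ, eval ![a, b, c] g ≠ 0 → a ≠ 0 ∧ IsCoprime (elimR a b c) (elimD a b) ∧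
      IsCoprime (elimR a b c) (Polynomial.derivative (elimR a b c)) := by
  let R : Polynomial (MvPolynomial (Fin 3) ℂ) := elimR (X 0) (X 1) (X 2)
  let D : Polynomial (MvPolynomial (Fin 3) ℂ) := elimD (X 0) (X 1)
  have hR (a b c : ℂ) : R.map (eval ![a, b, c]) = elimR a b c := by
    simp [R, elimR_map]
  have hD (a b c : ℂ) : D.map (eval ![a, b, c]) = elimD a b := by
    simp [D, elimD_map]
  have key (a b c : ℂ) :
      eval ![a, b, c] (X 0 * (R.resultant D 8 4 * R.resultant (Polynomial.derivative R) 8 7)) ≠ 0 ↔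
      a ≠ 0 ∧ IsCoprime (elimR a b c) (elimD a b) ∧
      IsCoprime (elimR a b c) (Polynomial.derivative (elimR a b c)) := by
    rw [← Polynomial.isUnit_resultant_iff_isCoprime (elimR_monic a b c),
      ← Polynomial.isUnit_resultant_iff_isCoprime (elimR_monic a b c), elimR_natDegree,
      elimD_natDegree, elimR_derivative_natDegree, isUnit_iff_ne_zero, isUnit_iff_ne_zero,
      map_mul, map_mul, ← Polynomial.resultant_map_map, ← Polynomial.resultant_map_map,
      ← Polynomial.derivative_map, hR, hD, mul_ne_zero_iff, mul_ne_zero_iff]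
    simp
  refine ⟨_, fun h0 => ?_, fun a b c h => (key a b c).1 h⟩
  exact (key 1 2 1).2 ⟨one_ne_zero, coprime_elimD_special, coprime_derivative_special⟩
    (by rw [h0, map_zero])

/-! ### Algebras generated by one element with distinct values -/

/-- A `ℂ`-algebra generated by one element `v` that is a root of a degree `n` polynomial `R` with
distinct roots, all of which are values of `v` at `ℂ`-points, is isomorphic to `ℂⁿ`: evaluation at
these points is onto by Lagrange interpolation and one-to-one because any polynomial in `v` killed by
it is divisible by `R`. -/
lemma nonempty_algEquiv_of_generator {A : Type*} [CommRing A] [Algebra ℂ A] {n : ℕ}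
    (R : Polynomial ℂ) (hdeg : R.natDegree = n)
    (hsep : R.Separable) (v : A) (hv : Polynomial.aeval v R = 0)
    (hgen : ∀ f : A, f ∈ Algebra.adjoin ℂ {v})
    (hpt : ∀ r, R.eval r = 0 → ∃ φ : A →ₐ[ℂ] ℂ, φ v = r) :
    Nonempty (A ≃ₐ[ℂ] (Fin n → ℂ)) := by
  classical
  have hR0 : R ≠ 0 := hsep.ne_zero
  have hsplit : R.Splits := IsAlgClosed.splits R
  have hnd : R.roots.Nodup := Polynomial.nodup_roots hsep
  have hcard : R.roots.toFinset.card = n := by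
    rw [Multiset.toFinset_card_of_nodup hnd, ← hsplit.natDegree_eq_card_roots, hdeg]
  let e := (Finset.equivFinOfCardEq hcard).symm
  have he (i : Fin n) : R.eval (e i : ℂ) = 0 := by
    have h := (e i).2
    rw [Multiset.mem_toFinset, Polynomial.mem_roots hR0] at h
    exact h
  choose φ hφ using fun i => hpt _ (he i)
  have hφP (i : Fin n) (P : Polynomial ℂ) : φ i (Polynomial.aeval v P) = P.eval (e i : ℂ) := by
    rw [← Polynomial.aeval_algHom_apply, hφ, Polynomial.coe_aeval_eq_eval]
  refine ⟨AlgEquiv.ofBijective (AlgHom.pi φ) ⟨?_, ?_⟩⟩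
  · rw [injective_iff_map_eq_zero]
    intro f hf
    obtain ⟨P, rfl⟩ : ∃ P : Polynomial ℂ, Polynomial.aeval v P = f := by
      have h := hgen f
      rw [Algebra.adjoin_singleton_eq_range_aeval] at h
      exact h
    have hdvd : R ∣ P := by
      by_cases hP : P = 0
      · simp [hP]
      rw [hsplit.dvd_iff_roots_le_roots hR0 hP, Multiset.le_iff_subset hnd]
      intro r hr
      rw [Polynomial.mem_roots hP, Polynomial.IsRoot.def]
      obtain ⟨i, hi⟩ := e.surjective ⟨r, Multiset.mem_toFinset.2 hr⟩
      have h := congrFun hf i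
      rw [AlgHom.pi_apply, hφP, hi] at h
      exact h
    obtain ⟨Q, rfl⟩ := hdvd
    rw [map_mul, hv, zero_mul]
  · intro y
    refine ⟨Polynomial.aeval v
      (Lagrange.interpolate Finset.univ (fun i => (e i : ℂ)) y), ?_⟩
    funext i
    rw [AlgHom.pi_apply, hφP]
    exact Lagrange.eval_interpolate_at_node y
      (fun i _ j _ h => e.injective (Subtype.ext h)) (Finset.mem_univ i)

/-! ### Elimination -/

/-- The three relations for `x = E1`, `y = E2`, `h = H` and `(a, b, c) = (q0, q1, q2)`, in an arbitrary
ring, so that they make sense both in the quotient ring and in `ℂ`; `t` stands for `1 / 2`. -/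
structure Relations {A : Type*} [CommRing A] (t a b c x y h : A) : Prop where
  e1 : x * y + 2 * a * x + a * y - 2 * a * h = 0
  e2 : x ^ 2 - x * h + t * h ^ 2 + a * x + t * a * y - a * h - b * x - a * b - t * a * c = 0
  e3 : y ^ 2 - 2 * (y * h) + h ^ 2 - c * y - a * c = 0

/-- Elimination of `H`, then of `u = x + a`: the equations `D(v) u = N(v)` and `R(v) = 0` for
`v = y + a`. -/
lemma Relations.eliminate {A : Type*} [CommRing A] {t a b c x y h : A} (ht : 2 * t = 1)
    (ha : IsUnit a) (H : Relations t a b c x y h) :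
    (y + 2 * a) * (y ^ 3 - 2 * a * b * (y + 2 * a)) * (x + a) = a * y ^ 3 * (y + a - c) ∧
    (y + a - c) * ((y + a) * (y ^ 3 - 4 * a * b * (y + 2 * a)) ^ 2 - c * y ^ 6) = 0 := by
  obtain ⟨e1, e2, e3⟩ := H
  have h2 : IsUnit (2 : A) := IsUnit.of_mul_eq_one t ht
  obtain ⟨u, rfl⟩ : ∃ u, x = u - a := ⟨x + a, by ring⟩
  obtain ⟨v, rfl⟩ : ∃ v, y = v - a := ⟨y + a, by ring⟩
  have hA : (v + a) ^ 2 * u ^ 2 - 4 * a * v * (v + a) * u + 4 * a ^ 2 * v * (v - c) = 0 := by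
    linear_combination 4 * a ^ 2 * e3
      - (2 * a * (v - a - h) + (2 * a * v - u * v - a * u)) * e1
  have hB : (v - a) * u ^ 2 - (v ^ 2 - a ^ 2 - 2 * a * b) * u + a * (v - a) * (v - c) = 0 := by
    refine (h2.mul (h2.mul ha)).mul_left_cancel ?_
    linear_combination hA - 8 * a ^ 2 * e2 + 4 * a ^ 2 * e1
      - (2 * a * (h - (u - a)) + (v - a) * u) * e1
      + 4 * a ^ 2 * (h ^ 2 + a * (v - a) - a * c) * ht
  have hDu : (v + a) * ((v - a) ^ 3 - 2 * a * b * (v + a)) * u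
      = a * (v - a) ^ 3 * (v - c) := by
    linear_combination (v - a) * hA - (v + a) ^ 2 * hB
  -- The combination of the two quadratics in which the term linear in `u` cancels.
  have hDuu : (v + a) * ((v - a) ^ 3 - 2 * a * b * (v + a)) * u ^ 2
      - 8 * a ^ 3 * b * v * (v - c) = 0 := by
    linear_combination (v ^ 2 - a ^ 2 - 2 * a * b) * hA - 4 * a * v * (v + a) * hB
  refine ⟨by linear_combination hDu, (ha.pow 2).mul_left_cancel ?_⟩
  linear_combination (v + a) * ((v - a) ^ 3 - 2 * a * b * (v + a)) * hDuu
    - ((v + a) * ((v - a) ^ 3 - 2 * a * b * (v + a)) * u + a * (v - a) ^ 3 * (v - c)) * hDu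

/-- Every root `r` of `elimR` at which `elimD` does not vanish is the `v`-coordinate of a solution. -/
lemma exists_relations_of_root {a b c r : ℂ} (ha : a ≠ 0) (hR : (elimR a b c).eval r = 0)
    (hD : (elimD a b).eval r ≠ 0) : ∃ x h : ℂ, Relations (1 / 2) a b c x (r - a) h := by
  simp only [elimR, elimD, Polynomial.eval_mul, Polynomial.eval_sub, Polynomial.eval_add,
    Polynomial.eval_pow, Polynomial.eval_X, Polynomial.eval_C] at hR hD
  set D := (r + a) * ((r - a) ^ 3 - 2 * a * b * (r + a)) with hDdef
  obtain ⟨u, hu⟩ : ∃ u, D * u = a * (r - a) ^ 3 * (r - c) :=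
    ⟨a * (r - a) ^ 3 * (r - c) / D, mul_div_cancel₀ _ hD⟩
  obtain ⟨h, hh⟩ : ∃ h, 2 * a * h = (u - a) * (r - a) + 2 * a * (u - a) + a * (r - a) :=
    ⟨_, mul_div_cancel₀ _ (mul_ne_zero two_ne_zero ha)⟩
  have hA : (r + a) ^ 2 * u ^ 2 - 4 * a * r * (r + a) * u + 4 * a ^ 2 * r * (r - c) = 0 := by
    refine (mul_eq_zero.1 ?_).resolve_left (pow_ne_zero 2 hD)
    linear_combination (r + a) ^ 2 * a ^ 2 * hR
      + ((r + a) ^ 2 * (D * u + a * (r - a) ^ 3 * (r - c)) - 4 * a * r * (r + a) * D) * hu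
  have hB : (r - a) * u ^ 2 - (r ^ 2 - a ^ 2 - 2 * a * b) * u + a * (r - a) * (r - c) = 0 := by
    refine (mul_eq_zero.1 ?_).resolve_left (pow_ne_zero 2 hD)
    linear_combination (r - a) * a ^ 2 * hR
      + ((r - a) * (D * u + a * (r - a) ^ 3 * (r - c)) - (r ^ 2 - a ^ 2 - 2 * a * b) * D) * hu
  have ha2 : a ^ 2 ≠ 0 := pow_ne_zero 2 ha
  refine ⟨u - a, h, by linear_combination -hh, ?_, ?_⟩
  · refine (mul_eq_zero.1 ?_).resolve_left (mul_ne_zero (by norm_num : (8 : ℂ) ≠ 0) ha2)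
    linear_combination hA - 4 * a * hB + (-4 * a ^ 2
      + (2 * a * (h - (u - a)) + (r - a) * u)) * hh
  · refine (mul_eq_zero.1 ?_).resolve_left (mul_ne_zero (by norm_num : (4 : ℂ) ≠ 0) ha2)
    linear_combination hA - (2 * a * (r - a - h) + (2 * a * r - u * r - a * u)) * hh

/-! ### The quotient ring -/

/-- Small quantum cohomology of the Fano threefold `M315` (the blow-up of the quadric `Q³` along the disjoint union of a line and a conic),
specialized at `(q0, q1, q2)`: for generic `(q0, q1, q2) ∈ ℂ³` (i.e. on the nonempty
Zariski-open set where a nonzero polynomial `g` does not vanish) the quotient ring is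
isomorphic as a `ℂ`-algebra to `ℂ⁸`, hence a semisimple commutative `ℂ`-algebra of
`ℂ`-dimension 8.  Here `E1 = X 0`, `E2 = X 1` and `H = X 2`. -/
theorem qh_M3_15_generically_semisimple :
    ∃ g : MvPolynomial (Fin 3) ℂ, g ≠ 0 ∧
      ∀ q0 q1 q2 : ℂ, eval ![q0, q1, q2] g ≠ 0 →
        Nonempty
          ((MvPolynomial (Fin 3) ℂ ⧸ Ideal.span
            { X 0 * X 1 + C (2 * q0) * X 0 + C q0 * X 1 - C (2 * q0) * X 2,
              X 0 ^ 2 - X 0 * X 2 + C (1 / 2) * X 2 ^ 2 + C q0 * X 0 + C (1 / 2 * q0) * X 1 - C q0 * X 2 - C q1 * X 0 - C (q0 * q1) - C (1 / 2 * q0 * q2),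
              X 1 ^ 2 - C 2 * (X 1 * X 2) + X 2 ^ 2 - C q2 * X 1 - C (q0 * q2) })
          ≃ₐ[ℂ] (Fin 8 → ℂ)) := by
  obtain ⟨g, hg, hgen⟩ := exists_generic
  refine ⟨g, hg, fun a b c habc => ?_⟩
  obtain ⟨ha, hcop, hsep⟩ := hgen a b c habc
  set I : Ideal (MvPolynomial (Fin 3) ℂ) := Ideal.span
    { X 0 * X 1 + C (2 * a) * X 0 + C a * X 1 - C (2 * a) * X 2,
      X 0 ^ 2 - X 0 * X 2 + C (1 / 2) * X 2 ^ 2 + C a * X 0 + C (1 / 2 * a) * X 1 - C a * X 2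
        - C b * X 0 - C (a * b) - C (1 / 2 * a * c),
      X 1 ^ 2 - C 2 * (X 1 * X 2) + X 2 ^ 2 - C c * X 1 - C (a * c) } with hI
  let A := MvPolynomial (Fin 3) ℂ ⧸ I
  let π : MvPolynomial (Fin 3) ℂ →ₐ[ℂ] A := Ideal.Quotient.mkₐ ℂ I
  let κ : ℂ →+* A := algebraMap ℂ A
  have hπC (z : ℂ) : π (C z) = κ z := π.commutes z
  have hrel : Relations (κ (1 / 2)) (κ a) (κ b) (κ c) (π (X 0)) (π (X 1)) (π (X 2)) := by
    have hmem (p : MvPolynomial (Fin 3) ℂ) (hp : p ∈ I) : π p = 0 :=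
      Ideal.Quotient.eq_zero_iff_mem.2 hp
    have m1 := hmem _ (Ideal.subset_span (Or.inl rfl))
    have m2 := hmem _ (Ideal.subset_span (Or.inr (Or.inl rfl)))
    have m3 := hmem _ (Ideal.subset_span (Or.inr (Or.inr rfl)))
    simp only [map_add, map_sub, map_mul, map_pow, hπC, map_ofNat] at m1 m2 m3
    exact ⟨m1, m2, m3⟩
  have hhalf : 2 * κ (1 / 2) = 1 := by
    rw [← map_ofNat κ 2, ← map_mul]
    norm_num
  have haU : IsUnit (κ a) := (isUnit_iff_ne_zero.2 ha).map κ
  obtain ⟨hDu, hRv⟩ := hrel.eliminate hhalf haU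
  let v : A := π (X 1) + κ a
  have hv : Polynomial.aeval v (elimR a b c) = 0 := by
    simp only [elimR, map_mul, map_sub, map_add, map_pow, Polynomial.aeval_X, Polynomial.aeval_C,
      map_ofNat]
    simp only [v]
    linear_combination hRv
  let S := Algebra.adjoin ℂ {v}
  have hκS (z : ℂ) : κ z ∈ S := S.algebraMap_mem z
  have hvS : v ∈ S := Algebra.subset_adjoin rfl
  have hyS : π (X 1) ∈ S := by
    have h := S.sub_mem hvS (hκS a)
    rwa [add_sub_cancel_right] at h
  have hxS : π (X 0) ∈ S := by
    obtain ⟨s, t, hst⟩ := hcop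
    -- `t(v)` is the inverse of `D(v)` in the quotient ring.
    have htD := congrArg (Polynomial.aeval v) hst
    simp only [map_add, map_mul, hv, mul_zero, zero_add, map_one] at htD
    have htS : Polynomial.aeval v t ∈ S := Polynomial.aeval_mem_adjoin_singleton ℂ v
    have hD : Polynomial.aeval v (elimD a b) = (π (X 1) + 2 * κ a) *
        (π (X 1) ^ 3 - 2 * κ a * κ b * (π (X 1) + 2 * κ a)) := by
      simp only [elimD, map_mul, map_sub, map_add, map_pow, Polynomial.aeval_X, Polynomial.aeval_C,
        map_ofNat]
      simp only [v]
      ring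
    rw [hD] at htD
    have hx : π (X 0) = Polynomial.aeval v t * (κ a * π (X 1) ^ 3 * (v - κ c)) - κ a := by
      simp only [v] at htD ⊢
      linear_combination Polynomial.aeval (π (X 1) + κ a) t * hDu - (π (X 0) + κ a) * htD
    rw [hx]
    exact S.sub_mem (S.mul_mem htS (S.mul_mem (S.mul_mem (hκS a) (S.pow_mem hyS 3))
      (S.sub_mem hvS (hκS c)))) (hκS a)
  have hzS : π (X 2) ∈ S := by
    have hinv : κ a⁻¹ * κ a = 1 := by rw [← map_mul, inv_mul_cancel₀ ha, map_one]
    have hz : π (X 2) = κ (1 / 2) * κ a⁻¹ * (π (X 0) * π (X 1)) + π (X 0)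
        + κ (1 / 2) * π (X 1) := by
      linear_combination (-κ (1 / 2) * κ a⁻¹) * hrel.e1
        + (-π (X 2) + π (X 0) + κ (1 / 2) * π (X 1)) * hinv
        + (κ a⁻¹ * κ a) * (π (X 0) - π (X 2)) * hhalf
    rw [hz]
    exact S.add_mem (S.add_mem (S.mul_mem (S.mul_mem (hκS _) (hκS _)) (S.mul_mem hxS hyS)) hxS)
      (S.mul_mem (hκS _) hyS)
  refine nonempty_algEquiv_of_generator (A := A) (elimR a b c) (elimR_natDegree a b c) hsep v hv
    ?_ ?_
  · intro f
    obtain ⟨p, rfl⟩ := Ideal.Quotient.mkₐ_surjective ℂ I f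
    change π p ∈ S
    induction p using MvPolynomial.induction_on with
    | C z => rw [hπC]; exact hκS z
    | add p q hp hq => rw [map_add]; exact S.add_mem hp hq
    | mul_X p i hp =>
      rw [map_mul]
      refine S.mul_mem hp ?_
      fin_cases i
      exacts [hxS, hyS, hzS]
  · intro r hr
    have hDr : (elimD a b).eval r ≠ 0 := by
      obtain ⟨s, t, hst⟩ := hcop
      intro h0
      simpa [hr, h0] using congrArg (Polynomial.eval r) hst
    obtain ⟨x, h, e1, e2, e3⟩ := exists_relations_of_root ha hr hDr
    have hker : ∀ p ∈ I, MvPolynomial.aeval ![x, r - a, h] p = 0 := by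
      intro p hp
      have hle : I ≤ RingHom.ker (MvPolynomial.aeval (R := ℂ) ![x, r - a, h]) := by
        rw [hI, Ideal.span_le]
        rintro p (rfl | rfl | rfl)
        · simpa [RingHom.mem_ker] using e1
        · simpa [RingHom.mem_ker] using e2
        · simpa [RingHom.mem_ker] using e3
      exact hle hp
    refine ⟨Ideal.Quotient.liftₐ I (MvPolynomial.aeval ![x, r - a, h]) hker, ?_⟩
    have h1 : Ideal.Quotient.liftₐ I (MvPolynomial.aeval ![x, r - a, h]) hker (π (X 1))
        = MvPolynomial.aeval (R := ℂ) ![x, r - a, h] (X 1) := rfl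
    have h2 : Ideal.Quotient.liftₐ I (MvPolynomial.aeval ![x, r - a, h]) hker (κ a) = a :=
      AlgHom.commutes _ a
    rw [map_add, h1, h2]
    simp
end
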